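/- Assume the family Ψ_n satisfies properties (P1), (P2), (P3), (P4). Then for each n ≥ 1 there exist functions X_n(x₁,…,x_n) and X̄_n^±(x₁,…,x_n) such that Z_n = (∏_{i=1}^n ϑ₄(2(η+x_i),p²) ϑ₁(η+x_i) ϑ₁(η−x_i)) · X_n and Z̄_n^± = (∏_{i=1}^n ϑ₁(2(η+x_i),p²)) · X̄_n^±, where, with respect to each x_i, X_n is an even theta function of degree 2(n−1), nome p and norm 0, and X̄_n^± is an even theta function of degree 2n, nome p and norm 0; moreover, for n ≥ 2, X_n and X̄_n^± are symmetric functions of x₁,…,x_n. -/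

import Mathlib

noncomputable section

open Complex
open scoped BigOperators

/-- Jacobi theta function `ϑ₁(z|τ)` with nome `p = e^{iπτ}` (Whittaker–Watson convention). -/
def th1 (z τ : ℂ) : ℂ :=
  -Complex.I * ∑' n : ℤ, (-1 : ℂ) ^ n *
    Complex.exp ((Real.pi : ℂ) * Complex.I * τ * ((n : ℂ) + 1/2) ^ 2 + (2 * (n : ℂ) + 1) * Complex.I * z)

/-- Jacobi theta function `ϑ₂(z|τ)`. -/
def th2 (z τ : ℂ) : ℂ :=
  ∑' n : ℤ,
    Complex.exp ((Real.pi : ℂ) * Complex.I * τ * ((n : ℂ) + 1/2) ^ 2 + (2 * (n : ℂ) + 1) * Complex.I * z)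

/-- Jacobi theta function `ϑ₃(z|τ)`. -/
def th3 (z τ : ℂ) : ℂ :=
  ∑' n : ℤ, Complex.exp ((Real.pi : ℂ) * Complex.I * τ * (n : ℂ) ^ 2 + 2 * (n : ℂ) * Complex.I * z)

/-- Jacobi theta function `ϑ₄(z|τ)`. -/
def th4 (z τ : ℂ) : ℂ :=
  ∑' n : ℤ, (-1 : ℂ) ^ n *
    Complex.exp ((Real.pi : ℂ) * Complex.I * τ * (n : ℂ) ^ 2 + 2 * (n : ℂ) * Complex.I * z)

/-- The crossing parameter `η = π/3`. -/
def ηc : ℂ := (Real.pi : ℂ) / 3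

/-- The elliptic nome `p = e^{iπτ}`. -/
def pnome (τ : ℂ) : ℂ := Complex.exp ((Real.pi : ℂ) * Complex.I * τ)

/-- `ζ = (ϑ₁(η,p²)/ϑ₄(η,p²))²`. -/
def zet (τ : ℂ) : ℂ := (th1 ηc (2 * τ) / th4 ηc (2 * τ)) ^ 2

/-- The nome `p` is real with `0 < p < 1`. -/
def preal (τ : ℂ) : Prop := (pnome τ).im = 0 ∧ 0 < (pnome τ).re ∧ (pnome τ).re < 1

/-- A tuple given by a list of prescribed entries, padded by zeros. -/
def padded {n : ℕ} (l : List ℂ) : Fin n → ℂ := fun j => l.getD (j : ℕ) 0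

/-- Extension of a tuple by a list of prescribed further entries (padded by zeros). -/
def extL {m n : ℕ} (w : Fin m → ℂ) (l : List ℂ) : Fin n → ℂ :=
  fun j => if h : (j : ℕ) < m then w ⟨j, h⟩ else l.getD ((j : ℕ) - m) 0

/-- First `k` entries of a `2k`-tuple. -/
def firstHalf {k : ℕ} (x : Fin (2 * k) → ℂ) : Fin k → ℂ :=
  fun i => x ⟨(i : ℕ), by have := i.2; omega⟩

/-- Last `k` entries of a `2k`-tuple. -/
def secondHalf {k : ℕ} (x : Fin (2 * k) → ℂ) : Fin k → ℂ :=
  fun i => x ⟨k + (i : ℕ), by have := i.2; omega⟩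

/-- `𝕙(x,y) = ϑ₁(x−y+η)ϑ₁(x−y−η)ϑ₁(x+y+η)ϑ₁(x+y−η)`. -/
def hh (τ x y : ℂ) : ℂ :=
  th1 (x - y + ηc) τ * th1 (x - y - ηc) τ * th1 (x + y + ηc) τ * th1 (x + y - ηc) τ

/-- `𝔻(x₁,…,x_k) = ∏_{i<j} ϑ₁(x_j−x_i)ϑ₁(x_j+x_i)`. -/
def vdTheta (τ : ℂ) {k : ℕ} (y : Fin k → ℂ) : ℂ :=
  ∏ i : Fin k, ∏ j : Fin k, if i < j then th1 (y j - y i) τ * th1 (y j + y i) τ else 1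

/-- The elliptic Tsuchiya determinant `ℍ_{2k}(x₁,…,x_k; x_{k+1},…,x_{2k})`. -/
def tsuchiya (τ : ℂ) (k : ℕ) (x : Fin (2 * k) → ℂ) : ℂ :=
  (∏ i : Fin k, ∏ j : Fin k, hh τ (firstHalf x i) (secondHalf x j))
    / (vdTheta τ (firstHalf x) * vdTheta τ (secondHalf x))
    * Matrix.det (Matrix.of fun i j : Fin k => (hh τ (firstHalf x i) (secondHalf x j))⁻¹)

/-- The expression defining the elliptic Tsuchiya determinant is well defined:
the Vandermonde-type denominators and the entries `𝕙(x_i,x_{j+k})` are nonzero. -/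
def tsuDefined (τ : ℂ) (k : ℕ) (x : Fin (2 * k) → ℂ) : Prop :=
  (∀ i j : Fin k, i ≠ j →
    th1 (firstHalf x j - firstHalf x i) τ ≠ 0 ∧ th1 (firstHalf x j + firstHalf x i) τ ≠ 0) ∧
  (∀ i j : Fin k, i ≠ j →
    th1 (secondHalf x j - secondHalf x i) τ ≠ 0 ∧ th1 (secondHalf x j + secondHalf x i) τ ≠ 0) ∧
  (∀ i j : Fin k, hh τ (firstHalf x i) (secondHalf x j) ≠ 0)

/-- `h(w,w') = 1 − (3+ζ²)ww' + (1−ζ²)ww'(w+w')`. -/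
def hpol (ζ w w' : ℂ) : ℂ := 1 - (3 + ζ ^ 2) * w * w' + (1 - ζ ^ 2) * w * w' * (w + w')

/-- Vandermonde product `Δ(w₁,…,w_k) = ∏_{i<j}(w_j − w_i)`. -/
def vdm {k : ℕ} (y : Fin k → ℂ) : ℂ :=
  ∏ i : Fin k, ∏ j : Fin k, if i < j then y j - y i else 1

/-- The determinant-ratio expression defining the polynomial `H_{2k}`. -/
def Hratio (ζ : ℂ) (k : ℕ) (w : Fin (2 * k) → ℂ) : ℂ :=
  (∏ i : Fin k, ∏ j : Fin k, hpol ζ (firstHalf w i) (secondHalf w j))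
    / (vdm (firstHalf w) * vdm (secondHalf w))
    * Matrix.det (Matrix.of fun i j : Fin k => (hpol ζ (firstHalf w i) (secondHalf w j))⁻¹)

/-- The expression `Hratio` is well defined at `w`. -/
def HratioDefined (ζ : ℂ) (k : ℕ) (w : Fin (2 * k) → ℂ) : Prop :=
  (∀ i j : Fin k, i ≠ j → firstHalf w i ≠ firstHalf w j) ∧
  (∀ i j : Fin k, i ≠ j → secondHalf w i ≠ secondHalf w j) ∧
  (∀ i j : Fin k, hpol ζ (firstHalf w i) (secondHalf w j) ≠ 0)

/-- `H` is the family of Rosengren–Zinn-Justin polynomials `H_{2k}` for parameter `ζ`: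
for each `k`, `H k` is a polynomial function of the `2k` variables agreeing with the
determinant-ratio formula wherever the latter is defined, and `H 0 = 1`. -/
def IsHFamily (ζ : ℂ) (H : (k : ℕ) → (Fin (2 * k) → ℂ) → ℂ) : Prop :=
  (∀ w, H 0 w = 1) ∧
  (∀ k : ℕ, ∃ P : MvPolynomial (Fin (2 * k)) ℂ, ∀ w, H k w = MvPolynomial.eval w P) ∧
  (∀ (k : ℕ) (w : Fin (2 * k) → ℂ), HratioDefined ζ k w → H k w = Hratio ζ k w)

/-- Vertex weight `a(u)`. -/
def av (τ u : ℂ) : ℂ := th4 (2*ηc) (2*τ) * th1 (u + 2*ηc) (2*τ) * th4 u (2*τ)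
/-- Vertex weight `b(u)`. -/
def bv (τ u : ℂ) : ℂ := th4 (2*ηc) (2*τ) * th4 (u + 2*ηc) (2*τ) * th1 u (2*τ)
/-- Vertex weight `c(u)`. -/
def cv (τ u : ℂ) : ℂ := th1 (2*ηc) (2*τ) * th4 (u + 2*ηc) (2*τ) * th4 u (2*τ)
/-- Vertex weight `d(u)`. -/
def dv (τ u : ℂ) : ℂ := th1 (2*ηc) (2*τ) * th1 (u + 2*ηc) (2*τ) * th1 u (2*τ)
/-- `r(u) = a(u) + b(u)`. -/
def rv (τ u : ℂ) : ℂ := av τ u + bv τ u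

/-- Entries of the `R`-matrix of the eight-vertex model, in the basis `{↑↑,↑↓,↓↑,↓↓}`
identified with `Fin 2 × Fin 2` (`↑ = 0`, `↓ = 1`). -/
def Rent (τ u : ℂ) (p q : Fin 2 × Fin 2) : ℂ :=
  if p = q then (if p.1 = p.2 then av τ u else bv τ u)
  else if q = (p.2, p.1) then cv τ u
  else if p.1 = p.2 ∧ q.1 = q.2 then dv τ u
  else 0

/-- Entries of `Ř(u) = 𝒫 R(u)`. -/
def Rcheckent (τ u : ℂ) (p q : Fin 2 × Fin 2) : ℂ := Rent τ u (p.2, p.1) q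

/-- The boundary vector `χ(x) ∈ ℂ²⊗ℂ²`. -/
def chiV (τ lam x : ℂ) : Fin 2 × Fin 2 → ℂ := fun p =>
  if p = ((0 : Fin 2), (1 : Fin 2)) then th1 (x + lam) (2*τ) * th4 (x - lam - 2*ηc) (2*τ)
  else if p = ((1 : Fin 2), (0 : Fin 2)) then th1 (x - lam - 2*ηc) (2*τ) * th4 (x + lam) (2*τ)
  else 0

/-- The boundary vector `χ̄(x) ∈ ℂ²⊗ℂ²`. -/
def chibarV (τ lam x : ℂ) : Fin 2 × Fin 2 → ℂ := fun p =>
  if p = ((0 : Fin 2), (0 : Fin 2)) then th1 (x + lam) (2*τ) * th1 (x - lam - 2*ηc) (2*τ)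
  else if p = ((1 : Fin 2), (1 : Fin 2)) then th4 (x - lam - 2*ηc) (2*τ) * th4 (x + lam) (2*τ)
  else 0

/-- A family `Ψ_n(u₁,…,u_{2n+1}) ∈ (ℂ²)^{⊗(2n+1)}`, represented by its components
with respect to spin configurations `α : Fin (2n+1) → Fin 2` (`↑ = 0`, `↓ = 1`). -/
abbrev PsiFam := (n : ℕ) → (Fin (2 * n + 1) → ℂ) → (Fin (2 * n + 1) → Fin 2) → ℂ

/-- The action of `Ř(u)` on tensor factors `i`, `j` of `(ℂ²)^{⊗L}`. -/
def applyRc (τ u : ℂ) {L : ℕ} (i j : Fin L) (ψ : (Fin L → Fin 2) → ℂ) :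
    (Fin L → Fin 2) → ℂ := fun α =>
  ∑ s : Fin 2, ∑ t : Fin 2,
    Rcheckent τ u (α i, α j) (s, t) * ψ (Function.update (Function.update α i s) j t)

/-- Spin flip. -/
def flipS : Fin 2 → Fin 2 := fun s => if s = 0 then 1 else 0

/-- Components of the singlet `s = ↑↓ − ↓↑`. -/
def singletC : Fin 2 → Fin 2 → ℂ := fun s t =>
  if s = 0 ∧ t = 1 then 1 else if s = 1 ∧ t = 0 then -1 else 0

/-- Delete the entries at positions `i`, `i+1` from a tuple. -/
def delTwo {α : Type*} {n : ℕ} (i : ℕ) (u : Fin (2 * (n + 1) + 1) → α) : Fin (2 * n + 1) → α :=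
  fun j => if _h : (j : ℕ) < i then u ⟨j, by have := j.2; omega⟩
           else u ⟨(j : ℕ) + 2, by have := j.2; omega⟩

/-- The components of `Ψ_n` are entire functions of each `u_i`. -/
def PsiEntire (Ψ : PsiFam) : Prop :=
  ∀ (n : ℕ) (u : Fin (2*n+1) → ℂ) (i : Fin (2*n+1)) (α : Fin (2*n+1) → Fin 2),
    Differentiable ℂ fun z => Ψ n (Function.update u i z) α

/-- (P1): the exchange relations. -/
def PsiP1 (τ : ℂ) (Ψ : PsiFam) : Prop :=
  ∀ (n : ℕ) (u : Fin (2*n+1) → ℂ) (i j : Fin (2*n+1)), (j : ℕ) = (i : ℕ) + 1 →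
    applyRc τ (u j - u i) i j (Ψ n u)
      = fun α => rv τ (u j - u i) * Ψ n (fun l => u (Equiv.swap i j l)) α

/-- (P2): local spin flips. -/
def PsiP2 (τ : ℂ) (Ψ : PsiFam) : Prop :=
  ∀ (n : ℕ) (u : Fin (2*n+1) → ℂ) (i : Fin (2*n+1)) (α : Fin (2*n+1) → Fin 2),
    Ψ n u (Function.update α i (flipS (α i)))
      = (-(pnome τ)) ^ n * Complex.exp (-Complex.I * ∑ j, (u j - u i))
        * Ψ n (Function.update u i (u i + Real.pi * τ)) α

/-- (P3): quasi-periodicity of `Ψ_n` in each `u_i`. -/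
def PsiP3 (τ : ℂ) (Ψ : PsiFam) : Prop :=
  ∀ (n : ℕ) (u : Fin (2*n+1) → ℂ) (i : Fin (2*n+1)),
    (Ψ n (Function.update u i (u i + Real.pi))
      = fun α => (∏ j ∈ Finset.univ.erase i, (if α j = 0 then (1:ℂ) else -1)) * Ψ n u α) ∧
    (Ψ n (Function.update u i (u i + 2 * Real.pi * τ))
      = fun α => (pnome τ ^ (4*n))⁻¹ *
          Complex.exp (-2 * Complex.I * ∑ j, (u i - u j)) * Ψ n u α)

/-- (P4): the wheel condition. -/
def PsiP4 (Ψ : PsiFam) : Prop :=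
  ∀ (n : ℕ) (u : Fin (2*n+1) → ℂ),
    (∃ i j k : Fin (2*n+1), i < j ∧ j < k ∧ u j = u i + 2*ηc ∧ u k = u i + 4*ηc) →
    Ψ n u = 0

/-- (P5): the reduction relations. -/
def PsiP5 (τ : ℂ) (Ψ : PsiFam) : Prop :=
  ∀ (n : ℕ) (u : Fin (2*(n+1)+1) → ℂ) (i : ℕ) (hi : i + 1 < 2*(n+1)+1),
    u ⟨i+1, hi⟩ = u ⟨i, by omega⟩ + 2*ηc →
    Ψ (n+1) u = fun α =>
      (∏ j ∈ (Finset.univ.erase (⟨i, by omega⟩ : Fin (2*(n+1)+1))).erase ⟨i+1, hi⟩,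
          th1 (u ⟨i, by omega⟩ - u j - 2*ηc) τ)
        * singletC (α ⟨i, by omega⟩) (α ⟨i+1, hi⟩)
        * Ψ n (delTwo i u) (delTwo i α)

/-- (P6): `Ψ₀ = ↑ + ↓`. -/
def PsiP6 (Ψ : PsiFam) : Prop := ∀ u α, Ψ 0 u α = 1

/-- The inhomogeneity parameters `(x₁,−x₁,…,x_n,−x_n,0)`. -/
def interleave {n : ℕ} (x : Fin n → ℂ) : Fin (2*n+1) → ℂ := fun j =>
  if h : (j : ℕ) < 2*n then
    (if (j : ℕ) % 2 = 0 then x ⟨(j:ℕ)/2, by omega⟩ else -x ⟨(j:ℕ)/2, by omega⟩)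
  else 0

/-- Components of `χ(x)`. -/
def chiC (τ lam x : ℂ) (s t : Fin 2) : ℂ :=
  if s = 0 ∧ t = 1 then th1 (x + lam) (2*τ) * th4 (x - lam - 2*ηc) (2*τ)
  else if s = 1 ∧ t = 0 then th1 (x - lam - 2*ηc) (2*τ) * th4 (x + lam) (2*τ)
  else 0

/-- Components of `χ̄(x)`. -/
def chibarC (τ lam x : ℂ) (s t : Fin 2) : ℂ :=
  if s = 0 ∧ t = 0 then th1 (x + lam) (2*τ) * th1 (x - lam - 2*ηc) (2*τ)
  else if s = 1 ∧ t = 1 then th4 (x - lam - 2*ηc) (2*τ) * th4 (x + lam) (2*τ)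
  else 0

/-- The scalar product `Z_n(x₁,…,x_n) = ⟨ξ_n(x₁,…,x_n), Ψ_n(x₁,−x₁,…,x_n,−x_n,0)⟩`. -/
def Zfun (τ lam : ℂ) (Ψ : PsiFam) (n : ℕ) (x : Fin n → ℂ) : ℂ :=
  ∑ α : Fin (2*n+1) → Fin 2,
    (∏ m : Fin n, chiC τ lam (x m)
        (α ⟨2*(m:ℕ), by have := m.2; omega⟩) (α ⟨2*(m:ℕ)+1, by have := m.2; omega⟩))
      * (if α ⟨2*n, by omega⟩ = 0 then (1:ℂ) else 0)
      * Ψ n (interleave x) α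

/-- The scalar product `Z̄_n^±(x₁,…,x_n)`, with `ε = ±1`. -/
def Zbarfun (τ lam ε : ℂ) (Ψ : PsiFam) (n : ℕ) (x : Fin n → ℂ) : ℂ :=
  ∑ α : Fin (2*n+1) → Fin 2,
    (∏ m : Fin n, chibarC τ lam (x m)
        (α ⟨2*(m:ℕ), by have := m.2; omega⟩) (α ⟨2*(m:ℕ)+1, by have := m.2; omega⟩))
      * (if α ⟨2*n, by omega⟩ = 0 then (1:ℂ) else ε)
      * Ψ n (interleave x) α

/-- The normalisation constant `𝒩_n`. -/
def Ncoef (τ : ℂ) (n : ℕ) : ℂ :=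
  (-1 : ℂ) ^ ((n+1)/2) * (th1 ηc τ ^ (n^2))⁻¹ * (th4 0 (2*τ) / th4 ηc (2*τ)) ^ (n*(n+1)/2)

/-- The vector `ψ_n = 𝒩_n Ψ_n(0,…,0)`. -/
def psiH (τ : ℂ) (Ψ : PsiFam) (n : ℕ) (α : Fin (2*n+1) → Fin 2) : ℂ :=
  Ncoef τ n * Ψ n (fun _ => 0) α

/-- The scalar product `S_n(μ) = ((⟨↑↓| + μ⟨↓↑|)^{⊗n} ⊗ ⟨↑|) ψ_n`. -/
def Sfun (τ : ℂ) (Ψ : PsiFam) (n : ℕ) (μ : ℂ) : ℂ :=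
  ∑ α : Fin (2*n+1) → Fin 2,
    (∏ m : Fin n,
      (if α ⟨2*(m:ℕ), by have := m.2; omega⟩ = 0 ∧ α ⟨2*(m:ℕ)+1, by have := m.2; omega⟩ = 1
        then (1:ℂ)
       else if α ⟨2*(m:ℕ), by have := m.2; omega⟩ = 1 ∧ α ⟨2*(m:ℕ)+1, by have := m.2; omega⟩ = 0
        then μ
       else 0))
      * (if α ⟨2*n, by omega⟩ = 0 then (1:ℂ) else 0) * psiH τ Ψ n α

/-- The scalar product `S̄_n^±(ν) = ((⟨↑↑| + ν⟨↓↓|)^{⊗n} ⊗ (⟨↑| ± ⟨↓|)) ψ_n`, with `ε = ±1`. -/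
def Sbarfun (τ ε : ℂ) (Ψ : PsiFam) (n : ℕ) (ν : ℂ) : ℂ :=
  ∑ α : Fin (2*n+1) → Fin 2,
    (∏ m : Fin n,
      (if α ⟨2*(m:ℕ), by have := m.2; omega⟩ = 0 ∧ α ⟨2*(m:ℕ)+1, by have := m.2; omega⟩ = 0
        then (1:ℂ)
       else if α ⟨2*(m:ℕ), by have := m.2; omega⟩ = 1 ∧ α ⟨2*(m:ℕ)+1, by have := m.2; omega⟩ = 1
        then ν
       else 0))
      * (if α ⟨2*n, by omega⟩ = 0 then (1:ℂ) else ε) * psiH τ Ψ n α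

/-- The alternating spin configuration `↑↓↑↓⋯↑`. -/
def altConf {L : ℕ} : Fin L → Fin 2 := fun j => if (j : ℕ) % 2 = 0 then 0 else 1

/-- The fully polarised spin configuration `↓⋯↓`. -/
def downConf {L : ℕ} : Fin L → Fin 2 := fun _ => 1

/-- The spin configuration `↑⋯↑↓` with a single `↓` at the last site. -/
def lastDownConf {n : ℕ} : Fin (2*n+1) → Fin 2 := fun j => if (j : ℕ) = 2*n then 1 else 0

/-- `J₂ = −1/2`. -/
def J2c : ℂ := -(1/2)
/-- `J₃ = 1/(1+ζ)`. -/
def J3c (ζ : ℂ) : ℂ := 1/(1+ζ)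
/-- `J₄ = 1/(1−ζ)`. -/
def J4c (ζ : ℂ) : ℂ := 1/(1-ζ)
/-- `μ̄ = (μ−1)²/((ζ²−1)μ)`. -/
def mubar (ζ μ : ℂ) : ℂ := (μ - 1)^2 / ((ζ^2 - 1)*μ)
/-- `ν̄ = (ν−ζ)(νζ−1)/((ζ²−1)ν)`. -/
def nubar (ζ ν : ℂ) : ℂ := (ν - ζ)*(ν*ζ - 1) / ((ζ^2 - 1)*ν)

/-- The elliptic function `w(x)`. -/
def wfun (τ x : ℂ) : ℂ :=
  th4 ηc (2*τ) / th4 0 (2*τ) * th1 x τ ^ 2 / (th1 (x - ηc) τ * th1 (x + ηc) τ)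

/-- `β₂ = η + π/2`. -/
def β2c : ℂ := ηc + (Real.pi : ℂ)/2
/-- `β₃ = η + π/2 + πτ/2`. -/
def β3c (τ : ℂ) : ℂ := ηc + (Real.pi : ℂ)/2 + (Real.pi : ℂ)*τ/2
/-- `β₄ = η + πτ/2`. -/
def β4c (τ : ℂ) : ℂ := ηc + (Real.pi : ℂ)*τ/2

/-- `f` is an (even) theta function of degree `m`, nome `p = e^{iπτ}` and norm `0`
with respect to each of its variables. -/
def ThetaLike (τ : ℂ) (m : ℕ) {n : ℕ} (X : (Fin n → ℂ) → ℂ) : Prop :=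
  ∀ (x : Fin n → ℂ) (i : Fin n),
    Differentiable ℂ (fun z => X (Function.update x i z)) ∧
    (∀ z, X (Function.update x i (z + Real.pi)) = X (Function.update x i z)) ∧
    (∀ z, X (Function.update x i (z + Real.pi * τ))
        = ((-(pnome τ)) ^ m)⁻¹ * Complex.exp (-2 * Complex.I * ((m : ℂ) * z))
            * X (Function.update x i z)) ∧
    (∀ z, X (Function.update x i (-z)) = X (Function.update x i z))

theorem int_zpow_neg_one_eq_exp (n : ℤ) : (-1 : ℂ) ^ n = Complex.exp (n * (Real.pi * I)) := by
  rw [Complex.exp_int_mul, Complex.exp_pi_mul_I]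

theorem th3_eq_jacobiTheta₂ (z τ : ℂ) : th3 z τ = jacobiTheta₂ (z / Real.pi) τ := by
  have hπ : (Real.pi : ℂ) ≠ 0 := by exact_mod_cast Real.pi_ne_zero
  unfold th3 jacobiTheta₂ jacobiTheta₂_term
  refine tsum_congr fun n => ?_
  congr 1
  field_simp
  ring

theorem th4_eq_jacobiTheta₂ (z τ : ℂ) : th4 z τ = jacobiTheta₂ (z / Real.pi + 1 / 2) τ := by
  have hπ : (Real.pi : ℂ) ≠ 0 := by exact_mod_cast Real.pi_ne_zero
  unfold th4 jacobiTheta₂ jacobiTheta₂_term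
  refine tsum_congr fun n => ?_
  rw [int_zpow_neg_one_eq_exp, ← Complex.exp_add]
  congr 1
  field_simp
  ring

theorem th2_eq_jacobiTheta₂ (z τ : ℂ) :
    th2 z τ = Complex.exp (Real.pi * I * τ / 4 + I * z) *
      jacobiTheta₂ (z / Real.pi + τ / 2) τ := by
  have hπ : (Real.pi : ℂ) ≠ 0 := by exact_mod_cast Real.pi_ne_zero
  unfold th2 jacobiTheta₂ jacobiTheta₂_term
  rw [← tsum_mul_left]
  refine tsum_congr fun n => ?_
  rw [← Complex.exp_add]
  congr 1
  field_simp
  ring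

theorem th1_eq_jacobiTheta₂ (z τ : ℂ) :
    th1 z τ = -I * (Complex.exp (Real.pi * I * τ / 4 + I * z) *
      jacobiTheta₂ (z / Real.pi + 1 / 2 + τ / 2) τ) := by
  have hπ : (Real.pi : ℂ) ≠ 0 := by exact_mod_cast Real.pi_ne_zero
  unfold th1 jacobiTheta₂ jacobiTheta₂_term
  congr 1
  rw [← tsum_mul_left]
  refine tsum_congr fun n => ?_
  rw [int_zpow_neg_one_eq_exp, ← Complex.exp_add, ← Complex.exp_add]
  congr 1
  field_simp
  ring

theorem differentiable_jacobiTheta₂_fst {τ : ℂ} (hτ : 0 < τ.im) :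
    Differentiable ℂ fun z => jacobiTheta₂ z τ :=
  fun z => differentiableAt_jacobiTheta₂_fst z hτ

theorem differentiable_th4 {τ : ℂ} (hτ : 0 < τ.im) : Differentiable ℂ fun z => th4 z τ := by
  simp only [th4_eq_jacobiTheta₂]
  exact (differentiable_jacobiTheta₂_fst hτ).comp (by fun_prop)

theorem differentiable_th1 {τ : ℂ} (hτ : 0 < τ.im) : Differentiable ℂ fun z => th1 z τ := by
  simp only [th1_eq_jacobiTheta₂]
  have := (differentiable_jacobiTheta₂_fst hτ).comp
    (show Differentiable ℂ fun z : ℂ => z / Real.pi + 1 / 2 + τ / 2 by fun_prop)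
  exact (Differentiable.mul (by fun_prop) this).const_mul _

theorem th2_eq_th1 (z τ : ℂ) : th2 z τ = th1 (z + Real.pi / 2) τ := by
  have hπ : (Real.pi : ℂ) ≠ 0 := by exact_mod_cast Real.pi_ne_zero
  rw [th2_eq_jacobiTheta₂, th1_eq_jacobiTheta₂,
    show Real.pi * I * τ / 4 + I * (z + Real.pi / 2)
      = Real.pi * I * τ / 4 + I * z + (Real.pi / 2) * I by ring,
    Complex.exp_add (Real.pi * I * τ / 4 + I * z), Complex.exp_pi_div_two_mul_I,
    show (z + Real.pi / 2) / Real.pi + 1 / 2 + τ / 2 = z / Real.pi + τ / 2 + 1 by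
      field_simp; ring, jacobiTheta₂_add_left]
  linear_combination (Complex.exp (Real.pi * I * τ / 4 + I * z) *
    jacobiTheta₂ (z / Real.pi + τ / 2) τ) * Complex.I_sq

theorem th4_add_pi (z τ : ℂ) : th4 (z + Real.pi) τ = th4 z τ := by
  have hπ : (Real.pi : ℂ) ≠ 0 := by exact_mod_cast Real.pi_ne_zero
  rw [th4_eq_jacobiTheta₂, th4_eq_jacobiTheta₂, ← jacobiTheta₂_add_left (z / Real.pi + 1 / 2)]
  congr 1
  field_simp
  ring

theorem th1_add_pi (z τ : ℂ) : th1 (z + Real.pi) τ = -th1 z τ := by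
  have hπ : (Real.pi : ℂ) ≠ 0 := by exact_mod_cast Real.pi_ne_zero
  rw [th1_eq_jacobiTheta₂, th1_eq_jacobiTheta₂,
    show Real.pi * I * τ / 4 + I * (z + Real.pi)
      = Real.pi * I * τ / 4 + I * z + Real.pi * I by ring, Complex.exp_add, Complex.exp_pi_mul_I,
    show (z + Real.pi) / Real.pi + 1 / 2 + τ / 2 = z / Real.pi + 1 / 2 + τ / 2 + 1 by
      field_simp; ring, jacobiTheta₂_add_left]
  ring

theorem th4_neg (z τ : ℂ) : th4 (-z) τ = th4 z τ := by
  rw [th4_eq_jacobiTheta₂, th4_eq_jacobiTheta₂, ← jacobiTheta₂_neg_left, ← jacobiTheta₂_add_left]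
  congr 1
  ring

theorem th3_neg (z τ : ℂ) : th3 (-z) τ = th3 z τ := by
  rw [th3_eq_jacobiTheta₂, th3_eq_jacobiTheta₂, ← jacobiTheta₂_neg_left]
  congr 1
  ring

theorem th1_neg (z τ : ℂ) : th1 (-z) τ = -th1 z τ := by
  have hπ : (Real.pi : ℂ) ≠ 0 := by exact_mod_cast Real.pi_ne_zero
  rw [th1_eq_jacobiTheta₂, th1_eq_jacobiTheta₂, ← jacobiTheta₂_neg_left,
    show z / Real.pi + 1 / 2 + τ / 2 = (-(-z / Real.pi + 1 / 2 + τ / 2) + 1) + τ by ring,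
    jacobiTheta₂_add_left', jacobiTheta₂_add_left, ← mul_assoc (cexp _) (cexp _),
    ← Complex.exp_add,
    show Real.pi * I * τ / 4 + I * z
        + -Real.pi * I * (τ + 2 * (-(-z / Real.pi + 1 / 2 + τ / 2) + 1))
      = Real.pi * I * τ / 4 + I * (-z) - Real.pi * I by field_simp; ring,
    Complex.exp_sub, Complex.exp_pi_mul_I]
  ring

theorem th1_zero (τ : ℂ) : th1 0 τ = 0 := by
  have h := th1_neg 0 τ
  rw [neg_zero] at h
  linear_combination h / 2

theorem th2_neg (z τ : ℂ) : th2 (-z) τ = th2 z τ := by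
  rw [th2_eq_th1, th2_eq_th1, show z + Real.pi / 2 = -(-z + Real.pi / 2) + Real.pi by ring,
    th1_add_pi, th1_neg, neg_neg]

theorem th4_add_pi_mul (z τ : ℂ) :
    th4 (z + Real.pi * τ) τ = -Complex.exp (-I * (Real.pi * τ + 2 * z)) * th4 z τ := by
  have hπ : (Real.pi : ℂ) ≠ 0 := by exact_mod_cast Real.pi_ne_zero
  rw [th4_eq_jacobiTheta₂, th4_eq_jacobiTheta₂,
    show (z + Real.pi * τ) / Real.pi + 1 / 2 = z / Real.pi + 1 / 2 + τ by field_simp; ring,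
    jacobiTheta₂_add_left',
    show -Real.pi * I * (τ + 2 * (z / Real.pi + 1 / 2))
      = -I * (Real.pi * τ + 2 * z) - Real.pi * I by field_simp; ring,
    Complex.exp_sub, Complex.exp_pi_mul_I]
  ring

theorem th1_add_pi_mul (z τ : ℂ) :
    th1 (z + Real.pi * τ) τ = -Complex.exp (-I * (Real.pi * τ + 2 * z)) * th1 z τ := by
  have hπ : (Real.pi : ℂ) ≠ 0 := by exact_mod_cast Real.pi_ne_zero
  rw [th1_eq_jacobiTheta₂, th1_eq_jacobiTheta₂,
    show (z + Real.pi * τ) / Real.pi + 1 / 2 + τ / 2 = z / Real.pi + 1 / 2 + τ / 2 + τ by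
      field_simp; ring,
    jacobiTheta₂_add_left', ← mul_assoc (cexp _) (cexp _), ← Complex.exp_add,
    show Real.pi * I * τ / 4 + I * (z + Real.pi * τ)
        + -Real.pi * I * (τ + 2 * (z / Real.pi + 1 / 2 + τ / 2))
      = -I * (Real.pi * τ + 2 * z) + (Real.pi * I * τ / 4 + I * z) - Real.pi * I by
        field_simp; ring,
    Complex.exp_sub, Complex.exp_pi_mul_I, Complex.exp_add]
  ring

/-- Shifting by half the second period exchanges `ϑ₁` and `ϑ₄`. -/
theorem th1_add_half (z τ : ℂ) :
    th1 (z + Real.pi * τ) (2 * τ) = I * Complex.exp (-I * (Real.pi * τ / 2 + z)) * th4 z (2 * τ) := by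
  have hπ : (Real.pi : ℂ) ≠ 0 := by exact_mod_cast Real.pi_ne_zero
  rw [th4_eq_jacobiTheta₂, th1_eq_jacobiTheta₂,
    show (z + Real.pi * τ) / Real.pi + 1 / 2 + 2 * τ / 2 = z / Real.pi + 1 / 2 + 2 * τ by
      field_simp; ring,
    jacobiTheta₂_add_left', ← mul_assoc (cexp _) (cexp _), ← Complex.exp_add,
    show Real.pi * I * (2 * τ) / 4 + I * (z + Real.pi * τ)
        + -Real.pi * I * (2 * τ + 2 * (z / Real.pi + 1 / 2))
      = -I * (Real.pi * τ / 2 + z) - Real.pi * I by field_simp; ring,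
    Complex.exp_sub, Complex.exp_pi_mul_I]
  ring

theorem th4_add_half (z τ : ℂ) :
    th4 (z + Real.pi * τ) (2 * τ) = I * Complex.exp (-I * (Real.pi * τ / 2 + z)) * th1 z (2 * τ) := by
  have h := th1_add_pi_mul z (2 * τ)
  rw [show z + Real.pi * (2 * τ) = (z + Real.pi * τ) + Real.pi * τ by ring, th1_add_half] at h
  have e : Complex.exp (-I * (Real.pi * τ / 2 + (z + Real.pi * τ)))
      * Complex.exp (-I * (Real.pi * τ / 2 + z))
      = Complex.exp (-I * (Real.pi * (2 * τ) + 2 * z)) := by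
    rw [← Complex.exp_add]; congr 1; ring
  have hne := Complex.exp_ne_zero (-I * (Real.pi * τ / 2 + (z + Real.pi * τ)))
  apply mul_left_cancel₀ (mul_ne_zero I_ne_zero hne)
  rw [h, ← e]
  linear_combination (-Complex.exp (-I * (Real.pi * τ / 2 + (z + Real.pi * τ)))
      * Complex.exp (-I * (Real.pi * τ / 2 + z)) * th1 z (2 * τ)) * Complex.I_sq

/-- Splitting of `ℤ × ℤ` according to the parity of the sum of the coordinates. -/
def intProdParityEquiv : (ℤ × ℤ) ⊕ (ℤ × ℤ) ≃ ℤ × ℤ where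
  toFun s := s.elim (fun q => (q.1 + q.2, q.1 - q.2)) (fun q => (q.1 + q.2 + 1, q.1 - q.2))
  invFun q := if (q.1 + q.2) % 2 = 0 then .inl ((q.1 + q.2) / 2, (q.1 - q.2) / 2)
    else .inr ((q.1 + q.2) / 2, (q.1 - q.2) / 2)
  left_inv s := by
    rcases s with ⟨a, b⟩ | ⟨a, b⟩
    · have h : (a + b + (a - b)) % 2 = 0 := by omega
      simp only [Sum.elim_inl, h, if_true, Sum.inl.injEq, Prod.mk.injEq]
      omega
    · have h : ¬ (a + b + 1 + (a - b)) % 2 = 0 := by omega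
      simp only [Sum.elim_inr, h, if_false, Sum.inr.injEq, Prod.mk.injEq]
      omega
  right_inv q := by
    rcases q with ⟨a, b⟩
    by_cases h : (a + b) % 2 = 0
    · simp only [h, if_true, Sum.elim_inl, Prod.mk.injEq]
      omega
    · simp only [h, if_false, Sum.elim_inr, Prod.mk.injEq]
      omega

theorem hasSum_of_eq {f g : ℤ × ℤ → ℂ} {A : ℂ} (h : ∀ q, f q = g q) (hg : HasSum g A) :
    HasSum f A := funext h ▸ hg

theorem hasSum_prod_mul {f g : ℤ → ℂ} {A B : ℂ} (hf : HasSum f A) (hg : HasSum g B) :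
    HasSum (fun q : ℤ × ℤ => f q.1 * g q.2) (A * B) :=
  hf.mul hg (summable_mul_of_summable_norm hf.summable.norm hg.summable.norm)

/-- Product formula for theta functions under doubling of the modulus. -/
theorem jacobiTheta₂_mul_jacobiTheta₂ (u v : ℂ) {τ : ℂ} (hτ : 0 < τ.im) :
    jacobiTheta₂ u τ * jacobiTheta₂ v τ
      = jacobiTheta₂ (u + v) (2 * τ) * jacobiTheta₂ (u - v) (2 * τ)
        + Complex.exp (Real.pi * I * τ + 2 * Real.pi * I * u)
          * (jacobiTheta₂ (u + v + τ) (2 * τ) * jacobiTheta₂ (u - v + τ) (2 * τ)) := by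
  have h2 : 0 < (2 * τ).im := by simpa using hτ
  have key : ∀ {σ : ℂ} (_ : 0 < σ.im) (a b : ℂ),
      HasSum (fun q : ℤ × ℤ => jacobiTheta₂_term q.1 a σ * jacobiTheta₂_term q.2 b σ)
        (jacobiTheta₂ a σ * jacobiTheta₂ b σ) := by
    intro σ hσ a b
    exact hasSum_prod_mul (f := fun n => jacobiTheta₂_term n a σ)
      (g := fun n => jacobiTheta₂_term n b σ) (hasSum_jacobiTheta₂_term a hσ)
      (hasSum_jacobiTheta₂_term b hσ)
  have hL := (Equiv.hasSum_iff intProdParityEquiv).2 (key hτ u v)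
  have hR := HasSum.sum (f := (fun q : ℤ × ℤ => jacobiTheta₂_term q.1 u τ * jacobiTheta₂_term q.2 v τ) ∘ intProdParityEquiv)
    (a := jacobiTheta₂ (u + v) (2 * τ) * jacobiTheta₂ (u - v) (2 * τ))
    (b := Complex.exp (Real.pi * I * τ + 2 * Real.pi * I * u)
          * (jacobiTheta₂ (u + v + τ) (2 * τ) * jacobiTheta₂ (u - v + τ) (2 * τ))) ?_ ?_
  · exact hL.unique hR
  · refine hasSum_of_eq (fun q => ?_) (key h2 (u + v) (u - v))
    simp only [Function.comp, intProdParityEquiv, Equiv.coe_fn_mk, Sum.elim_inl,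
      jacobiTheta₂_term, ← Complex.exp_add]
    congr 1
    push_cast
    ring
  · refine hasSum_of_eq (fun q => ?_) ((key h2 (u + v + τ) (u - v + τ)).mul_left
      (Complex.exp (Real.pi * I * τ + 2 * Real.pi * I * u)))
    simp only [Function.comp, intProdParityEquiv, Equiv.coe_fn_mk, Sum.elim_inr,
      jacobiTheta₂_term, ← Complex.exp_add]
    congr 1
    push_cast
    ring

theorem th3_mul_th4 (u v : ℂ) {τ : ℂ} (hτ : 0 < τ.im) :
    th3 u τ * th4 v τ = th4 (u + v) (2 * τ) * th4 (u - v) (2 * τ)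
      - th1 (u + v) (2 * τ) * th1 (u - v) (2 * τ) := by
  have hπ : (Real.pi : ℂ) ≠ 0 := by exact_mod_cast Real.pi_ne_zero
  simp only [th3_eq_jacobiTheta₂, th4_eq_jacobiTheta₂, th1_eq_jacobiTheta₂]
  rw [jacobiTheta₂_mul_jacobiTheta₂ _ _ hτ]
  rw [← jacobiTheta₂_add_left (u / Real.pi - (v / Real.pi + 1 / 2)),
    ← jacobiTheta₂_add_left (u / Real.pi - (v / Real.pi + 1 / 2) + τ)]
  rw [show u / Real.pi + (v / Real.pi + 1 / 2) = (u + v) / Real.pi + 1 / 2 by ring,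
    show u / Real.pi - (v / Real.pi + 1 / 2) + 1 = (u - v) / Real.pi + 1 / 2 by ring,
    show u / Real.pi - (v / Real.pi + 1 / 2) + τ + 1 = (u - v) / Real.pi + 1 / 2 + 2 * τ / 2 by ring,
    show (u + v) / Real.pi + 1 / 2 + τ = (u + v) / Real.pi + 1 / 2 + 2 * τ / 2 by ring]
  have e : Complex.exp (Real.pi * I * τ + 2 * Real.pi * I * (u / Real.pi))
      = Complex.exp (Real.pi * I * (2 * τ) / 4 + I * (u + v))
        * Complex.exp (Real.pi * I * (2 * τ) / 4 + I * (u - v)) := by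
    rw [← Complex.exp_add]; congr 1; field_simp; ring
  rw [e]
  generalize jacobiTheta₂ ((u + v) / Real.pi + 1 / 2 + 2 * τ / 2) (2 * τ) = A
  generalize jacobiTheta₂ ((u - v) / Real.pi + 1 / 2 + 2 * τ / 2) (2 * τ) = B
  linear_combination (A * B * Complex.exp (Real.pi * I * (2 * τ) / 4 + I * (u + v))
        * Complex.exp (Real.pi * I * (2 * τ) / 4 + I * (u - v))) * Complex.I_sq

theorem th1_mul_th2 (u v : ℂ) {τ : ℂ} (hτ : 0 < τ.im) :
    th1 u τ * th2 v τ = th1 (u + v) (2 * τ) * th4 (u - v) (2 * τ)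
      + th4 (u + v) (2 * τ) * th1 (u - v) (2 * τ) := by
  have hπ : (Real.pi : ℂ) ≠ 0 := by exact_mod_cast Real.pi_ne_zero
  simp only [th2_eq_jacobiTheta₂, th4_eq_jacobiTheta₂, th1_eq_jacobiTheta₂]
  have h := jacobiTheta₂_mul_jacobiTheta₂ (u / Real.pi + 1 / 2 + τ / 2) (v / Real.pi + τ / 2) hτ
  rw [show u / Real.pi + 1 / 2 + τ / 2 + (v / Real.pi + τ / 2) + τ = (u + v) / Real.pi + 1 / 2 + 2 * τ by ring,
    jacobiTheta₂_add_left',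
    show u / Real.pi + 1 / 2 + τ / 2 + (v / Real.pi + τ / 2) = (u + v) / Real.pi + 1 / 2 + 2 * τ / 2 by ring,
    show u / Real.pi + 1 / 2 + τ / 2 - (v / Real.pi + τ / 2) + τ = (u - v) / Real.pi + 1 / 2 + 2 * τ / 2 by ring,
    show u / Real.pi + 1 / 2 + τ / 2 - (v / Real.pi + τ / 2) = (u - v) / Real.pi + 1 / 2 by ring] at h
  have e1 : Complex.exp (Real.pi * I * τ / 4 + I * u) * Complex.exp (Real.pi * I * τ / 4 + I * v)
      = Complex.exp (Real.pi * I * (2 * τ) / 4 + I * (u + v)) := by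
    rw [← Complex.exp_add]; congr 1; ring
  have e2 : Complex.exp (Real.pi * I * τ / 4 + I * u) * Complex.exp (Real.pi * I * τ / 4 + I * v)
      * (Complex.exp (Real.pi * I * τ + 2 * Real.pi * I * (u / Real.pi + 1 / 2 + τ / 2))
        * Complex.exp (-Real.pi * I * (2 * τ + 2 * ((u + v) / Real.pi + 1 / 2))))
      = Complex.exp (Real.pi * I * (2 * τ) / 4 + I * (u - v)) := by
    simp only [← Complex.exp_add]; congr 1; field_simp; ring
  generalize jacobiTheta₂ ((u + v) / Real.pi + 1 / 2) (2 * τ) = A at *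
  generalize jacobiTheta₂ ((u - v) / Real.pi + 1 / 2) (2 * τ) = B at *
  generalize jacobiTheta₂ ((u + v) / Real.pi + 1 / 2 + 2 * τ / 2) (2 * τ) = C at *
  generalize jacobiTheta₂ ((u - v) / Real.pi + 1 / 2 + 2 * τ / 2) (2 * τ) = D at *
  rw [← e1, ← e2]
  linear_combination (-I * Complex.exp (Real.pi * I * τ / 4 + I * u) *
    Complex.exp (Real.pi * I * τ / 4 + I * v)) * h

/-- A product of two entire functions vanishes identically only if one of the factors does. -/
theorem Differentiable.eq_zero_or_eq_zero_of_mul {f g : ℂ → ℂ} (hf : Differentiable ℂ f)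
    (hg : Differentiable ℂ g) (h : ∀ z, f z * g z = 0) : (∀ z, f z = 0) ∨ ∀ z, g z = 0 := by
  have := AnalyticOnNhd.eq_zero_or_eq_zero_of_mul_eq_zero (U := Set.univ) (f := f) (g := g)
    (fun z _ => hf.analyticAt z) (fun z _ => hg.analyticAt z) (fun z _ => h z)
    isPreconnected_univ
  simpa using this

/-- Cancellation of a nonzero entire factor. -/
theorem Differentiable.mul_left_cancel_entire {f g h : ℂ → ℂ} (hf : Differentiable ℂ f)
    (hg : Differentiable ℂ g) (hh : Differentiable ℂ h) {z₀ : ℂ} (hz : f z₀ ≠ 0)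
    (heq : ∀ z, f z * g z = f z * h z) (z : ℂ) : g z = h z := by
  rcases hf.eq_zero_or_eq_zero_of_mul (hg.sub hh) (fun z => by
    simp only [Pi.sub_apply]; rw [mul_sub, heq, sub_self]) with h0 | h0
  · exact absurd (h0 z₀) hz
  · exact sub_eq_zero.1 (h0 z)

theorem Differentiable.dslope_entire {f : ℂ → ℂ} (hf : Differentiable ℂ f) (c : ℂ) :
    Differentiable ℂ (dslope f c) := by
  rw [← differentiableOn_univ] at hf ⊢
  exact (Complex.differentiableOn_dslope Filter.univ_mem).2 hf

/-- Division of entire functions when the divisor has only simple zeros. -/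
theorem exists_entire_quotient {f g : ℂ → ℂ} (hf : Differentiable ℂ f) (hg : Differentiable ℂ g)
    (h0 : ∀ z, g z = 0 → f z = 0 ∧ deriv g z ≠ 0) :
    ∃ h : ℂ → ℂ, Differentiable ℂ h ∧ ∀ z, f z = g z * h z := by
  classical
  refine ⟨fun z => if g z = 0 then deriv f z / deriv g z else f z / g z, ?_, ?_⟩
  · intro c
    by_cases hc : g c = 0
    · obtain ⟨hfc, hgc⟩ := h0 c hc
      have hq : DifferentiableAt ℂ (fun z => dslope f c z / dslope g c z) c :=
        ((hf.dslope_entire c) c).div ((hg.dslope_entire c) c) (by rwa [dslope_same])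
      refine hq.congr_of_eventuallyEq ?_
      have hne : ∀ᶠ z in nhds c, dslope g c z ≠ 0 :=
        ((hg.dslope_entire c).continuous.continuousAt).eventually_ne (by rwa [dslope_same])
      filter_upwards [hne] with z hz
      rcases eq_or_ne z c with rfl | hzc
      · simp [hc, dslope_same]
      · have e1 : f z = (z - c) * dslope f c z := by
          have := sub_smul_dslope f c z
          simp only [smul_eq_mul, hfc, sub_zero] at this
          exact this.symm
        have e2 : g z = (z - c) * dslope g c z := by
          have := sub_smul_dslope g c z
          simp only [smul_eq_mul, hc, sub_zero] at this
          exact this.symm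
        have hzc' : z - c ≠ 0 := sub_ne_zero.2 hzc
        have : g z ≠ 0 := by rw [e2]; exact mul_ne_zero hzc' hz
        simp only [this, if_false]
        rw [e1, e2, mul_div_mul_left _ _ hzc']
    · have hq : DifferentiableAt ℂ (fun z => f z / g z) c := (hf c).div (hg c) hc
      refine hq.congr_of_eventuallyEq ?_
      filter_upwards [(hg.continuous.continuousAt).eventually_ne hc] with z hz
      simp [hz]
  · intro z
    by_cases hz : g z = 0
    · simp [hz, (h0 z hz).1]
    · simp only [hz, if_false]; field_simp

/-- Reduction of a point modulo the lattice spanned by `ω` and `ωτ`. -/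
theorem exists_lattice_reduction {τ : ℂ} (hτ : 0 < τ.im) {ω : ℝ} (hω : 0 < ω) (z : ℂ) :
    ∃ m n : ℤ, ‖z - m * ω - n * (ω * τ)‖ ≤ ω + ω * ‖τ‖ := by
  set b : ℝ := z.im / (ω * τ.im) with hb
  set a : ℝ := (z.re - b * ω * τ.re) / ω with ha
  have hz : z = a * ω + b * (ω * τ) := by
    apply Complex.ext
    · simp [ha]; field_simp; ring
    · have : (a * ω + b * (ω * τ) : ℂ).im = b * (ω * τ.im) := by simp
      rw [this, hb]; field_simp
  refine ⟨⌊a⌋, ⌊b⌋, ?_⟩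
  have : z - (⌊a⌋ : ℂ) * ω - (⌊b⌋ : ℂ) * (ω * τ)
      = ((Int.fract a : ℝ) : ℂ) * ω + ((Int.fract b : ℝ) : ℂ) * (ω * τ) := by
    rw [Int.fract, Int.fract]; push_cast
    conv_lhs => rw [hz]
    ring
  rw [this]
  refine (norm_add_le _ _).trans ?_
  rw [norm_mul, norm_mul, norm_mul, Complex.norm_real, Complex.norm_real, Complex.norm_real,
    Real.norm_of_nonneg (Int.fract_nonneg a), Real.norm_of_nonneg (Int.fract_nonneg b),
    Real.norm_of_nonneg hω.le]
  have h1 := (Int.fract_lt_one a).le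
  have h2 := (Int.fract_lt_one b).le
  have h3 := norm_nonneg τ
  exact add_le_add (mul_le_of_le_one_left hω.le h1)
    (mul_le_of_le_one_left (by positivity) h2)

/-- A doubly periodic function attains all its values on a fixed closed ball. -/
theorem exists_mem_closedBall_of_periodic {τ : ℂ} (hτ : 0 < τ.im) {ω : ℝ} (hω : 0 < ω)
    {N : ℂ → ℝ} (h₁ : ∀ z, N (z + ω) = N z) (h₂ : ∀ z, N (z + ω * τ) = N z) (z : ℂ) :
    ∃ w, ‖w‖ ≤ ω + ω * ‖τ‖ ∧ N w = N z := by
  obtain ⟨m, n, hmn⟩ := exists_lattice_reduction hτ hω z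
  refine ⟨_, hmn, ?_⟩
  have p₁ : Function.Periodic N (ω : ℂ) := h₁
  have p₂ : Function.Periodic N (ω * τ : ℂ) := h₂
  have e₁ := p₁.sub_zsmul_eq (x := z) m
  have e₂ := p₂.sub_zsmul_eq (x := z - m * ω) n
  simp only [zsmul_eq_mul] at e₁ e₂
  rw [e₂, e₁]

/-- Liouville's theorem for entire functions with doubly periodic modulus. -/
theorem eq_of_norm_doubly_periodic {τ : ℂ} (hτ : 0 < τ.im) {ω : ℝ} (hω : 0 < ω) {F : ℂ → ℂ}
    (hF : Differentiable ℂ F) (h₁ : ∀ z, ‖F (z + ω)‖ = ‖F z‖)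
    (h₂ : ∀ z, ‖F (z + ω * τ)‖ = ‖F z‖) (z w : ℂ) : F z = F w := by
  refine hF.apply_eq_apply_of_bounded ?_ z w
  obtain ⟨C, hC⟩ := (isCompact_closedBall (0 : ℂ) (ω + ω * ‖τ‖)).exists_bound_of_continuousOn
    hF.continuous.continuousOn
  refine (Metric.isBounded_closedBall (x := (0 : ℂ)) (r := C)).subset ?_
  rintro _ ⟨z, rfl⟩
  obtain ⟨v, hv, hv'⟩ := exists_mem_closedBall_of_periodic hτ hω (N := fun z => ‖F z‖) h₁ h₂ z
  simpa [← hv'] using hC v (by simpa using hv)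

/-- Factoring out finitely many zeros of an entire function. -/
theorem exists_entire_factor (s : Finset ℂ) {h : ℂ → ℂ} (hh : Differentiable ℂ h)
    (h0 : ∀ a ∈ s, h a = 0) :
    ∃ k : ℂ → ℂ, Differentiable ℂ k ∧ ∀ z, h z = (∏ a ∈ s, (z - a)) * k z := by
  classical
  induction s using Finset.induction_on with
  | empty => exact ⟨h, hh, by simp⟩
  | insert a s ha ih =>
    obtain ⟨k, hk, hk'⟩ := ih fun b hb => h0 b (Finset.mem_insert_of_mem hb)
    have hka : k a = 0 := by
      have := h0 a (Finset.mem_insert_self a s)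
      rw [hk'] at this
      refine (mul_eq_zero.1 this).resolve_left (Finset.prod_ne_zero_iff.2 fun b hb => ?_)
      exact sub_ne_zero.2 fun hab => ha (hab ▸ hb)
    refine ⟨dslope k a, hk.dslope_entire a, fun z => ?_⟩
    have := sub_smul_dslope k a z
    simp only [smul_eq_mul, hka, sub_zero] at this
    rw [Finset.prod_insert ha, hk', ← this]; ring

/-- Schwarz lemma for entire functions with many zeros in a disc. -/
theorem norm_le_of_zeros (s : Finset ℂ) {h : ℂ → ℂ} (hh : Differentiable ℂ h)
    (h0 : ∀ a ∈ s, h a = 0) {r M : ℝ} (hr : 0 < r) (hs : ∀ a ∈ s, ‖a‖ ≤ r)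
    (hM : ∀ z, ‖z‖ ≤ 5 * r → ‖h z‖ ≤ M) (z : ℂ) (hz : ‖z‖ ≤ r) :
    ‖h z‖ ≤ M * (1 / 2) ^ s.card := by
  obtain ⟨k, hk, hk'⟩ := exists_entire_factor s hh h0
  have hb : ‖k z‖ ≤ M / (4 * r) ^ s.card := by
    refine Complex.norm_le_of_forall_mem_frontier_norm_le (U := Metric.ball 0 (5 * r))
      Metric.isBounded_ball hk.diffContOnCl (fun w hw => ?_) (subset_closure (by
        simp only [Metric.mem_ball, dist_zero_right]; linarith))
    rw [frontier_ball _ (by positivity)] at hw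
    have hw' : ‖w‖ = 5 * r := by simpa using hw
    rw [le_div_iff₀ (by positivity)]
    refine le_trans ?_ (hM w hw'.le)
    rw [hk', norm_mul, mul_comm, norm_prod]
    refine mul_le_mul_of_nonneg_right ?_ (norm_nonneg _)
    rw [← Finset.prod_const]
    refine Finset.prod_le_prod (fun _ _ => by positivity) fun a ha => ?_
    have := norm_sub_norm_le w a
    have := hs a ha
    linarith
  rw [hk', norm_mul, norm_prod]
  have h1 : ∏ a ∈ s, ‖z - a‖ ≤ (2 * r) ^ s.card := by
    rw [← Finset.prod_const]
    refine Finset.prod_le_prod (fun _ _ => norm_nonneg _) fun a ha => ?_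
    have := norm_sub_le z a
    have := hs a ha
    linarith
  calc (∏ a ∈ s, ‖z - a‖) * ‖k z‖ ≤ (2 * r) ^ s.card * (M / (4 * r) ^ s.card) := by gcongr
    _ = M * ((2 * r) / (4 * r)) ^ s.card := by rw [div_pow]; ring
    _ = M * (1 / 2) ^ s.card := by
      congr 2; field_simp; norm_num

/-- Entire functions with `h (z + ω) = h z` and `h (z + ωτ) = C e^{-iMz} h z`. -/
def quasiPeriodic (τ : ℂ) (ω : ℝ) (C : ℂ) (M : ℝ) : Submodule ℂ (ℂ → ℂ) where
  carrier := {h | Differentiable ℂ h ∧ (∀ z, h (z + ω) = h z) ∧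
    ∀ z, h (z + ω * τ) = C * Complex.exp (-I * M * z) * h z}
  add_mem' := by
    rintro f g ⟨hf, hf₁, hf₂⟩ ⟨hg, hg₁, hg₂⟩
    refine ⟨hf.add hg, fun z => ?_, fun z => ?_⟩
    · simp [hf₁, hg₁]
    · simp only [Pi.add_apply, hf₂, hg₂]; ring
  zero_mem' := ⟨differentiable_const 0, by simp, by simp⟩
  smul_mem' := by
    rintro c f ⟨hf, hf₁, hf₂⟩
    refine ⟨hf.const_smul c, fun z => ?_, fun z => ?_⟩
    · simp [hf₁]
    · simp only [Pi.smul_apply, smul_eq_mul, hf₂]; ring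

/-- A finite set of points determines quasi-periodic functions. -/
theorem quasiPeriodic_exists_finset {τ : ℂ} (hτ : 0 < τ.im) {ω : ℝ} (hω : 0 < ω) {C : ℂ}
    (hC : C ≠ 0) (M : ℝ) :
    ∃ S : Finset ℂ, ∀ h ∈ quasiPeriodic τ ω C M, (∀ s ∈ S, h s = 0) → h = 0 := by
  set T : ℝ := ω * τ.im with hT
  have hT0 : 0 < T := by positivity
  set A : ℝ := M / (2 * T) with hA
  set B : ℝ := (Real.log ‖C‖ - A * T ^ 2) / T with hB
  set Q : ℂ → ℝ := fun z => A * z.im ^ 2 + B * z.im with hQ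
  set r : ℝ := ω + ω * ‖τ‖ with hr
  have hr0 : 0 < r := by positivity
  set K : ℝ := |A| * (5 * r) ^ 2 + |B| * (5 * r) with hK
  have hQK : ∀ z : ℂ, ‖z‖ ≤ 5 * r → |Q z| ≤ K := by
    intro z hz
    have him : |z.im| ≤ 5 * r := (Complex.abs_im_le_norm z).trans hz
    refine (abs_add_le _ _).trans ?_
    rw [abs_mul, abs_mul, abs_pow]
    exact add_le_add (mul_le_mul_of_nonneg_left (pow_le_pow_left₀ (abs_nonneg _) him 2)
      (abs_nonneg _)) (mul_le_mul_of_nonneg_left him (abs_nonneg _))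
  obtain ⟨k, hk⟩ := exists_pow_lt_of_lt_one (Real.exp_pos (-(2 * K)))
    (show (1 / 2 : ℝ) < 1 by norm_num)
  have hinf : (Metric.closedBall (0 : ℂ) r).Infinite :=
    infinite_of_mem_nhds 0 (Metric.closedBall_mem_nhds 0 hr0)
  obtain ⟨S, hS, hSk⟩ := hinf.exists_subset_card_eq k
  refine ⟨S, fun h ⟨hd, h₁, h₂⟩ hS0 => ?_⟩
  set N : ℂ → ℝ := fun z => ‖h z‖ * Real.exp (-Q z) with hN
  have hN₁ : ∀ z, N (z + ω) = N z := by
    intro z; simp [hN, hQ, h₁]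
  have hN₂ : ∀ z, N (z + ω * τ) = N z := by
    intro z
    have e : Q (z + ω * τ) = Q z + Real.log ‖C‖ + M * z.im := by
      simp only [hQ, hB, hA]
      have : (z + ω * τ).im = z.im + T := by simp [hT]
      rw [this]; field_simp; ring
    simp only [hN, h₂, norm_mul, Complex.norm_exp, e]
    have e2 : (-I * M * z).re = M * z.im := by simp
    rw [e2, show -(Q z + Real.log ‖C‖ + M * z.im) = -Q z - Real.log ‖C‖ - M * z.im by ring,
      Real.exp_sub, Real.exp_sub, Real.exp_log (norm_pos_iff.2 hC)]
    have : ‖C‖ ≠ 0 := norm_ne_zero_iff.2 hC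
    field_simp
  obtain ⟨w₀, hw₀, hmax⟩ := (isCompact_closedBall (0 : ℂ) r).exists_isMaxOn
    ⟨0, by simpa using hr0.le⟩ (hd.continuous.norm.continuousOn)
  have hmax' : ∀ w, ‖w‖ ≤ r → ‖h w‖ ≤ ‖h w₀‖ := fun w hw => hmax (by simpa using hw)
  have hbound : ∀ z, ‖z‖ ≤ 5 * r → ‖h z‖ ≤ Real.exp (2 * K) * ‖h w₀‖ := by
    intro z hz
    obtain ⟨w, hw, hwz⟩ := exists_mem_closedBall_of_periodic hτ hω hN₁ hN₂ z
    have e : ‖h z‖ = ‖h w‖ * Real.exp (Q z - Q w) := by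
      have : ‖h z‖ = N z * Real.exp (Q z) := by
        simp only [hN]; rw [mul_assoc, ← Real.exp_add]; simp
      rw [this, ← hwz]; simp only [hN]
      rw [mul_assoc, ← Real.exp_add]; congr 2; ring
    rw [e, mul_comm]
    have h1 := abs_le.1 (hQK z hz)
    have h2 := abs_le.1 (hQK w (by linarith))
    gcongr
    · linarith
    · exact hmax' w hw
  have hw₀' : ‖w₀‖ ≤ r := by simpa using hw₀
  have hfin := norm_le_of_zeros S hd hS0 hr0 (fun a ha => by simpa using hS ha) hbound w₀ hw₀'
  rw [hSk] at hfin
  have hz0 : ‖h w₀‖ = 0 := by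
    by_contra hne
    have hpos : 0 < ‖h w₀‖ := lt_of_le_of_ne (norm_nonneg _) (Ne.symm hne)
    have : Real.exp (2 * K) * ‖h w₀‖ * (1 / 2) ^ k < ‖h w₀‖ := by
      calc Real.exp (2 * K) * ‖h w₀‖ * (1 / 2) ^ k
          < Real.exp (2 * K) * ‖h w₀‖ * Real.exp (-(2 * K)) := by gcongr
        _ = ‖h w₀‖ := by
          rw [mul_right_comm, ← Real.exp_add]; simp
    linarith
  funext z
  obtain ⟨w, hw, hwz⟩ := exists_mem_closedBall_of_periodic hτ hω hN₁ hN₂ z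
  have hw0 : ‖h w‖ = 0 := le_antisymm (hz0 ▸ hmax' w hw) (norm_nonneg _)
  simp only [hN, hw0, zero_mul] at hwz
  have := (mul_eq_zero.1 hwz.symm).resolve_right (Real.exp_ne_zero _)
  simpa using this

/-- Interpolation: elements of a function space determined by a finite set of points are
expressed linearly through their values at these points. -/
theorem exists_interpolation {V : Submodule ℂ (ℂ → ℂ)} (S : Finset ℂ)
    (hS : ∀ h ∈ V, (∀ s ∈ S, h s = 0) → h = 0) :
    ∃ E : S → ℂ → ℂ, (∀ s, E s ∈ V) ∧ ∀ h ∈ V, ∀ z, h z = ∑ s : S, h s * E s z := by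
  classical
  let ev : V →ₗ[ℂ] (S → ℂ) :=
    { toFun := fun h s => h.1 s
      map_add' := fun _ _ => rfl
      map_smul' := fun _ _ => rfl }
  have hker : LinearMap.ker ev = ⊥ := by
    rw [LinearMap.ker_eq_bot']
    intro h hh
    exact Subtype.ext (hS h.1 h.2 fun s hs => congrFun hh ⟨s, hs⟩)
  obtain ⟨L, hL⟩ := LinearMap.exists_leftInverse_of_injective ev hker
  refine ⟨fun s => (L (Pi.single s 1)).1, fun s => (L _).2, fun h hh z => ?_⟩
  have e1 : L (ev ⟨h, hh⟩) = ⟨h, hh⟩ := LinearMap.congr_fun hL ⟨h, hh⟩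
  have e2 : ev ⟨h, hh⟩ = ∑ s : S, h s • (Pi.single s (1 : ℂ) : S → ℂ) := by
    funext t
    simp [ev, Finset.sum_apply, Pi.single_apply]
  rw [e2, map_sum] at e1
  have e3 := congrArg (fun f : V => f.1 z) e1
  simp only [map_smul] at e3
  rw [← e3]
  simp [Finset.sum_apply]

theorem two_mul_im_pos {τ : ℂ} (hτ : 0 < τ.im) : 0 < (2 * τ).im := by
  simpa using hτ

theorem th4_zero_eq_jacobiTheta (τ : ℂ) : th4 0 τ = jacobiTheta (τ + 1) := by
  rw [th4, jacobiTheta]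
  refine tsum_congr fun n => ?_
  rw [int_zpow_neg_one_eq_exp, ← Complex.exp_add]
  have : (n : ℂ) * (Real.pi * I) + (Real.pi * I * τ * n ^ 2 + 2 * n * I * 0)
      = Real.pi * I * n ^ 2 * (τ + 1) - ((n * (n - 1) / 2 : ℤ) : ℂ) * (2 * Real.pi * I) := by
    have h2 : (2 : ℤ) ∣ n * (n - 1) := (Int.even_mul_pred_self n).two_dvd
    rw [Int.cast_div h2 (by norm_num)]
    push_cast; ring
  rw [this, Complex.exp_sub, Complex.exp_int_mul_two_pi_mul_I, div_one]

theorem th4_zero_ne_zero {τ : ℂ} (hτ : 0 < τ.im) : th4 0 τ ≠ 0 := by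
  intro h0
  have step : ∀ k : ℕ, 0 < (2 ^ k * τ).im ∧ th4 0 (2 ^ k * τ) = 0 := by
    intro k
    induction k with
    | zero => simpa using ⟨hτ, h0⟩
    | succ k ih =>
      have e : (2 : ℂ) ^ (k + 1) * τ = 2 * (2 ^ k * τ) := by ring
      refine ⟨by rw [e]; exact two_mul_im_pos ih.1, ?_⟩
      have := th3_mul_th4 0 0 ih.1
      rw [ih.2] at this
      simp only [mul_zero, add_zero, sub_zero, th1_zero] at this
      rw [e]
      exact mul_self_eq_zero.1 this.symm
  obtain ⟨k, hk⟩ := pow_unbounded_of_one_lt (1 / τ.im) (show (1 : ℝ) < 2 by norm_num)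
  have him : ((2 : ℂ) ^ k * τ).im = 2 ^ k * τ.im := by
    have : ((2 : ℂ) ^ k) = ((2 ^ k : ℝ) : ℂ) := by push_cast; rfl
    rw [this, Complex.im_ofReal_mul]
  have h1 : 1 < ((2 : ℂ) ^ k * τ + 1).im := by
    rw [Complex.add_im, him, Complex.one_im, add_zero]
    rwa [div_lt_iff₀ hτ] at hk
  have hb := norm_jacobiTheta_sub_one_le (τ := (2 : ℂ) ^ k * τ + 1) (by linarith)
  rw [← th4_zero_eq_jacobiTheta, (step k).2] at hb
  have hE : Real.exp (-Real.pi * ((2 : ℂ) ^ k * τ + 1).im) < 1 / 4 := by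
    have hpi := Real.pi_gt_three
    have h4 : (4 : ℝ) < Real.exp (Real.pi * ((2 : ℂ) ^ k * τ + 1).im) := by
      have := Real.add_one_le_exp (Real.pi * ((2 : ℂ) ^ k * τ + 1).im)
      nlinarith
    rw [neg_mul, Real.exp_neg, one_div]
    exact inv_strictAnti₀ (by norm_num) h4
  set e := Real.exp (-Real.pi * ((2 : ℂ) ^ k * τ + 1).im)
  have he : 0 < e := Real.exp_pos _
  simp only [zero_sub, norm_neg, norm_one] at hb
  rw [div_mul_eq_mul_div, le_div_iff₀ (by linarith)] at hb
  linarith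

theorem exists_th1_ne_zero {τ : ℂ} (hτ : 0 < τ.im) : ∃ z, th1 z τ ≠ 0 := by
  refine ⟨0 + Real.pi * (τ / 2), ?_⟩
  have := th1_add_half 0 (τ / 2)
  rw [mul_div_cancel₀ τ two_ne_zero] at this
  rw [this]
  exact mul_ne_zero (mul_ne_zero I_ne_zero (Complex.exp_ne_zero _)) (th4_zero_ne_zero hτ)

theorem exists_th2_ne_zero {τ : ℂ} (hτ : 0 < τ.im) : ∃ z, th2 z τ ≠ 0 := by
  obtain ⟨z, hz⟩ := exists_th1_ne_zero hτ
  exact ⟨z - Real.pi / 2, by rw [th2_eq_th1]; simpa using hz⟩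

theorem th1_eq_zero_iff_forall {τ : ℂ} (hτ : 0 < τ.im) (l : ℂ) :
    th1 l τ = 0 ↔
      ∀ y, th1 (y + 2 * l) (2 * τ) * th4 y (2 * τ) = th4 (y + 2 * l) (2 * τ) * th1 y (2 * τ) := by
  have key : ∀ y, th1 l τ * th2 (y + l) τ
      = th1 (y + 2 * l) (2 * τ) * th4 y (2 * τ) - th4 (y + 2 * l) (2 * τ) * th1 y (2 * τ) := by
    intro y
    rw [th1_mul_th2 _ _ hτ, show l + (y + l) = y + 2 * l by ring, show l - (y + l) = -y by ring,
      th4_neg, th1_neg]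
    ring
  constructor
  · intro h y
    rw [← sub_eq_zero, ← key, h, zero_mul]
  · intro h
    obtain ⟨z, hz⟩ := exists_th2_ne_zero hτ
    have := key (z - l)
    rw [h, sub_self, sub_add_cancel] at this
    exact (mul_eq_zero.1 this).resolve_right hz

theorem th1_add_eq_zero {τ : ℂ} (hτ : 0 < τ.im) {l m : ℂ} (hl : th1 l τ = 0) (hm : th1 m τ = 0) :
    th1 (l + m) τ = 0 := by
  rw [th1_eq_zero_iff_forall hτ] at hl hm ⊢
  have hd4 := differentiable_th4 (two_mul_im_pos hτ)
  have hd1 := differentiable_th1 (two_mul_im_pos hτ)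
  have hsh : ∀ c : ℂ, Differentiable ℂ fun y : ℂ => y + c := fun c => by fun_prop
  refine Differentiable.mul_left_cancel_entire (f := fun y => th4 (y + 2 * l) (2 * τ))
    (z₀ := -(2 * l)) (hd4.comp (hsh _)) ((hd1.comp (hsh _)).mul hd4)
    ((hd4.comp (hsh _)).mul hd1) (by
      simpa using th4_zero_ne_zero (two_mul_im_pos hτ)) fun y => ?_
  have e1 := hl y
  have e2 := hm (y + 2 * l)
  rw [show y + 2 * l + 2 * m = y + 2 * (l + m) by ring] at e2
  linear_combination th4 y (2 * τ) * e2 + th4 (y + 2 * (l + m)) (2 * τ) * e1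

theorem deriv_th1_ne_zero {τ : ℂ} (hτ : 0 < τ.im) {l : ℂ} (hl : th1 l τ = 0) :
    deriv (fun z => th1 z τ) l ≠ 0 := by
  intro hl'
  have hτ2 := two_mul_im_pos hτ
  have hd4 := differentiable_th4 hτ2
  have hd1 := differentiable_th1 hτ2
  have hs := (th1_eq_zero_iff_forall hτ l).1 hl
  set a := fun z => th1 z (2 * τ) with ha
  set b := fun z => th4 z (2 * τ) with hb
  have da : ∀ z, HasDerivAt a (deriv a z) z := fun z => (hd1 z).hasDerivAt
  have db : ∀ z, HasDerivAt b (deriv b z) z := fun z => (hd4 z).hasDerivAt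
  have hodd : ∀ z, deriv a (-z) = deriv a z := by
    intro z
    have h1 : (fun z => a (-z)) = fun z => -a z := by funext z; exact th1_neg z _
    have h2 : deriv (fun z => a (-z)) z = -deriv a (-z) := deriv_comp_neg a z
    rw [h1, deriv.fun_neg] at h2
    linear_combination h2
  have heven : ∀ z, deriv b (-z) = -deriv b z := by
    intro z
    have h1 : (fun z => b (-z)) = b := by funext z; exact th4_neg z _
    have h2 : deriv (fun z => b (-z)) z = -deriv b (-z) := deriv_comp_neg b z
    rw [h1] at h2
    linear_combination h2
  have hs2 : ∀ y, deriv a (y + 2 * l) * b y + a (y + 2 * l) * deriv b y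
      = deriv b (y + 2 * l) * a y + b (y + 2 * l) * deriv a y := by
    intro y
    have h1 : HasDerivAt (fun y => a (y + 2 * l) * b y) _ y :=
      ((da (y + 2 * l)).comp_add_const y (2 * l)).mul (db y)
    have h2 : HasDerivAt (fun y => b (y + 2 * l) * a y) _ y :=
      ((db (y + 2 * l)).comp_add_const y (2 * l)).mul (da y)
    have : (fun y => a (y + 2 * l) * b y) = fun y => b (y + 2 * l) * a y := funext hs
    rw [this] at h1
    exact h1.unique h2
  have hs3 : ∀ y, deriv a (y + 2 * l) * b y - a (y + 2 * l) * deriv b y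
      - deriv b (y + 2 * l) * a y + b (y + 2 * l) * deriv a y = 0 := by
    intro y
    set v := y + l with hv
    have h1 : HasDerivAt (fun u => a (u + v) * b (u - v) + b (u + v) * a (u - v)) _ l :=
      (((da (l + v)).comp_add_const l v).mul ((db (l - v)).comp_sub_const l v)).add
        (((db (l + v)).comp_add_const l v).mul ((da (l - v)).comp_sub_const l v))
    have h2 : HasDerivAt (fun u => th1 u τ * th2 v τ) _ l :=
      ((differentiable_th1 hτ l).hasDerivAt).mul_const (th2 v τ)
    have : (fun u => th1 u τ * th2 v τ) = fun u => a (u + v) * b (u - v) + b (u + v) * a (u - v) :=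
      funext fun u => th1_mul_th2 u v hτ
    rw [this] at h2
    have h3 := h1.unique h2
    have e1 : l + v = y + 2 * l := by rw [hv]; ring
    have e2 : l - v = -y := by rw [hv]; ring
    have e3 : a (-y) = -a y := th1_neg y _
    have e4 : b (-y) = b y := th4_neg y _
    rw [hl', zero_mul, e1, e2, hodd, heven, e3, e4] at h3
    linear_combination h3
  have hW : ∀ y, b y * deriv a y = a y * deriv b y := by
    have dda : Differentiable ℂ (deriv a) := hd1.deriv
    have ddb : Differentiable ℂ (deriv b) := hd4.deriv
    refine Differentiable.mul_left_cancel_entire (f := fun y => b (y + 2 * l))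
      (z₀ := -(2 * l)) (hd4.comp (by fun_prop)) (hd4.mul dda) (hd1.mul ddb) (by
        simpa using th4_zero_ne_zero hτ2) fun y => ?_
    have := hs y
    change a (y + 2 * l) * b y = b (y + 2 * l) * a y at this
    linear_combination (1 / 2) * b y * (hs3 y - hs2 y) + deriv b y * this
  have hb0 : b 0 ≠ 0 := th4_zero_ne_zero hτ2
  have hne : ∀ᶠ z in nhds (0 : ℂ), b z ≠ 0 := hd4.continuous.continuousAt.eventually_ne hb0
  obtain ⟨ε, hε, hball⟩ := Metric.eventually_nhds_iff_ball.1 hne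
  have hconst : ∀ z ∈ Metric.ball (0 : ℂ) ε, a z / b z = a 0 / b 0 := by
    intro z hz
    refine Metric.isOpen_ball.is_const_of_deriv_eq_zero (f := fun z => a z / b z)
      (convex_ball (0 : ℂ) ε).isPreconnected (fun w hw => ?_) (fun w hw => ?_) hz
      (Metric.mem_ball_self hε)
    · exact ((hd1 w).div (hd4 w) (hball w hw)).differentiableWithinAt
    · have := ((da w).div (db w) (hball w hw)).deriv
      change deriv (a / b) w = 0
      rw [this]
      rw [div_eq_zero_iff]; left
      linear_combination hW w
  have ha0 : ∀ᶠ z in nhds (0 : ℂ), a z = 0 := by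
    filter_upwards [Metric.ball_mem_nhds (0 : ℂ) hε] with z hz
    have := hconst z hz
    rw [show a 0 = 0 from th1_zero _, zero_div, div_eq_zero_iff] at this
    exact this.resolve_right (hball z hz)
  have hall : a = 0 := AnalyticOnNhd.eq_of_eventuallyEq (fun z _ => hd1.analyticAt z)
    (fun z _ => analyticAt_const) (z₀ := 0) ha0
  obtain ⟨z, hz⟩ := exists_th1_ne_zero hτ2
  exact hz (congrFun hall z)

theorem eq_zero_add_int_lattice {f : ℂ → ℂ} {ω₁ ω₂ : ℂ} (h₁ : ∀ z, f (z + ω₁) = 0 ↔ f z = 0)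
    (h₂ : ∀ z, f (z + ω₂) = 0 ↔ f z = 0) {z : ℂ} (h : f z = 0) (m n : ℤ) :
    f (z + m * ω₁ + n * ω₂) = 0 := by
  have p₁ : Function.Periodic (fun z => f z = 0) ω₁ := fun z => propext (h₁ z)
  have p₂ : Function.Periodic (fun z => f z = 0) ω₂ := fun z => propext (h₂ z)
  have e₁ := (p₁.zsmul m) z
  have e₂ := (p₂.zsmul n) (z + m * ω₁)
  simp only [zsmul_eq_mul] at e₁ e₂
  rw [e₂, e₁]; exact h

theorem th1_add_int_lattice (z τ : ℂ) (m n : ℤ) (h : th1 z τ = 0) :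
    th1 (z + m * Real.pi + n * (Real.pi * τ)) τ = 0 :=
  eq_zero_add_int_lattice (f := fun z => th1 z τ) (fun z => by simp [th1_add_pi])
    (fun z => by simp [th1_add_pi_mul, Complex.exp_ne_zero]) h m n

theorem exists_int_of_exp_eq_one {a : ℝ} (h : Complex.exp (-2 * I * (a * Real.pi)) = 1) :
    ∃ m : ℤ, a = m := by
  rw [Complex.exp_eq_one_iff] at h
  obtain ⟨n, hn⟩ := h
  refine ⟨-n, ?_⟩
  have hpi : (Real.pi : ℂ) ≠ 0 := by exact_mod_cast Real.pi_ne_zero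
  have h2 : (2 * Real.pi * I : ℂ) ≠ 0 := by simp [hpi]
  have : ((a : ℂ)) = ((-n : ℤ) : ℂ) := by
    have h3 : (2 * Real.pi * I : ℂ) * a = (2 * Real.pi * I) * ((-n : ℤ) : ℂ) := by
      push_cast; linear_combination -hn
    exact mul_left_cancel₀ h2 h3
  exact_mod_cast this

/-- The zeros of `ϑ₁` are exactly the points of the period lattice. -/
theorem exists_of_th1_eq_zero {τ : ℂ} (hτ : 0 < τ.im) {z₀ : ℂ} (h : th1 z₀ τ = 0) :
    ∃ m n : ℤ, z₀ = m * Real.pi + n * (Real.pi * τ) := by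
  have hd1 := differentiable_th1 hτ
  have hpi : (0 : ℝ) < Real.pi := Real.pi_pos
  have hpi' : (Real.pi : ℂ) ≠ 0 := by exact_mod_cast hpi.ne'
  set b : ℝ := z₀.im / (Real.pi * τ.im) with hb
  set a : ℝ := (z₀.re - b * Real.pi * τ.re) / Real.pi with ha
  have hz : z₀ = a * Real.pi + b * (Real.pi * τ) := by
    apply Complex.ext
    · simp [ha]; field_simp; ring
    · have : (a * Real.pi + b * (Real.pi * τ) : ℂ).im = b * (Real.pi * τ.im) := by simp
      rw [this, hb]; field_simp
  obtain ⟨F, hF, hFe⟩ := exists_entire_quotient (f := fun z => th1 (z + z₀) τ)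
    (g := fun z => th1 z τ) (hd1.comp (by fun_prop)) hd1
    (fun z hz => ⟨th1_add_eq_zero hτ hz h, deriv_th1_ne_zero hτ hz⟩)
  obtain ⟨w₀, hw₀⟩ := exists_th1_ne_zero hτ
  have hF₁ : ∀ z, F (z + Real.pi) = F z := by
    refine Differentiable.mul_left_cancel_entire hd1 (hF.comp (by fun_prop)) hF hw₀ fun z => ?_
    have e1 := hFe (z + Real.pi)
    have e2 := hFe z
    rw [add_right_comm, th1_add_pi, th1_add_pi] at e1
    linear_combination e2 + e1
  have hF₂ : ∀ z, F (z + Real.pi * τ) = Complex.exp (-2 * I * z₀) * F z := by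
    refine Differentiable.mul_left_cancel_entire hd1 (hF.comp (by fun_prop))
      (hF.const_mul _) hw₀ fun z => ?_
    have e1 := hFe (z + Real.pi * τ)
    have e2 := hFe z
    rw [add_right_comm, th1_add_pi_mul, th1_add_pi_mul, e2,
      show -I * (Real.pi * τ + 2 * (z + z₀)) = -I * (Real.pi * τ + 2 * z) + -2 * I * z₀ by ring,
      Complex.exp_add] at e1
    have hne := Complex.exp_ne_zero (-I * (Real.pi * τ + 2 * z))
    refine mul_left_cancel₀ hne ?_
    linear_combination e1
  set E : ℂ → ℂ := fun z => F z * Complex.exp (2 * I * b * z) with hE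
  have hEd : Differentiable ℂ E := hF.mul (by fun_prop)
  have hconst : ∀ z w, E z = E w := by
    refine eq_of_norm_doubly_periodic hτ hpi hEd (fun z => ?_) (fun z => ?_)
    · simp only [hE, hF₁, norm_mul, Complex.norm_exp]
      congr 2; simp
    · simp only [hE, hF₂, norm_mul, Complex.norm_exp]
      rw [mul_right_comm, ← Real.exp_add, mul_comm]
      congr 2
      conv_lhs => rw [hz]
      simp
      ring
  have hE0 : ∀ z, E z ≠ 0 := by
    intro z hz0
    have : ∀ w, F w = 0 := fun w => by
      have := (hconst w z).trans hz0
      exact (mul_eq_zero.1 this).resolve_right (Complex.exp_ne_zero _)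
    have h1 := hFe (w₀ - z₀)
    simp only [this, mul_zero, sub_add_cancel] at h1
    exact hw₀ h1
  have hb1 : Complex.exp (-2 * I * (b * Real.pi)) = 1 := by
    have := hconst 0 (0 + Real.pi)
    simp only [hE, hF₁] at this
    have hne : F 0 ≠ 0 := fun h => hE0 0 (by simp [hE, h])
    have := mul_left_cancel₀ hne this
    simp only [mul_zero, Complex.exp_zero, zero_add] at this
    rw [show -2 * I * (b * Real.pi) = -(2 * I * b * Real.pi) by ring, Complex.exp_neg, ← this,
      inv_one]
  have ha1 : Complex.exp (-2 * I * (a * Real.pi)) = 1 := by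
    have := hconst 0 (0 + Real.pi * τ)
    simp only [hE, hF₂] at this
    have hne : F 0 ≠ 0 := fun h => hE0 0 (by simp [hE, h])
    rw [mul_comm (Complex.exp (-2 * I * z₀)) (F 0), mul_assoc (F 0), ← Complex.exp_add] at this
    have := mul_left_cancel₀ hne this
    simp only [mul_zero, Complex.exp_zero, zero_add] at this
    rw [this]; congr 1
    conv_rhs => rw [hz]
    ring
  obtain ⟨m, hm⟩ := exists_int_of_exp_eq_one ha1
  obtain ⟨n, hn⟩ := exists_int_of_exp_eq_one hb1
  exact ⟨m, n, by rw [hz, hm, hn]; simp⟩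

theorem th1_real_mul_pi_ne_zero {τ : ℂ} (hτ : 0 < τ.im) {q : ℝ} (hq : ∀ m : ℤ, q ≠ m) :
    th1 (q * Real.pi) τ ≠ 0 := by
  intro h
  obtain ⟨m, n, hmn⟩ := exists_of_th1_eq_zero hτ h
  have him := congrArg Complex.im hmn
  have hre := congrArg Complex.re hmn
  simp at him hre
  rcases him with hn | hn
  · rw [hn] at hre
    simp [Real.pi_ne_zero] at hre
    exact hq m hre
  · exact hτ.ne' hn

theorem th4_eq_zero_iff (z τ : ℂ) : th4 z (2 * τ) = 0 ↔ th1 (z - Real.pi * τ) (2 * τ) = 0 := by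
  have := th4_add_half (z - Real.pi * τ) τ
  rw [sub_add_cancel] at this
  rw [this]; simp [Complex.exp_ne_zero]

theorem deriv_th4_ne_zero {τ : ℂ} (hτ : 0 < τ.im) {l : ℂ} (hl : th4 l (2 * τ) = 0) :
    deriv (fun z => th4 z (2 * τ)) l ≠ 0 := by
  have hl' := (th4_eq_zero_iff l τ).1 hl
  have hτ2 := two_mul_im_pos hτ
  have h1 := deriv_th1_ne_zero hτ2 hl'
  set e : ℂ → ℂ := fun z => I * Complex.exp (-I * (Real.pi * τ / 2 + (z - Real.pi * τ))) with he
  have hE : (fun z => th4 z (2 * τ)) = fun z => e z * th1 (z - Real.pi * τ) (2 * τ) := by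
    funext z
    have := th4_add_half (z - Real.pi * τ) τ
    rw [sub_add_cancel] at this
    exact this
  have hed : HasDerivAt e (deriv e l) l := by
    have : Differentiable ℂ e := by fun_prop
    exact (this l).hasDerivAt
  have hd := hed.mul ((differentiable_th1 hτ2 (l - Real.pi * τ)).hasDerivAt.comp_sub_const
    l (Real.pi * τ))
  rw [hE]
  change deriv (e * fun x => th1 (x - Real.pi * τ) (2 * τ)) l ≠ 0
  rw [hd.deriv, hl', mul_zero, zero_add]
  exact mul_ne_zero (mul_ne_zero I_ne_zero (Complex.exp_ne_zero _)) h1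

theorem th1_pi_sub (z τ : ℂ) : th1 (Real.pi - z) τ = th1 z τ := by
  rw [show (Real.pi : ℂ) - z = -z + Real.pi by ring, th1_add_pi, th1_neg, neg_neg]

theorem th4_pi_sub (z τ : ℂ) : th4 (Real.pi - z) τ = th4 z τ := by
  rw [show (Real.pi : ℂ) - z = -z + Real.pi by ring, th4_add_pi, th4_neg]

theorem three_mul_ηc : 3 * ηc = Real.pi := by rw [ηc]; ring

theorem th1_mul_ηc_ne_zero {τ : ℂ} (hτ : 0 < τ.im) {k : ℤ} (hk : ¬ (3 : ℤ) ∣ k) :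
    th1 (k * ηc) τ ≠ 0 := by
  have := th1_real_mul_pi_ne_zero hτ (q := k / 3) (fun m hm => hk ⟨m, by
    have h3 : (k : ℝ) = 3 * m := by rw [← hm]; ring
    exact_mod_cast h3⟩)
  have e : ((k / 3 : ℝ) : ℂ) * Real.pi = k * ηc := by rw [ηc]; push_cast; ring
  rwa [e] at this

theorem th1_ηc_ne_zero {τ : ℂ} (hτ : 0 < τ.im) : th1 ηc τ ≠ 0 := by
  simpa using th1_mul_ηc_ne_zero hτ (k := 1) (by norm_num)

theorem th1_two_ηc_ne_zero {τ : ℂ} (hτ : 0 < τ.im) : th1 (2 * ηc) τ ≠ 0 := by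
  simpa using th1_mul_ηc_ne_zero hτ (k := 2) (by norm_num)

theorem th1_four_ηc_ne_zero {τ : ℂ} (hτ : 0 < τ.im) : th1 (4 * ηc) τ ≠ 0 := by
  simpa using th1_mul_ηc_ne_zero hτ (k := 4) (by norm_num)

/-- Factorised form of the weight `r(u) = a(u) + b(u)`. -/
theorem rv_eq {τ : ℂ} (hτ : 0 < τ.im) (u : ℂ) :
    rv τ u = th4 0 (2 * τ) * th1 (u + ηc) (2 * τ) * th4 (u + ηc) (2 * τ) := by
  have d1 := th1_mul_th2 (2 * ηc) 0 hτ
  have d2 := th1_mul_th2 ηc ηc hτ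
  have d3 := th1_mul_th2 (u + ηc) ηc hτ
  have d4 := th1_mul_th2 (u + ηc) 0 hτ
  rw [show th1 (2 * ηc) τ = th1 ηc τ by
    rw [← th1_pi_sub ηc, ← three_mul_ηc]; congr 1; ring] at d1
  simp only [add_zero, sub_zero, sub_self, th1_zero, mul_zero] at d1 d2 d4
  rw [show u + ηc + ηc = u + 2 * ηc by ring, show u + ηc - ηc = u by ring] at d3
  rw [show ηc + ηc = 2 * ηc by ring] at d2
  have h := th1_ηc_ne_zero hτ
  refine mul_left_cancel₀ h ?_
  simp only [rv, av, bv]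
  linear_combination th4 (2 * ηc) (2 * τ) * th1 (u + ηc) τ * d2
    - th1 ηc τ * th4 (2 * ηc) (2 * τ) * d3 - (1 / 2) * th4 0 (2 * τ) * th1 (u + ηc) τ * d1
    + (1 / 2) * th1 ηc τ * th4 0 (2 * τ) * d4

theorem rv_neg_two_mul {τ : ℂ} (hτ : 0 < τ.im) (x : ℂ) :
    rv τ (-2 * x) = th4 0 (2 * τ) * th1 (2 * (ηc + x)) (2 * τ) * th4 (2 * (ηc + x)) (2 * τ) := by
  rw [rv_eq hτ, ← th1_pi_sub (-2 * x + ηc), ← th4_pi_sub (-2 * x + ηc), ← three_mul_ηc]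
  congr 2
  · congr 2; ring
  · ring

theorem differentiable_rv {τ : ℂ} (hτ : 0 < τ.im) : Differentiable ℂ (rv τ) := by
  have h1 := differentiable_th1 (two_mul_im_pos hτ)
  have h4 := differentiable_th4 (two_mul_im_pos hτ)
  have hs : ∀ c : ℂ, Differentiable ℂ fun u : ℂ => u + c := fun c => by fun_prop
  have : rv τ = fun u => th4 0 (2 * τ) * th1 (u + ηc) (2 * τ) * th4 (u + ηc) (2 * τ) :=
    funext (rv_eq hτ)
  rw [this]
  exact ((h1.comp (hs _)).const_mul _).mul (h4.comp (hs _))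

theorem exists_rv_ne_zero {τ : ℂ} (hτ : 0 < τ.im) : ∃ u, rv τ u ≠ 0 := by
  have hτ2 := two_mul_im_pos hτ
  by_contra! h
  rcases (differentiable_th1 hτ2).eq_zero_or_eq_zero_of_mul (differentiable_th4 hτ2)
    (fun z => by
      have := h (z - ηc)
      rw [rv_eq hτ, sub_add_cancel, mul_assoc] at this
      exact (mul_eq_zero.1 this).resolve_left (th4_zero_ne_zero hτ2)) with h0 | h0
  · obtain ⟨z, hz⟩ := exists_th1_ne_zero hτ2
    exact hz (h0 z)
  · exact th4_zero_ne_zero hτ2 (h0 0)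

/-- The sign attached to a spin by `σ^z`. -/
def spinSign (s : Fin 2) : ℂ := if s = 0 then 1 else -1

/-- The action of `Ř(u)` on a vector of `ℂ² ⊗ ℂ²`. -/
def pairRc (τ u : ℂ) (K : Fin 2 → Fin 2 → ℂ) (a b : Fin 2) : ℂ :=
  ∑ s : Fin 2, ∑ t : Fin 2, Rcheckent τ u (a, b) (s, t) * K s t

/-- The properties of the boundary vectors `χ` and `χ̄` which enter the proof. The weight `r(-2x)`
is proportional to `G x`, and `G` also governs the reflection property. -/
structure IsBoundaryKernel (τ : ℂ) (k : ℂ → Fin 2 → Fin 2 → ℂ) (G : ℂ → ℂ) : Prop where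
  differentiable : ∀ a b, Differentiable ℂ fun z => k z a b
  add_pi : ∀ z a b, k (z + Real.pi) a b * (spinSign a * spinSign b) = k z a b
  add_pi_mul : ∀ z a b, k (z + Real.pi * τ) (flipS a) (flipS b)
    = -Complex.exp (-I * (Real.pi * τ + 2 * z - 2 * ηc)) * k z a b
  reflection : ∃ c : ℂ → ℂ, Differentiable ℂ c ∧ (∃ z, c z ≠ 0) ∧
    ∀ x, rv τ (-2 * x) = c x * G x ∧
      ∀ a b, pairRc τ (-2 * x) (k (-x)) a b = c x * G (-x) * k x a b
  exchange : ∀ x₁ x₂ a b c d,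
    (∑ s : Fin 2, ∑ t : Fin 2, Rcheckent τ (x₂ - x₁) (a, b) (s, t) *
      ∑ s' : Fin 2, ∑ t' : Fin 2, Rcheckent τ (-x₂ - x₁) (t, c) (s', t') *
        (k x₂ s s' * k x₁ t' d))
    = ∑ s : Fin 2, ∑ t : Fin 2, Rcheckent τ (x₂ - x₁) (c, d) (s, t) *
      ∑ s' : Fin 2, ∑ t' : Fin 2, Rcheckent τ (-x₂ - x₁) (b, s) (s', t') *
        (k x₁ a s' * k x₂ t' t)

theorem Differentiable.th1_comp {τ : ℂ} (hτ : 0 < τ.im) {f : ℂ → ℂ} (hf : Differentiable ℂ f) :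
    Differentiable ℂ fun z => th1 (f z) τ :=
  (differentiable_th1 hτ).comp hf

theorem Differentiable.th4_comp {τ : ℂ} (hτ : 0 < τ.im) {f : ℂ → ℂ} (hf : Differentiable ℂ f) :
    Differentiable ℂ fun z => th4 (f z) τ :=
  (differentiable_th4 hτ).comp hf

theorem exists_th1_two_mul_ne_zero {τ : ℂ} (hτ : 0 < τ.im) :
    ∃ z, th1 (2 * (ηc + z)) (2 * τ) ≠ 0 := by
  obtain ⟨z, hz⟩ := exists_th1_ne_zero (two_mul_im_pos hτ)
  exact ⟨z / 2 - ηc, by convert hz using 2; ring⟩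

theorem exists_th4_two_mul_ne_zero {τ : ℂ} (hτ : 0 < τ.im) :
    ∃ z, th4 (2 * (ηc + z)) (2 * τ) ≠ 0 :=
  ⟨-ηc, by simpa using th4_zero_ne_zero (two_mul_im_pos hτ)⟩

theorem chi_add {τ : ℂ} (hτ : 0 < τ.im) (lam x : ℂ) :
    th1 (x + lam) (2*τ) * th4 (x - lam - 2*ηc) (2*τ)
      + th1 (x - lam - 2*ηc) (2*τ) * th4 (x + lam) (2*τ)
      = th1 (x - ηc) τ * th2 (lam + ηc) τ := by
  rw [th1_mul_th2 _ _ hτ, show x - ηc + (lam + ηc) = x + lam by ring,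
    show x - ηc - (lam + ηc) = x - lam - 2 * ηc by ring]
  ring

theorem chi_sub {τ : ℂ} (hτ : 0 < τ.im) (lam x : ℂ) :
    th1 (x + lam) (2*τ) * th4 (x - lam - 2*ηc) (2*τ)
      - th1 (x - lam - 2*ηc) (2*τ) * th4 (x + lam) (2*τ)
      = th1 (lam + ηc) τ * th2 (x - ηc) τ := by
  rw [th1_mul_th2 _ _ hτ, show lam + ηc + (x - ηc) = x + lam by ring,
    show lam + ηc - (x - ηc) = -(x - lam - 2 * ηc) by ring, th1_neg, th4_neg]
  ring

theorem chibar_add {τ : ℂ} (hτ : 0 < τ.im) (lam x : ℂ) :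
    th1 (x + lam) (2*τ) * th1 (x - lam - 2*ηc) (2*τ)
      + th4 (x - lam - 2*ηc) (2*τ) * th4 (x + lam) (2*τ)
      = th3 (lam + ηc) τ * th4 (x - ηc) τ := by
  rw [th3_mul_th4 _ _ hτ, show lam + ηc + (x - ηc) = x + lam by ring,
    show lam + ηc - (x - ηc) = -(x - lam - 2 * ηc) by ring, th1_neg, th4_neg]
  ring

theorem chibar_sub {τ : ℂ} (hτ : 0 < τ.im) (lam x : ℂ) :
    th4 (x - lam - 2*ηc) (2*τ) * th4 (x + lam) (2*τ)
      - th1 (x + lam) (2*τ) * th1 (x - lam - 2*ηc) (2*τ)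
      = th3 (x - ηc) τ * th4 (lam + ηc) τ := by
  rw [th3_mul_th4 _ _ hτ, show x - ηc + (lam + ηc) = x + lam by ring,
    show x - ηc - (lam + ηc) = x - lam - 2 * ηc by ring]
  ring

theorem cv_add_bv {τ : ℂ} (hτ : 0 < τ.im) (x : ℂ) :
    cv τ (-2 * x) + bv τ (-2 * x)
      = th4 (2 * (ηc + -x)) (2 * τ) * (th1 (ηc - x) τ * th2 (ηc + x) τ) := by
  rw [th1_mul_th2 _ _ hτ, show ηc - x + (ηc + x) = 2 * ηc by ring,
    show ηc - x - (ηc + x) = -2 * x by ring, cv, bv,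
    show -2 * x + 2 * ηc = 2 * (ηc + -x) by ring]
  ring

theorem cv_sub_bv {τ : ℂ} (hτ : 0 < τ.im) (x : ℂ) :
    cv τ (-2 * x) - bv τ (-2 * x)
      = th4 (2 * (ηc + -x)) (2 * τ) * (th1 (ηc + x) τ * th2 (ηc - x) τ) := by
  rw [th1_mul_th2 _ _ hτ, show ηc + x + (ηc - x) = 2 * ηc by ring,
    show ηc + x - (ηc - x) = -(-2 * x) by ring, cv, bv, th1_neg, th4_neg,
    show -2 * x + 2 * ηc = 2 * (ηc + -x) by ring]
  ring

theorem av_add_dv {τ : ℂ} (hτ : 0 < τ.im) (x : ℂ) :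
    av τ (-2 * x) + dv τ (-2 * x)
      = th1 (2 * (ηc + -x)) (2 * τ) * (th3 (ηc + x) τ * th4 (ηc - x) τ) := by
  rw [th3_mul_th4 _ _ hτ, show ηc + x + (ηc - x) = 2 * ηc by ring,
    show ηc + x - (ηc - x) = -(-2 * x) by ring, av, dv, th1_neg, th4_neg,
    show -2 * x + 2 * ηc = 2 * (ηc + -x) by ring]
  ring

theorem av_sub_dv {τ : ℂ} (hτ : 0 < τ.im) (x : ℂ) :
    av τ (-2 * x) - dv τ (-2 * x)
      = th1 (2 * (ηc + -x)) (2 * τ) * (th3 (ηc - x) τ * th4 (ηc + x) τ) := by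
  rw [th3_mul_th4 _ _ hτ, show ηc - x + (ηc + x) = 2 * ηc by ring,
    show ηc - x - (ηc + x) = -2 * x by ring, av, dv,
    show -2 * x + 2 * ηc = 2 * (ηc + -x) by ring]
  ring

theorem chi_det {τ : ℂ} (hτ : 0 < τ.im) (lam x₁ x₂ : ℂ) :
    chiC τ lam x₂ 0 1 * chiC τ lam x₁ 1 0 - chiC τ lam x₁ 0 1 * chiC τ lam x₂ 1 0
      = -(th1 (lam + ηc) τ * th2 (lam + ηc) τ) *
        (th4 (-x₂ - x₁ + 2 * ηc) (2 * τ) * th1 (x₂ - x₁) (2 * τ)) ∧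
    chiC τ lam x₁ 0 1 * chiC τ lam x₂ 0 1 - chiC τ lam x₁ 1 0 * chiC τ lam x₂ 1 0
      = -(th1 (lam + ηc) τ * th2 (lam + ηc) τ) *
        (th1 (-x₂ - x₁ + 2 * ηc) (2 * τ) * th4 (x₂ - x₁) (2 * τ)) := by
  have p₁ := chi_add hτ lam x₁
  have p₂ := chi_add hτ lam x₂
  have m₁ := chi_sub hτ lam x₁
  have m₂ := chi_sub hτ lam x₂
  have d₁ := th1_mul_th2 (x₁ - ηc) (x₂ - ηc) hτ
  have d₂ := th1_mul_th2 (x₂ - ηc) (x₁ - ηc) hτ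
  rw [show x₁ - ηc + (x₂ - ηc) = -(-x₂ - x₁ + 2 * ηc) by ring,
    show x₁ - ηc - (x₂ - ηc) = -(x₂ - x₁) by ring, th1_neg, th1_neg, th4_neg, th4_neg] at d₁
  rw [show x₂ - ηc + (x₁ - ηc) = -(-x₂ - x₁ + 2 * ηc) by ring,
    show x₂ - ηc - (x₁ - ηc) = x₂ - x₁ by ring, th1_neg, th4_neg] at d₂
  simp only [chiC]
  norm_num
  set f₁ := th1 (x₁ + lam) (2*τ) * th4 (x₁ - lam - 2*ηc) (2*τ)
  set g₁ := th1 (x₁ - lam - 2*ηc) (2*τ) * th4 (x₁ + lam) (2*τ)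
  set f₂ := th1 (x₂ + lam) (2*τ) * th4 (x₂ - lam - 2*ηc) (2*τ)
  set g₂ := th1 (x₂ - lam - 2*ηc) (2*τ) * th4 (x₂ + lam) (2*τ)
  have hA : f₂ * g₁ - f₁ * g₂ = 1 / 2 * ((f₁ + g₁) * (f₂ - g₂) - (f₂ + g₂) * (f₁ - g₁)) := by ring
  have hB : f₁ * f₂ - g₁ * g₂ = 1 / 2 * ((f₁ + g₁) * (f₂ - g₂) + (f₂ + g₂) * (f₁ - g₁)) := by ring
  rw [hA, hB, p₁, p₂, m₁, m₂]
  constructor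
  · linear_combination (1 / 2) * th1 (lam + ηc) τ * th2 (lam + ηc) τ * (d₁ - d₂)
  · linear_combination (1 / 2) * th1 (lam + ηc) τ * th2 (lam + ηc) τ * (d₁ + d₂)

theorem chibar_det {τ : ℂ} (hτ : 0 < τ.im) (lam x₁ x₂ : ℂ) :
    chibarC τ lam x₂ 0 0 * chibarC τ lam x₁ 1 1 - chibarC τ lam x₁ 0 0 * chibarC τ lam x₂ 1 1
      = -(th3 (lam + ηc) τ * th4 (lam + ηc) τ) *
        (th1 (-x₂ - x₁ + 2 * ηc) (2 * τ) * th1 (x₂ - x₁) (2 * τ)) ∧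
    chibarC τ lam x₁ 0 0 * chibarC τ lam x₂ 0 0 - chibarC τ lam x₁ 1 1 * chibarC τ lam x₂ 1 1
      = -(th3 (lam + ηc) τ * th4 (lam + ηc) τ) *
        (th4 (-x₂ - x₁ + 2 * ηc) (2 * τ) * th4 (x₂ - x₁) (2 * τ)) := by
  have p₁ := chibar_add hτ lam x₁
  have p₂ := chibar_add hτ lam x₂
  have m₁ := chibar_sub hτ lam x₁
  have m₂ := chibar_sub hτ lam x₂
  have d₁ := th3_mul_th4 (x₁ - ηc) (x₂ - ηc) hτ
  have d₂ := th3_mul_th4 (x₂ - ηc) (x₁ - ηc) hτ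
  rw [show x₁ - ηc + (x₂ - ηc) = -(-x₂ - x₁ + 2 * ηc) by ring,
    show x₁ - ηc - (x₂ - ηc) = -(x₂ - x₁) by ring, th1_neg, th1_neg, th4_neg, th4_neg] at d₁
  rw [show x₂ - ηc + (x₁ - ηc) = -(-x₂ - x₁ + 2 * ηc) by ring,
    show x₂ - ηc - (x₁ - ηc) = x₂ - x₁ by ring, th1_neg, th4_neg] at d₂
  simp only [chibarC]
  norm_num
  set f₁ := th1 (x₁ + lam) (2*τ) * th1 (x₁ - lam - 2*ηc) (2*τ)
  set g₁ := th4 (x₁ - lam - 2*ηc) (2*τ) * th4 (x₁ + lam) (2*τ)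
  set f₂ := th1 (x₂ + lam) (2*τ) * th1 (x₂ - lam - 2*ηc) (2*τ)
  set g₂ := th4 (x₂ - lam - 2*ηc) (2*τ) * th4 (x₂ + lam) (2*τ)
  have hA : f₂ * g₁ - f₁ * g₂ = 1 / 2 * ((f₂ + g₂) * (g₁ - f₁) - (f₁ + g₁) * (g₂ - f₂)) := by ring
  have hB : f₁ * f₂ - g₁ * g₂ = -1 / 2 * ((f₂ + g₂) * (g₁ - f₁) + (f₁ + g₁) * (g₂ - f₂)) := by ring
  rw [hA, hB, p₁, p₂, m₁, m₂]
  constructor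
  · linear_combination (1 / 2) * th3 (lam + ηc) τ * th4 (lam + ηc) τ * (d₁ - d₂)
  · linear_combination (-1 / 2) * th3 (lam + ηc) τ * th4 (lam + ηc) τ * (d₁ + d₂)

theorem chiC_zero_one (τ lam x : ℂ) :
    chiC τ lam x 0 1 = th1 (x + lam) (2*τ) * th4 (x - lam - 2*ηc) (2*τ) := by
  simp [chiC]

theorem chiC_one_zero (τ lam x : ℂ) :
    chiC τ lam x 1 0 = th1 (x - lam - 2*ηc) (2*τ) * th4 (x + lam) (2*τ) := by
  simp [chiC]

theorem chibarC_zero_zero (τ lam x : ℂ) :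
    chibarC τ lam x 0 0 = th1 (x + lam) (2*τ) * th1 (x - lam - 2*ηc) (2*τ) := by
  simp [chibarC]

theorem chibarC_one_one (τ lam x : ℂ) :
    chibarC τ lam x 1 1 = th4 (x - lam - 2*ηc) (2*τ) * th4 (x + lam) (2*τ) := by
  simp [chibarC]

theorem isBoundaryKernel_chiC {τ : ℂ} (hτ : 0 < τ.im) (lam : ℂ) :
    IsBoundaryKernel τ (chiC τ lam) fun x => th4 (2 * (ηc + x)) (2 * τ) where
  differentiable a b := by
    have hτ2 := two_mul_im_pos hτ
    unfold chiC
    split_ifs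
    · exact (Differentiable.th1_comp hτ2 (by fun_prop)).mul
        (Differentiable.th4_comp hτ2 (by fun_prop))
    · exact (Differentiable.th1_comp hτ2 (by fun_prop)).mul
        (Differentiable.th4_comp hτ2 (by fun_prop))
    · fun_prop
  add_pi z a b := by
    have e : ∀ c : ℂ, z + Real.pi + c = z + c + Real.pi := fun c => by ring
    have e' : ∀ c : ℂ, z + Real.pi - c = z - c + Real.pi := fun c => by ring
    have e'' : ∀ c d : ℂ, z - c + Real.pi - d = z - c - d + Real.pi := fun c d => by ring
    fin_cases a <;> fin_cases b <;>
      simp [chiC, spinSign, e, e', e'', th1_add_pi, th4_add_pi]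
  add_pi_mul z a b := by
    have e : z + Real.pi * τ + lam = z + lam + Real.pi * τ := by ring
    have e' : z + Real.pi * τ - lam - 2 * ηc = z - lam - 2 * ηc + Real.pi * τ := by ring
    have hI : ∀ u v : ℂ, I * Complex.exp (-I * (Real.pi * τ / 2 + (z - lam - 2 * ηc))) * u *
        (I * Complex.exp (-I * (Real.pi * τ / 2 + (z + lam))) * v)
        = -Complex.exp (-I * (Real.pi * τ + 2 * z - 2 * ηc)) * (u * v) := by
      intro u v
      rw [show -I * (Real.pi * τ + 2 * z - 2 * ηc) = -I * (Real.pi * τ / 2 + (z - lam - 2 * ηc))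
        + -I * (Real.pi * τ / 2 + (z + lam)) by ring, Complex.exp_add]
      linear_combination (Complex.exp (-I * (Real.pi * τ / 2 + (z - lam - 2 * ηc))) *
        Complex.exp (-I * (Real.pi * τ / 2 + (z + lam))) * u * v) * I_mul_I
    have h01 : chiC τ lam (z + Real.pi * τ) 0 1
        = -Complex.exp (-I * (Real.pi * τ + 2 * z - 2 * ηc)) * chiC τ lam z 1 0 := by
      simp only [chiC_zero_one, chiC_one_zero]
      rw [e, e', th1_add_half, th4_add_half, mul_comm (I * _ * _), hI]
    have h10 : chiC τ lam (z + Real.pi * τ) 1 0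
        = -Complex.exp (-I * (Real.pi * τ + 2 * z - 2 * ηc)) * chiC τ lam z 0 1 := by
      simp only [chiC_zero_one, chiC_one_zero]
      rw [e, e', th1_add_half, th4_add_half, hI]
      simp [mul_comm]
    fin_cases a <;> fin_cases b
    · simp [chiC, flipS]
    · exact h10
    · exact h01
    · simp [chiC, flipS]
  reflection := by
    have hτ2 := two_mul_im_pos hτ
    refine ⟨fun x => th4 0 (2 * τ) * th1 (2 * (ηc + x)) (2 * τ),
      (Differentiable.th1_comp hτ2 (by fun_prop)).const_mul _, ?_, fun x => ⟨rv_neg_two_mul hτ x, ?_⟩⟩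
    · obtain ⟨z, hz⟩ := exists_th1_two_mul_ne_zero hτ
      exact ⟨z, mul_ne_zero (th4_zero_ne_zero hτ2) hz⟩
    have hc := cv_add_bv hτ x
    have hc' := cv_sub_bv hτ x
    have p := chi_add hτ lam x
    have m := chi_sub hτ lam x
    have p' := chi_add hτ lam (-x)
    have m' := chi_sub hτ lam (-x)
    have d := th1_mul_th2 (ηc + x) (ηc + x) hτ
    rw [sub_self, th1_zero, show ηc + x + (ηc + x) = 2 * (ηc + x) by ring] at d
    rw [show -x - ηc = -(ηc + x) by ring, th1_neg] at p'
    rw [show -x - ηc = -(ηc + x) by ring, th2_neg] at m'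
    rw [show x - ηc = -(ηc - x) by ring, th1_neg] at p
    rw [show x - ηc = -(ηc - x) by ring, th2_neg] at m
    have h01 : cv τ (-2 * x) * chiC τ lam (-x) 0 1 + bv τ (-2 * x) * chiC τ lam (-x) 1 0
        = th4 0 (2 * τ) * th1 (2 * (ηc + x)) (2 * τ) * th4 (2 * (ηc + -x)) (2 * τ)
          * chiC τ lam x 0 1 := by
      simp only [chiC_zero_one, chiC_one_zero]
      set f := th1 (x + lam) (2*τ) * th4 (x - lam - 2*ηc) (2*τ)
      set g := th1 (x - lam - 2*ηc) (2*τ) * th4 (x + lam) (2*τ)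
      set f' := th1 (-x + lam) (2*τ) * th4 (-x - lam - 2*ηc) (2*τ)
      set g' := th1 (-x - lam - 2*ηc) (2*τ) * th4 (-x + lam) (2*τ)
      have e1 : cv τ (-2 * x) * f' + bv τ (-2 * x) * g'
        = 1 / 2 * ((cv τ (-2 * x) + bv τ (-2 * x)) * (f' + g')
          + (cv τ (-2 * x) - bv τ (-2 * x)) * (f' - g')) := by ring
      have e2 : f = 1 / 2 * ((f + g) + (f - g)) := by ring
      rw [e1, e2, p, m, p', m', hc, hc']
      linear_combination -(1 / 2 * th4 (2 * (ηc + -x)) (2 * τ) *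
        (th1 (ηc - x) τ * th2 (lam + ηc) τ - th1 (lam + ηc) τ * th2 (ηc - x) τ)) * d
    have h10 : bv τ (-2 * x) * chiC τ lam (-x) 0 1 + cv τ (-2 * x) * chiC τ lam (-x) 1 0
        = th4 0 (2 * τ) * th1 (2 * (ηc + x)) (2 * τ) * th4 (2 * (ηc + -x)) (2 * τ)
          * chiC τ lam x 1 0 := by
      simp only [chiC_zero_one, chiC_one_zero]
      set f := th1 (x + lam) (2*τ) * th4 (x - lam - 2*ηc) (2*τ)
      set g := th1 (x - lam - 2*ηc) (2*τ) * th4 (x + lam) (2*τ)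
      set f' := th1 (-x + lam) (2*τ) * th4 (-x - lam - 2*ηc) (2*τ)
      set g' := th1 (-x - lam - 2*ηc) (2*τ) * th4 (-x + lam) (2*τ)
      have e1 : bv τ (-2 * x) * f' + cv τ (-2 * x) * g'
        = 1 / 2 * ((cv τ (-2 * x) + bv τ (-2 * x)) * (f' + g')
          - (cv τ (-2 * x) - bv τ (-2 * x)) * (f' - g')) := by ring
      have e2 : g = 1 / 2 * ((f + g) - (f - g)) := by ring
      rw [e1, e2, p, m, p', m', hc, hc']
      linear_combination -(1 / 2 * th4 (2 * (ηc + -x)) (2 * τ) *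
        (th1 (ηc - x) τ * th2 (lam + ηc) τ + th1 (lam + ηc) τ * th2 (ηc - x) τ)) * d
    intro a b
    fin_cases a <;> fin_cases b
    · simp [pairRc, Rcheckent, Rent, chiC]
    · simpa [pairRc, Rcheckent, Rent] using h01
    · simpa [pairRc, Rcheckent, Rent] using h10
    · simp [pairRc, Rcheckent, Rent, chiC]
  exchange x₁ x₂ a b c d := by
    obtain ⟨hA, hB⟩ := chi_det hτ lam x₁ x₂
    have h00 : ∀ x, chiC τ lam x 0 0 = 0 := fun x => by simp [chiC]
    have h11 : ∀ x, chiC τ lam x 1 1 = 0 := fun x => by simp [chiC]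
    have e₁ : dv τ (-x₂ - x₁) * av τ (x₂ - x₁) *
        (chiC τ lam x₂ 0 1 * chiC τ lam x₁ 1 0 - chiC τ lam x₁ 0 1 * chiC τ lam x₂ 1 0)
        = bv τ (-x₂ - x₁) * dv τ (x₂ - x₁) *
        (chiC τ lam x₁ 0 1 * chiC τ lam x₂ 0 1 - chiC τ lam x₁ 1 0 * chiC τ lam x₂ 1 0) := by
      rw [hA, hB, av, bv, dv, dv]; ring
    have e₂ : av τ (-x₂ - x₁) * cv τ (x₂ - x₁) *
        (chiC τ lam x₂ 0 1 * chiC τ lam x₁ 1 0 - chiC τ lam x₁ 0 1 * chiC τ lam x₂ 1 0)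
        = cv τ (-x₂ - x₁) * bv τ (x₂ - x₁) *
        (chiC τ lam x₁ 0 1 * chiC τ lam x₂ 0 1 - chiC τ lam x₁ 1 0 * chiC τ lam x₂ 1 0) := by
      rw [hA, hB, av, bv, cv, cv]; ring
    fin_cases a <;> fin_cases b <;> fin_cases c <;> fin_cases d <;>
      simp [Rcheckent, Rent, h00, h11] <;>
      first
        | ring1
        | linear_combination e₁
        | linear_combination -e₁
        | linear_combination e₂
        | linear_combination -e₂

theorem isBoundaryKernel_chibarC {τ : ℂ} (hτ : 0 < τ.im) (lam : ℂ) :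
    IsBoundaryKernel τ (chibarC τ lam) fun x => th1 (2 * (ηc + x)) (2 * τ) where
  differentiable a b := by
    have hτ2 := two_mul_im_pos hτ
    unfold chibarC
    split_ifs
    · exact (Differentiable.th1_comp hτ2 (by fun_prop)).mul
        (Differentiable.th1_comp hτ2 (by fun_prop))
    · exact (Differentiable.th4_comp hτ2 (by fun_prop)).mul
        (Differentiable.th4_comp hτ2 (by fun_prop))
    · fun_prop
  add_pi z a b := by
    have e : ∀ c : ℂ, z + Real.pi + c = z + c + Real.pi := fun c => by ring
    have e' : ∀ c : ℂ, z + Real.pi - c = z - c + Real.pi := fun c => by ring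
    have e'' : ∀ c d : ℂ, z - c + Real.pi - d = z - c - d + Real.pi := fun c d => by ring
    fin_cases a <;> fin_cases b <;>
      simp [chibarC, spinSign, e, e', e'', th1_add_pi, th4_add_pi]
  add_pi_mul z a b := by
    have e : z + Real.pi * τ + lam = z + lam + Real.pi * τ := by ring
    have e' : z + Real.pi * τ - lam - 2 * ηc = z - lam - 2 * ηc + Real.pi * τ := by ring
    have hI : ∀ u v : ℂ, I * Complex.exp (-I * (Real.pi * τ / 2 + (z - lam - 2 * ηc))) * u *
        (I * Complex.exp (-I * (Real.pi * τ / 2 + (z + lam))) * v)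
        = -Complex.exp (-I * (Real.pi * τ + 2 * z - 2 * ηc)) * (u * v) := by
      intro u v
      rw [show -I * (Real.pi * τ + 2 * z - 2 * ηc) = -I * (Real.pi * τ / 2 + (z - lam - 2 * ηc))
        + -I * (Real.pi * τ / 2 + (z + lam)) by ring, Complex.exp_add]
      linear_combination (Complex.exp (-I * (Real.pi * τ / 2 + (z - lam - 2 * ηc))) *
        Complex.exp (-I * (Real.pi * τ / 2 + (z + lam))) * u * v) * I_mul_I
    have h00 : chibarC τ lam (z + Real.pi * τ) 0 0
        = -Complex.exp (-I * (Real.pi * τ + 2 * z - 2 * ηc)) * chibarC τ lam z 1 1 := by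
      simp only [chibarC_zero_zero, chibarC_one_one]
      rw [e, e', th1_add_half, th1_add_half, mul_comm (I * _ * _), hI]
    have h11 : chibarC τ lam (z + Real.pi * τ) 1 1
        = -Complex.exp (-I * (Real.pi * τ + 2 * z - 2 * ηc)) * chibarC τ lam z 0 0 := by
      simp only [chibarC_zero_zero, chibarC_one_one]
      rw [e, e', th4_add_half, th4_add_half, hI]
      simp [mul_comm]
    fin_cases a <;> fin_cases b
    · exact h11
    · simp [chibarC, flipS]
    · simp [chibarC, flipS]
    · exact h00
  reflection := by
    have hτ2 := two_mul_im_pos hτ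
    refine ⟨fun x => th4 0 (2 * τ) * th4 (2 * (ηc + x)) (2 * τ),
      (Differentiable.th4_comp hτ2 (by fun_prop)).const_mul _, ?_, fun x => ⟨?_, ?_⟩⟩
    · obtain ⟨z, hz⟩ := exists_th4_two_mul_ne_zero hτ
      exact ⟨z, mul_ne_zero (th4_zero_ne_zero hτ2) hz⟩
    · rw [rv_neg_two_mul hτ x]; ring
    have hc := av_add_dv hτ x
    have hc' := av_sub_dv hτ x
    have p := chibar_add hτ lam x
    have m := chibar_sub hτ lam x
    have p' := chibar_add hτ lam (-x)
    have m' := chibar_sub hτ lam (-x)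
    have d := th3_mul_th4 (ηc + x) (ηc + x) hτ
    rw [sub_self, th1_zero, show ηc + x + (ηc + x) = 2 * (ηc + x) by ring] at d
    rw [show -x - ηc = -(ηc + x) by ring, th4_neg] at p'
    rw [show -x - ηc = -(ηc + x) by ring, th3_neg] at m'
    rw [show x - ηc = -(ηc - x) by ring, th4_neg] at p
    rw [show x - ηc = -(ηc - x) by ring, th3_neg] at m
    have h00 : av τ (-2 * x) * chibarC τ lam (-x) 0 0 + dv τ (-2 * x) * chibarC τ lam (-x) 1 1
        = th4 0 (2 * τ) * th4 (2 * (ηc + x)) (2 * τ) * th1 (2 * (ηc + -x)) (2 * τ)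
          * chibarC τ lam x 0 0 := by
      simp only [chibarC_zero_zero, chibarC_one_one]
      set f := th1 (x + lam) (2*τ) * th1 (x - lam - 2*ηc) (2*τ)
      set g := th4 (x - lam - 2*ηc) (2*τ) * th4 (x + lam) (2*τ)
      set f' := th1 (-x + lam) (2*τ) * th1 (-x - lam - 2*ηc) (2*τ)
      set g' := th4 (-x - lam - 2*ηc) (2*τ) * th4 (-x + lam) (2*τ)
      have e1 : av τ (-2 * x) * f' + dv τ (-2 * x) * g'
        = 1 / 2 * ((av τ (-2 * x) + dv τ (-2 * x)) * (f' + g')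
          - (av τ (-2 * x) - dv τ (-2 * x)) * (g' - f')) := by ring
      have e2 : f = 1 / 2 * ((f + g) - (g - f)) := by ring
      rw [e1, e2, p, m, p', m', hc, hc']
      linear_combination (1 / 2 * th1 (2 * (ηc + -x)) (2 * τ) *
        (th3 (lam + ηc) τ * th4 (ηc - x) τ - th3 (ηc - x) τ * th4 (lam + ηc) τ)) * d
    have h11 : dv τ (-2 * x) * chibarC τ lam (-x) 0 0 + av τ (-2 * x) * chibarC τ lam (-x) 1 1
        = th4 0 (2 * τ) * th4 (2 * (ηc + x)) (2 * τ) * th1 (2 * (ηc + -x)) (2 * τ)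
          * chibarC τ lam x 1 1 := by
      simp only [chibarC_zero_zero, chibarC_one_one]
      set f := th1 (x + lam) (2*τ) * th1 (x - lam - 2*ηc) (2*τ)
      set g := th4 (x - lam - 2*ηc) (2*τ) * th4 (x + lam) (2*τ)
      set f' := th1 (-x + lam) (2*τ) * th1 (-x - lam - 2*ηc) (2*τ)
      set g' := th4 (-x - lam - 2*ηc) (2*τ) * th4 (-x + lam) (2*τ)
      have e1 : dv τ (-2 * x) * f' + av τ (-2 * x) * g'
        = 1 / 2 * ((av τ (-2 * x) + dv τ (-2 * x)) * (f' + g')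
          + (av τ (-2 * x) - dv τ (-2 * x)) * (g' - f')) := by ring
      have e2 : g = 1 / 2 * ((f + g) + (g - f)) := by ring
      rw [e1, e2, p, m, p', m', hc, hc']
      linear_combination (1 / 2 * th1 (2 * (ηc + -x)) (2 * τ) *
        (th3 (lam + ηc) τ * th4 (ηc - x) τ + th3 (ηc - x) τ * th4 (lam + ηc) τ)) * d
    intro a b
    fin_cases a <;> fin_cases b
    · simpa [pairRc, Rcheckent, Rent] using h00
    · simp [pairRc, Rcheckent, Rent, chibarC]
    · simp [pairRc, Rcheckent, Rent, chibarC]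
    · simpa [pairRc, Rcheckent, Rent] using h11
  exchange x₁ x₂ a b c d := by
    obtain ⟨hA, hB⟩ := chibar_det hτ lam x₁ x₂
    have h01 : ∀ x, chibarC τ lam x 0 1 = 0 := fun x => by simp [chibarC]
    have h10 : ∀ x, chibarC τ lam x 1 0 = 0 := fun x => by simp [chibarC]
    have e₁ : cv τ (-x₂ - x₁) * av τ (x₂ - x₁) *
        (chibarC τ lam x₂ 0 0 * chibarC τ lam x₁ 1 1 - chibarC τ lam x₁ 0 0 * chibarC τ lam x₂ 1 1)
        = av τ (-x₂ - x₁) * dv τ (x₂ - x₁) * (chibarC τ lam x₁ 0 0 * chibarC τ lam x₂ 0 0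
          - chibarC τ lam x₁ 1 1 * chibarC τ lam x₂ 1 1) := by
      rw [hA, hB, av, av, cv, dv]; ring
    have e₂ : bv τ (-x₂ - x₁) * cv τ (x₂ - x₁) *
        (chibarC τ lam x₂ 0 0 * chibarC τ lam x₁ 1 1 - chibarC τ lam x₁ 0 0 * chibarC τ lam x₂ 1 1)
        = dv τ (-x₂ - x₁) * bv τ (x₂ - x₁) * (chibarC τ lam x₁ 0 0 * chibarC τ lam x₂ 0 0
          - chibarC τ lam x₁ 1 1 * chibarC τ lam x₂ 1 1) := by
      rw [hA, hB, bv, bv, cv, dv]; ring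
    fin_cases a <;> fin_cases b <;> fin_cases c <;> fin_cases d <;>
      simp [Rcheckent, Rent, h01, h10] <;>
      first
        | ring1
        | linear_combination e₁
        | linear_combination -e₁
        | linear_combination e₂
        | linear_combination -e₂

/-- The first site of the `m`-th pair of sites. -/
def siteL {n : ℕ} (m : Fin n) : Fin (2 * n + 1) := ⟨2 * (m : ℕ), by have := m.2; omega⟩

/-- The second site of the `m`-th pair of sites. -/
def siteR {n : ℕ} (m : Fin n) : Fin (2 * n + 1) := ⟨2 * (m : ℕ) + 1, by have := m.2; omega⟩

/-- The unpaired last site. -/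
def siteLast (n : ℕ) : Fin (2 * n + 1) := ⟨2 * n, by omega⟩

theorem siteL_inj {n : ℕ} {m m' : Fin n} : siteL m = siteL m' ↔ m = m' := by
  simp only [siteL, Fin.ext_iff]; omega

theorem siteR_inj {n : ℕ} {m m' : Fin n} : siteR m = siteR m' ↔ m = m' := by
  simp only [siteR, Fin.ext_iff]; omega

theorem siteL_ne_siteR {n : ℕ} (m m' : Fin n) : siteL m ≠ siteR m' := by
  simp only [siteL, siteR, ne_eq, Fin.ext_iff]; omega

theorem siteL_ne_siteLast {n : ℕ} (m : Fin n) : siteL m ≠ siteLast n := by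
  have := m.2
  simp only [siteL, siteLast, ne_eq, Fin.ext_iff]; omega

theorem siteR_ne_siteLast {n : ℕ} (m : Fin n) : siteR m ≠ siteLast n := by
  have := m.2
  simp only [siteR, siteLast, ne_eq, Fin.ext_iff]; omega

theorem site_cases {n : ℕ} (i : Fin (2 * n + 1)) :
    (∃ m, i = siteL m) ∨ (∃ m, i = siteR m) ∨ i = siteLast n := by
  have := i.2
  by_cases h : (i : ℕ) = 2 * n
  · exact Or.inr (Or.inr (Fin.ext h))
  · rcases Nat.even_or_odd' (i : ℕ) with ⟨c, hc | hc⟩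
    · exact Or.inl ⟨⟨c, by omega⟩, Fin.ext hc⟩
    · exact Or.inr (Or.inl ⟨⟨c, by omega⟩, Fin.ext hc⟩)

theorem interleave_siteL {n : ℕ} (x : Fin n → ℂ) (m : Fin n) : interleave x (siteL m) = x m := by
  have := m.2
  simp [interleave, siteL]

theorem interleave_siteR {n : ℕ} (x : Fin n → ℂ) (m : Fin n) :
    interleave x (siteR m) = -x m := by
  have h : (2 * (m : ℕ) + 1) / 2 = m := by omega
  have h' : 2 * (m : ℕ) + 1 < 2 * n := by have := m.2; omega
  simp [interleave, siteR, h, h', Nat.add_mod]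

theorem interleave_siteLast {n : ℕ} (x : Fin n → ℂ) : interleave x (siteLast n) = 0 := by
  simp [interleave, siteLast]

theorem interleave_update {n : ℕ} (x : Fin n → ℂ) (m : Fin n) (z : ℂ) :
    interleave (Function.update x m z)
      = Function.update (Function.update (interleave x) (siteL m) z) (siteR m) (-z) := by
  funext i
  rcases site_cases i with ⟨m', rfl⟩ | ⟨m', rfl⟩ | rfl
  · simp only [interleave_siteL, Function.update_apply, siteL_ne_siteR, siteL_inj, if_false]
  · simp only [interleave_siteR, Function.update_apply, (siteL_ne_siteR _ _).symm, siteR_inj,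
      if_false]
    split_ifs <;> rfl
  · simp only [interleave_siteLast, Function.update_apply, (siteL_ne_siteLast _).symm,
      (siteR_ne_siteLast _).symm, if_false]

/-- The components of the product of the boundary vectors over the pairs in `S` and of the vector
`v` at the last site. -/
def boundaryWeight (k : ℂ → Fin 2 → Fin 2 → ℂ) (v : Fin 2 → ℂ) {n : ℕ} (S : Finset (Fin n))
    (x : Fin n → ℂ) (α : Fin (2 * n + 1) → Fin 2) : ℂ :=
  (∏ m ∈ S, k (x m) (α (siteL m)) (α (siteR m))) * v (α (siteLast n))

/-- The scalar product of a product of boundary vectors with `Ψ_n`. -/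
def boundarySum (k : ℂ → Fin 2 → Fin 2 → ℂ) (v : Fin 2 → ℂ) (Ψ : PsiFam) (n : ℕ)
    (x : Fin n → ℂ) : ℂ :=
  ∑ α, boundaryWeight k v Finset.univ x α * Ψ n (interleave x) α

section weights

variable {k : ℂ → Fin 2 → Fin 2 → ℂ} {v : Fin 2 → ℂ} {n : ℕ} {S : Finset (Fin n)}

theorem boundaryWeight_eq_mul_erase {m : Fin n} (hm : m ∈ S) (x : Fin n → ℂ)
    (α : Fin (2 * n + 1) → Fin 2) :
    boundaryWeight k v S x α
      = k (x m) (α (siteL m)) (α (siteR m)) * boundaryWeight k v (S.erase m) x α := by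
  rw [boundaryWeight, boundaryWeight, ← Finset.mul_prod_erase S _ hm, mul_assoc]

theorem boundaryWeight_congr {x y : Fin n → ℂ} (h : ∀ m ∈ S, x m = y m)
    (α : Fin (2 * n + 1) → Fin 2) : boundaryWeight k v S x α = boundaryWeight k v S y α := by
  rw [boundaryWeight, boundaryWeight, Finset.prod_congr rfl fun m hm => by rw [h m hm]]

theorem boundaryWeight_update_siteL {m : Fin n} (hm : m ∉ S) (x : Fin n → ℂ)
    (α : Fin (2 * n + 1) → Fin 2) (s : Fin 2) :
    boundaryWeight k v S x (Function.update α (siteL m) s) = boundaryWeight k v S x α := by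
  rw [boundaryWeight, boundaryWeight, Function.update_of_ne (siteL_ne_siteLast m).symm]
  congr 1
  refine Finset.prod_congr rfl fun m' hm' => ?_
  rw [Function.update_of_ne (mt siteL_inj.1 (ne_of_mem_of_not_mem hm' hm)),
    Function.update_of_ne (siteL_ne_siteR _ _).symm]

theorem boundaryWeight_update_siteR {m : Fin n} (hm : m ∉ S) (x : Fin n → ℂ)
    (α : Fin (2 * n + 1) → Fin 2) (s : Fin 2) :
    boundaryWeight k v S x (Function.update α (siteR m) s) = boundaryWeight k v S x α := by
  rw [boundaryWeight, boundaryWeight, Function.update_of_ne (siteR_ne_siteLast m).symm]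
  congr 1
  refine Finset.prod_congr rfl fun m' hm' => ?_
  rw [Function.update_of_ne (siteL_ne_siteR _ _),
    Function.update_of_ne (mt siteR_inj.1 (ne_of_mem_of_not_mem hm' hm))]

theorem boundarySum_update (Ψ : PsiFam) (x : Fin n → ℂ) (m : Fin n) (z : ℂ) :
    boundarySum k v Ψ n (Function.update x m z)
      = ∑ α, k z (α (siteL m)) (α (siteR m)) *
          boundaryWeight k v (Finset.univ.erase m) x α *
          Ψ n (interleave (Function.update x m z)) α := by
  refine Finset.sum_congr rfl fun α _ => ?_
  rw [boundaryWeight_eq_mul_erase (Finset.mem_univ m), Function.update_self]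
  congr 2
  exact boundaryWeight_congr (fun m' hm' => Function.update_of_ne (Finset.ne_of_mem_erase hm') _ _) α

end weights

theorem Rcheckent_comm (τ u : ℂ) (p q : Fin 2 × Fin 2) :
    Rcheckent τ u p q = Rcheckent τ u q p := by
  obtain ⟨a, b⟩ := p
  obtain ⟨c, d⟩ := q
  fin_cases a <;> fin_cases b <;> fin_cases c <;> fin_cases d <;> simp [Rcheckent, Rent]

theorem sum_mul_applyRc (τ u : ℂ) {L : ℕ} {i j : Fin L} (hij : i ≠ j)
    (w ψ : (Fin L → Fin 2) → ℂ) :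
    ∑ α, w α * applyRc τ u i j ψ α = ∑ α, applyRc τ u i j w α * ψ α := by
  simp only [applyRc, Finset.mul_sum, Finset.sum_mul]
  simp only [← Fintype.sum_prod_type']
  let e : (Fin L → Fin 2) × Fin 2 × Fin 2 → (Fin L → Fin 2) × Fin 2 × Fin 2 := fun p =>
    (Function.update (Function.update p.1 i p.2.1) j p.2.2, p.1 i, p.1 j)
  have he : Function.Involutive e := by
    rintro ⟨α, s, t⟩
    simp only [e, Prod.mk.injEq, Function.update_self, Function.update_of_ne hij, and_true]
    funext l
    simp only [Function.update_apply]
    split_ifs with h₁ h₂ <;> simp [*]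
  refine Fintype.sum_equiv he.toPerm _ _ ?_
  rintro ⟨α, s, t⟩
  have := congrArg Prod.fst (he (α, s, t))
  simp only [e] at this
  simp only [Function.Involutive.coe_toPerm, e, this, Function.update_self,
    Function.update_of_ne hij]
  rw [Rcheckent_comm]
  ring

theorem applyRc_mul_of_invariant (τ u : ℂ) {L : ℕ} {i j : Fin L} (hij : i ≠ j)
    (F : Fin 2 → Fin 2 → ℂ) (w : (Fin L → Fin 2) → ℂ)
    (hi : ∀ α s, w (Function.update α i s) = w α) (hj : ∀ α s, w (Function.update α j s) = w α)
    (α : Fin L → Fin 2) :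
    applyRc τ u i j (fun α => F (α i) (α j) * w α) α = pairRc τ u F (α i) (α j) * w α := by
  simp only [applyRc, pairRc, hi, hj, Function.update_self, Function.update_of_ne hij,
    Finset.sum_mul, mul_assoc]

theorem sum_mul_Psi_swap {τ : ℂ} {Ψ : PsiFam} (h1 : PsiP1 τ Ψ) {n : ℕ} {i j : Fin (2 * n + 1)}
    (hij : (j : ℕ) = (i : ℕ) + 1) (u u' : Fin (2 * n + 1) → ℂ)
    (hu : ∀ l, u' l = u (Equiv.swap i j l)) (w : (Fin (2 * n + 1) → Fin 2) → ℂ) :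
    rv τ (u j - u i) * ∑ α, w α * Ψ n u' α
      = ∑ α, applyRc τ (u j - u i) i j w α * Ψ n u α := by
  have hne : i ≠ j := fun h => by rw [h] at hij; omega
  rw [← sum_mul_applyRc τ _ hne, h1 n u i j hij, funext hu, Finset.mul_sum]
  exact Finset.sum_congr rfl fun α _ => by ring

section boundarySum

variable {τ : ℂ} {k : ℂ → Fin 2 → Fin 2 → ℂ} {G : ℂ → ℂ} {v : Fin 2 → ℂ} {Ψ : PsiFam} {n : ℕ}

theorem interleave_swap_pair (x : Fin n → ℂ) (m : Fin n) (l : Fin (2 * n + 1)) :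
    interleave (Function.update x m (-x m)) l
      = interleave x (Equiv.swap (siteL m) (siteR m) l) := by
  rw [interleave_update]
  simp only [Function.update_apply, Equiv.swap_apply_def]
  split_ifs with h₁ h₂ h₂
  · exact absurd (h₂.symm.trans h₁) (siteL_ne_siteR m m)
  · rw [interleave_siteL, neg_neg]
  · rw [interleave_siteR]
  · rfl

theorem rv_mul_boundarySum_update_neg (h1 : PsiP1 τ Ψ) (x : Fin n → ℂ) (m : Fin n) {g : ℂ}
    (hk : ∀ a b, pairRc τ (-2 * x m) (k (-x m)) a b = g * k (x m) a b) :
    rv τ (-2 * x m) * boundarySum k v Ψ n (Function.update x m (-x m))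
      = g * boundarySum k v Ψ n x := by
  have hu : interleave x (siteR m) - interleave x (siteL m) = -2 * x m := by
    rw [interleave_siteL, interleave_siteR]; ring
  have h := sum_mul_Psi_swap (i := siteL m) (j := siteR m) h1 rfl (interleave x) _
    (interleave_swap_pair x m)
    (fun α => k (-x m) (α (siteL m)) (α (siteR m)) *
      boundaryWeight k v (Finset.univ.erase m) x α)
  rw [hu] at h
  rw [boundarySum_update, h, boundarySum, Finset.mul_sum]
  refine Finset.sum_congr rfl fun α _ => ?_
  rw [applyRc_mul_of_invariant τ _ (siteL_ne_siteR m m) (k (-x m)) _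
    (boundaryWeight_update_siteL (Finset.notMem_erase m _) x)
    (boundaryWeight_update_siteR (Finset.notMem_erase m _) x), hk,
    boundaryWeight_eq_mul_erase (Finset.mem_univ m)]
  ring

theorem Psi_interleave_add_pi (h3 : PsiP3 τ Ψ) (x : Fin n → ℂ) (m : Fin n) (z : ℂ)
    (α : Fin (2 * n + 1) → Fin 2) :
    Ψ n (interleave (Function.update x m (z + Real.pi))) α
      = spinSign (α (siteL m)) * spinSign (α (siteR m)) *
        Ψ n (interleave (Function.update x m z)) α := by
  have hs : ∀ s : Fin 2, spinSign s * spinSign s = 1 := fun s => by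
    fin_cases s <;> simp [spinSign]
  have hL := congrFun (h3 n (interleave (Function.update x m z)) (siteL m)).1 α
  have hR := congrFun (h3 n (interleave (Function.update x m (z + Real.pi))) (siteR m)).1 α
  have hu : Function.update (interleave (Function.update x m z)) (siteL m)
      (interleave (Function.update x m z) (siteL m) + Real.pi)
      = Function.update (interleave (Function.update x m (z + Real.pi))) (siteR m)
      (interleave (Function.update x m (z + Real.pi)) (siteR m) + Real.pi) := by
    rw [interleave_siteL, interleave_siteR, Function.update_self, Function.update_self,
      interleave_update, interleave_update, Function.update_idem,
      Function.update_comm (siteL_ne_siteR m m).symm, Function.update_idem]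
    congr 1; ring
  rw [hu, hR] at hL
  change (∏ j ∈ Finset.univ.erase (siteR m), spinSign (α j)) * _
    = (∏ j ∈ Finset.univ.erase (siteL m), spinSign (α j)) * _ at hL
  have eL := Finset.mul_prod_erase Finset.univ (fun j => spinSign (α j))
    (Finset.mem_univ (siteL m))
  have eR := Finset.mul_prod_erase Finset.univ (fun j => spinSign (α j))
    (Finset.mem_univ (siteR m))
  have hP : (∏ j, spinSign (α j)) * ∏ j, spinSign (α j) = 1 := by
    rw [← Finset.prod_mul_distrib]
    exact Finset.prod_eq_one fun j _ => hs _
  have sL := hs (α (siteL m))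
  have sR := hs (α (siteR m))
  set a := spinSign (α (siteL m))
  set b := spinSign (α (siteR m))
  set A := ∏ j ∈ Finset.univ.erase (siteL m), spinSign (α j)
  set B := ∏ j ∈ Finset.univ.erase (siteR m), spinSign (α j)
  set P := ∏ j, spinSign (α j)
  have hA : A = a * P := by rw [← eL, ← mul_assoc, sL, one_mul]
  have hB : B = b * P := by rw [← eR, ← mul_assoc, sR, one_mul]
  rw [hA, hB] at hL
  set Y := Ψ n (interleave (Function.update x m (z + Real.pi))) α
  set X := Ψ n (interleave (Function.update x m z)) α
  linear_combination (b * P) * hL - P ^ 2 * Y * sR + (a * b * X - Y) * hP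

theorem boundarySum_add_pi (hk : IsBoundaryKernel τ k G) (h3 : PsiP3 τ Ψ) (x : Fin n → ℂ)
    (m : Fin n) (z : ℂ) :
    boundarySum k v Ψ n (Function.update x m (z + Real.pi))
      = boundarySum k v Ψ n (Function.update x m z) := by
  rw [boundarySum_update, boundarySum_update]
  refine Finset.sum_congr rfl fun α _ => ?_
  rw [Psi_interleave_add_pi h3, ← hk.add_pi z]
  ring

theorem sum_update_add {ι : Type*} [Fintype ι] [DecidableEq ι] (u : ι → ℂ) (i : ι) (a : ℂ) :
    ∑ j, Function.update u i (u i + a) j = ∑ j, u j + a := by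
  rw [Finset.sum_update_of_mem (Finset.mem_univ i), ← Finset.add_sum_erase _ u (Finset.mem_univ i),
    Finset.sdiff_singleton_eq_erase]
  ring

theorem flipS_flipS (s : Fin 2) : flipS (flipS s) = s := by
  fin_cases s <;> rfl

theorem Psi_interleave_add_pi_mul (h2 : PsiP2 τ Ψ) (x : Fin n → ℂ) (m : Fin n) (z : ℂ)
    (α : Fin (2 * n + 1) → Fin 2) :
    Ψ n (interleave (Function.update x m (z + Real.pi * τ)))
        (Function.update α (siteR m) (flipS (α (siteR m))))
      = Complex.exp (-I * ((2 * n + 1 : ℕ) * (2 * z + Real.pi * τ))) *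
        Ψ n (interleave (Function.update x m z))
          (Function.update α (siteL m) (flipS (α (siteL m)))) := by
  set u₀ := interleave (Function.update x m z) with hu₀
  set u₂ := interleave (Function.update x m (z + Real.pi * τ)) with hu₂
  have e₀ : u₀ (siteL m) = z := by rw [hu₀, interleave_siteL, Function.update_self]
  have e₂ : u₂ (siteR m) = -(z + Real.pi * τ) := by
    rw [hu₂, interleave_siteR, Function.update_self]
  have hu : Function.update u₂ (siteR m) (u₂ (siteR m) + Real.pi * τ)
      = Function.update u₀ (siteL m) (u₀ (siteL m) + Real.pi * τ) := by
    rw [e₀, e₂, hu₀, hu₂, interleave_update, interleave_update, Function.update_idem,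
      Function.update_comm (siteL_ne_siteR m m).symm, Function.update_idem]
    congr 1; ring
  have hsum : ∑ j, u₂ j = ∑ j, u₀ j := by
    have := congrArg (fun u : Fin (2 * n + 1) → ℂ => ∑ j, u j) hu
    simpa only [sum_update_add, add_left_inj] using this
  rw [h2 n u₀, h2 n u₂, hu, Finset.sum_sub_distrib, Finset.sum_sub_distrib, hsum, e₀, e₂,
    Finset.sum_const, Finset.sum_const, Finset.card_univ, Fintype.card_fin, nsmul_eq_mul,
    nsmul_eq_mul,
    show -I * (∑ j, u₀ j - (2 * n + 1 : ℕ) * -(z + Real.pi * τ))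
      = -I * ((2 * n + 1 : ℕ) * (2 * z + Real.pi * τ)) + -I * (∑ j, u₀ j - (2 * n + 1 : ℕ) * z) by
      ring, Complex.exp_add]
  ring

theorem boundarySum_add_pi_mul (hk : IsBoundaryKernel τ k G) (h2 : PsiP2 τ Ψ) (x : Fin n → ℂ)
    (m : Fin n) (z : ℂ) :
    boundarySum k v Ψ n (Function.update x m (z + Real.pi * τ))
      = -Complex.exp (-I * (Real.pi * τ + 2 * z - 2 * ηc)) *
        Complex.exp (-I * ((2 * n + 1 : ℕ) * (2 * z + Real.pi * τ))) *
        boundarySum k v Ψ n (Function.update x m z) := by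
  let e : (Fin (2 * n + 1) → Fin 2) → Fin (2 * n + 1) → Fin 2 := fun α =>
    Function.update (Function.update α (siteL m) (flipS (α (siteL m)))) (siteR m)
      (flipS (α (siteR m)))
  have he : Function.Involutive e := by
    intro α
    funext l
    simp only [e, Function.update_apply, siteL_ne_siteR, (siteL_ne_siteR _ _).symm, if_true,
      if_false, flipS_flipS]
    split_ifs with h₁ h₂ <;> simp [*]
  rw [boundarySum_update, boundarySum_update, Finset.mul_sum]
  refine (Equiv.sum_comp he.toPerm _).symm.trans (Finset.sum_congr rfl fun α _ => ?_)
  have hΨ := Psi_interleave_add_pi_mul h2 x m z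
    (Function.update α (siteL m) (flipS (α (siteL m))))
  rw [Function.update_of_ne (siteL_ne_siteR m m).symm, Function.update_self,
    Function.update_idem, flipS_flipS, Function.update_eq_self] at hΨ
  rw [he.coe_toPerm]
  simp only [e]
  rw [hΨ, boundaryWeight_update_siteR (Finset.notMem_erase m _),
    boundaryWeight_update_siteL (Finset.notMem_erase m _), Function.update_self,
    Function.update_of_ne (siteL_ne_siteR m m), Function.update_self, hk.add_pi_mul]
  ring

theorem boundarySum_neg_ηc (h3 : PsiP3 τ Ψ) (h4 : PsiP4 Ψ) (x : Fin n → ℂ) (m : Fin n) :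
    boundarySum k v Ψ n (Function.update x m (-ηc)) = 0 := by
  set u := interleave (Function.update x m (-ηc)) with hu
  have hΨ : Ψ n (Function.update u (siteLast n) (u (siteLast n) + Real.pi)) = 0 := by
    refine h4 n _ ⟨siteL m, siteR m, siteLast n, ?_, ?_, ?_, ?_⟩
    · simp [siteL, siteR, Fin.lt_def]
    · have := m.2
      simp only [siteR, siteLast, Fin.lt_def]
      omega
    · rw [Function.update_of_ne (siteL_ne_siteLast m), Function.update_of_ne (siteR_ne_siteLast m),
        hu, interleave_siteL, interleave_siteR, Function.update_self]
      ring
    · rw [Function.update_of_ne (siteL_ne_siteLast m), Function.update_self,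
        hu, interleave_siteL, interleave_siteLast, Function.update_self, ← three_mul_ηc]
      ring
  refine Finset.sum_eq_zero fun α _ => ?_
  have h := congrFun ((h3 n u (siteLast n)).1.symm.trans hΨ) α
  rcases mul_eq_zero.1 h with h | h
  · refine absurd h (Finset.prod_ne_zero_iff.2 fun j _ => ?_)
    split_ifs <;> norm_num
  · rw [h, mul_zero]

theorem Psi_update_add_two_pi (h3 : PsiP3 τ Ψ) (u : Fin (2 * n + 1) → ℂ) (i : Fin (2 * n + 1))
    (α : Fin (2 * n + 1) → Fin 2) (w : ℂ) :
    Ψ n (Function.update u i (w + 2 * Real.pi)) α = Ψ n (Function.update u i w) α := by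
  have h := congrFun (h3 n (Function.update u i w) i).1 α
  have h' := congrFun (h3 n (Function.update u i (w + Real.pi)) i).1 α
  rw [Function.update_self, Function.update_idem] at h h'
  rw [show w + 2 * Real.pi = w + Real.pi + Real.pi by ring, h', h, ← mul_assoc,
    ← Finset.prod_mul_distrib]
  convert one_mul _ using 2
  exact Finset.prod_eq_one fun j _ => by split_ifs <;> norm_num

/-- Along each antidiagonal direction `(u_i, u_j) = (z, -z)`, the components of `Ψ_n` are entire. -/
theorem differentiable_Psi_update_update_neg (hτ : 0 < τ.im) (hent : PsiEntire Ψ)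
    (h3 : PsiP3 τ Ψ) (u : Fin (2 * n + 1) → ℂ) {i j : Fin (2 * n + 1)} (hij : i ≠ j)
    (α : Fin (2 * n + 1) → Fin 2) :
    Differentiable ℂ fun z => Ψ n (Function.update (Function.update u i z) j (-z)) α := by
  have hτ2 := two_mul_im_pos hτ
  set f : ℂ → ℂ → ℂ := fun z w => Ψ n (Function.update (Function.update u i z) j w) α with hf
  have hf1 : ∀ w, Differentiable ℂ fun z => f z w := fun w => by
    simp only [hf, Function.update_comm hij]
    exact hent n _ i α
  have hf2 : ∀ z, Differentiable ℂ (f z) := fun z => hent n _ j α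
  set T : ℂ := ∑ l ∈ (Finset.univ.erase j).erase i, u l with hT
  have hsum : ∀ z w, ∑ l, Function.update (Function.update u i z) j w l = w + (z + T) := by
    intro z w
    rw [← Finset.add_sum_erase _ _ (Finset.mem_univ j), Function.update_self,
      ← Finset.add_sum_erase _ _ (Finset.mem_erase.2 ⟨hij, Finset.mem_univ i⟩),
      Function.update_of_ne hij, Function.update_self, hT]
    congr 2
    refine Finset.sum_congr rfl fun l hl => ?_
    rw [Finset.mem_erase, Finset.mem_erase] at hl
    rw [Function.update_of_ne hl.2.1, Function.update_of_ne hl.1]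
  set C : ℂ := -((pnome τ ^ (4 * n))⁻¹ * Complex.exp (2 * I * T) *
    Complex.exp (-I * (2 * Real.pi * τ))) with hC
  have hC0 : C ≠ 0 := by
    rw [hC]
    exact neg_ne_zero.2 (mul_ne_zero (mul_ne_zero (inv_ne_zero (pow_ne_zero _ (exp_ne_zero _)))
      (exp_ne_zero _)) (exp_ne_zero _))
  have hmem : ∀ z, (fun w => f z w * th4 (z + w) (2 * τ)) ∈
      quasiPeriodic τ (2 * Real.pi) C (4 * n + 2) := by
    intro z
    refine ⟨(hf2 z).mul (Differentiable.th4_comp hτ2 (by fun_prop)), fun w => ?_, fun w => ?_⟩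
    · simp only [hf]
      push_cast
      rw [Psi_update_add_two_pi h3, show z + (w + 2 * Real.pi) = z + w + Real.pi + Real.pi by ring,
        th4_add_pi, th4_add_pi]
    · have h := congrFun (h3 n (Function.update (Function.update u i z) j w) j).2 α
      rw [Function.update_self, Function.update_idem, Finset.sum_sub_distrib, hsum,
        Finset.sum_const, Finset.card_univ, Fintype.card_fin, nsmul_eq_mul] at h
      simp only [hf]
      push_cast
      rw [h, show z + (w + 2 * Real.pi * τ) = z + w + Real.pi * (2 * τ) by ring, th4_add_pi_mul,
        hC]
      have e : Complex.exp (-2 * I * ((2 * n + 1 : ℕ) * w - (w + (z + T)))) *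
          Complex.exp (-I * (Real.pi * (2 * τ) + 2 * (z + w)))
          = Complex.exp (2 * I * T) * Complex.exp (-I * (2 * Real.pi * τ)) *
            Complex.exp (-I * (4 * n + 2) * w) := by
        rw [← Complex.exp_add, ← Complex.exp_add, ← Complex.exp_add]
        congr 1
        push_cast
        ring
      linear_combination (-(pnome τ ^ (4 * n))⁻¹ * th4 (z + w) (2 * τ) *
        Ψ n (Function.update (Function.update u i z) j w) α) * e
  obtain ⟨S, hS⟩ := quasiPeriodic_exists_finset hτ (by positivity : (0 : ℝ) < 2 * Real.pi) hC0
    (4 * n + 2)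
  obtain ⟨E, hE, hint⟩ := exists_interpolation S hS
  have key : ∀ z, f z (-z)
      = (th4 0 (2 * τ))⁻¹ * ∑ s : S, f z s * th4 (z + s) (2 * τ) * E s (-z) := by
    intro z
    rw [← hint _ (hmem z) (-z), add_neg_cancel, mul_comm (f z (-z)),
      inv_mul_cancel_left₀ (th4_zero_ne_zero hτ2)]
  change Differentiable ℂ fun z => f z (-z)
  simp only [key]
  refine Differentiable.const_mul (Differentiable.fun_sum fun s _ => ?_) _
  exact ((hf1 s).mul (Differentiable.th4_comp hτ2 (by fun_prop))).mul
    ((hE s).1.comp differentiable_neg)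

theorem differentiable_boundarySum (hτ : 0 < τ.im) (hk : IsBoundaryKernel τ k G)
    (hent : PsiEntire Ψ) (h3 : PsiP3 τ Ψ) (x : Fin n → ℂ) (m : Fin n) :
    Differentiable ℂ fun z => boundarySum k v Ψ n (Function.update x m z) := by
  simp only [boundarySum_update, interleave_update]
  refine Differentiable.fun_sum fun α _ => ?_
  exact ((hk.differentiable _ _).mul_const _).mul
    (differentiable_Psi_update_update_neg hτ hent h3 _ (siteL_ne_siteR m m) α)

theorem boundarySum_update_neg (hτ : 0 < τ.im) (hk : IsBoundaryKernel τ k G)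
    (hG : Differentiable ℂ G) (hent : PsiEntire Ψ) (h1 : PsiP1 τ Ψ) (h3 : PsiP3 τ Ψ)
    (x : Fin n → ℂ) (m : Fin n) (z : ℂ) :
    G z * boundarySum k v Ψ n (Function.update x m (-z))
      = G (-z) * boundarySum k v Ψ n (Function.update x m z) := by
  obtain ⟨c, hc, ⟨z₀, hz₀⟩, h⟩ := hk.reflection
  have hφ := differentiable_boundarySum (v := v) hτ hk hent h3 x m
  refine hc.mul_left_cancel_entire (hG.mul (hφ.comp differentiable_neg))
    ((hG.comp differentiable_neg).mul hφ) hz₀ (fun z => ?_) z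
  have h' := rv_mul_boundarySum_update_neg (k := k) (v := v) h1 (Function.update x m z) m
    (g := c z * G (-z)) (by rw [Function.update_self]; exact (h z).2)
  rw [Function.update_self, Function.update_idem, (h z).1] at h'
  simp only [Function.comp, Pi.mul_apply]
  linear_combination h'

end boundarySum

theorem applyRc_applyRc_left (τ t s : ℂ) {L : ℕ} {i₁ i₂ i₃ i₄ : Fin L} (h₁₂ : i₁ ≠ i₂)
    (h₁₃ : i₁ ≠ i₃) (h₁₄ : i₁ ≠ i₄) (h₂₃ : i₂ ≠ i₃) (h₂₄ : i₂ ≠ i₄) (h₃₄ : i₃ ≠ i₄)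
    (F : Fin 2 → Fin 2 → Fin 2 → Fin 2 → ℂ) (w : (Fin L → Fin 2) → ℂ)
    (w₁ : ∀ α s, w (Function.update α i₁ s) = w α) (w₂ : ∀ α s, w (Function.update α i₂ s) = w α)
    (w₃ : ∀ α s, w (Function.update α i₃ s) = w α) (α : Fin L → Fin 2) :
    applyRc τ t i₁ i₂ (applyRc τ s i₂ i₃ fun α => F (α i₁) (α i₂) (α i₃) (α i₄) * w α) α
      = (∑ a : Fin 2, ∑ b : Fin 2, Rcheckent τ t (α i₁, α i₂) (a, b) *
          ∑ b' : Fin 2, ∑ c : Fin 2, Rcheckent τ s (b, α i₃) (b', c) * F a b' c (α i₄)) * w α := by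
  simp only [applyRc, w₁, w₂, w₃, Function.update_self, Function.update_of_ne h₁₂,
    Function.update_of_ne h₁₃, Function.update_of_ne h₁₄.symm, Function.update_of_ne h₂₃,
    Function.update_of_ne h₂₄.symm, Function.update_of_ne h₃₄.symm, Function.update_of_ne h₁₃.symm,
    Function.update_of_ne h₂₃.symm, Finset.sum_mul, Finset.mul_sum, mul_assoc]

theorem applyRc_applyRc_right (τ t s : ℂ) {L : ℕ} {i₁ i₂ i₃ i₄ : Fin L} (h₁₂ : i₁ ≠ i₂)
    (h₁₃ : i₁ ≠ i₃) (h₁₄ : i₁ ≠ i₄) (h₂₃ : i₂ ≠ i₃) (h₂₄ : i₂ ≠ i₄) (h₃₄ : i₃ ≠ i₄)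
    (F : Fin 2 → Fin 2 → Fin 2 → Fin 2 → ℂ) (w : (Fin L → Fin 2) → ℂ)
    (w₂ : ∀ α s, w (Function.update α i₂ s) = w α) (w₃ : ∀ α s, w (Function.update α i₃ s) = w α)
    (w₄ : ∀ α s, w (Function.update α i₄ s) = w α) (α : Fin L → Fin 2) :
    applyRc τ t i₃ i₄ (applyRc τ s i₂ i₃ fun α => F (α i₁) (α i₂) (α i₃) (α i₄) * w α) α
      = (∑ c : Fin 2, ∑ d : Fin 2, Rcheckent τ t (α i₃, α i₄) (c, d) *
          ∑ b : Fin 2, ∑ c' : Fin 2, Rcheckent τ s (α i₂, c) (b, c') * F (α i₁) b c' d) * w α := by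
  simp only [applyRc, w₂, w₃, w₄, Function.update_self, Function.update_of_ne h₁₂,
    Function.update_of_ne h₁₃, Function.update_of_ne h₁₄, Function.update_of_ne h₂₃,
    Function.update_of_ne h₂₄, Function.update_of_ne h₃₄, Function.update_of_ne h₃₄.symm,
    Function.update_of_ne h₂₄.symm, Finset.sum_mul, Finset.mul_sum, mul_assoc]

theorem swap_conj_four {ι : Type*} [DecidableEq ι] {i₁ i₂ i₃ i₄ : ι} (h₁₂ : i₁ ≠ i₂)
    (h₁₃ : i₁ ≠ i₃) (h₁₄ : i₁ ≠ i₄) (h₂₃ : i₂ ≠ i₃) (h₂₄ : i₂ ≠ i₄) (h₃₄ : i₃ ≠ i₄) (l : ι) :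
    Equiv.swap i₁ i₃ (Equiv.swap i₂ i₄ (Equiv.swap i₂ i₃ l))
      = Equiv.swap i₂ i₃ (Equiv.swap i₃ i₄ (Equiv.swap i₁ i₂ l)) := by
  simp only [Equiv.swap_apply_def]
  split_ifs <;> simp_all

theorem interleave_comp_swap {n : ℕ} (x : Fin n → ℂ) (m m' : Fin n) (l : Fin (2 * n + 1)) :
    interleave (fun i => x (Equiv.swap m m' i)) l = interleave x
      (Equiv.swap (siteL m) (siteL m') (Equiv.swap (siteR m) (siteR m') l)) := by
  rcases site_cases l with ⟨q, rfl⟩ | ⟨q, rfl⟩ | rfl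
  · rw [Equiv.swap_apply_of_ne_of_ne (siteL_ne_siteR _ _) (siteL_ne_siteR _ _), interleave_siteL]
    simp only [Equiv.swap_apply_def, siteL_inj]
    split_ifs <;> rw [interleave_siteL]
  · have : Equiv.swap (siteR m) (siteR m') (siteR q) = siteR (Equiv.swap m m' q) := by
      simp only [Equiv.swap_apply_def, siteR_inj]
      split_ifs <;> rfl
    rw [this, Equiv.swap_apply_of_ne_of_ne (siteL_ne_siteR _ _).symm (siteL_ne_siteR _ _).symm,
      interleave_siteR, interleave_siteR]
  · rw [Equiv.swap_apply_of_ne_of_ne (siteR_ne_siteLast _).symm (siteR_ne_siteLast _).symm,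
      Equiv.swap_apply_of_ne_of_ne (siteL_ne_siteLast _).symm (siteL_ne_siteLast _).symm,
      interleave_siteLast, interleave_siteLast]

section boundarySum

variable {τ : ℂ} {k : ℂ → Fin 2 → Fin 2 → ℂ} {G : ℂ → ℂ} {v : Fin 2 → ℂ} {Ψ : PsiFam} {n : ℕ}

theorem rv_mul_rv_mul_boundarySum_swap (hk : IsBoundaryKernel τ k G) (h1 : PsiP1 τ Ψ)
    (x : Fin n → ℂ) {m m' : Fin n} (hm : (m' : ℕ) = m + 1) :
    rv τ (x m' - x m) * (rv τ (-x m' - x m) *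
        boundarySum k v Ψ n fun i => x (Equiv.swap m m' i))
      = rv τ (x m' - x m) * (rv τ (-x m' - x m) * boundarySum k v Ψ n x) := by
  have hne : m ≠ m' := fun h => by rw [h] at hm; omega
  have h₁₂ : siteL m ≠ siteR m := siteL_ne_siteR m m
  have h₁₃ : siteL m ≠ siteL m' := mt siteL_inj.1 hne
  have h₁₄ : siteL m ≠ siteR m' := siteL_ne_siteR m m'
  have h₂₃ : siteR m ≠ siteL m' := (siteL_ne_siteR m' m).symm
  have h₂₄ : siteR m ≠ siteR m' := mt siteR_inj.1 hne
  have h₃₄ : siteL m' ≠ siteR m' := siteL_ne_siteR m' m'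
  have hadj : (siteL m' : ℕ) = siteR m + 1 := by
    change 2 * (m' : ℕ) = 2 * (m : ℕ) + 1 + 1
    omega
  set y : Fin n → ℂ := fun i => x (Equiv.swap m m' i) with hy
  set uA : Fin (2 * n + 1) → ℂ := fun l => interleave x (Equiv.swap (siteR m) (siteL m') l) with huA
  set uB : Fin (2 * n + 1) → ℂ := fun l => interleave y (Equiv.swap (siteR m) (siteL m') l) with huB
  set u : Fin (2 * n + 1) → ℂ := fun l => uA (Equiv.swap (siteL m') (siteR m') l) with hu
  have hB : ∀ l, uB l = u (Equiv.swap (siteL m) (siteR m) l) := by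
    intro l
    simp only [huB, hu, huA, hy, interleave_comp_swap]
    rw [swap_conj_four h₁₂ h₁₃ h₁₄ h₂₃ h₂₄ h₃₄]
  have hym : y m = x m' := by simp [hy]
  have hym' : y m' = x m := by simp [hy]
  have sA : uA (siteL m') - uA (siteR m) = -x m' - x m := by
    simp only [huA, Equiv.swap_apply_left, Equiv.swap_apply_right, interleave_siteL,
      interleave_siteR]
    ring
  have sB : uB (siteL m') - uB (siteR m) = -x m' - x m := by
    simp only [huB, Equiv.swap_apply_left, Equiv.swap_apply_right, interleave_siteL,
      interleave_siteR, hym, hym']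
  have tA : u (siteR m') - u (siteL m') = x m' - x m := by
    simp only [hu, huA, Equiv.swap_apply_left, Equiv.swap_apply_right,
      Equiv.swap_apply_of_ne_of_ne h₂₄.symm h₃₄.symm, interleave_siteR]
    ring
  have tB : u (siteR m) - u (siteL m) = x m' - x m := by
    simp only [hu, huA, Equiv.swap_apply_left, Equiv.swap_apply_of_ne_of_ne h₂₃ h₂₄,
      Equiv.swap_apply_of_ne_of_ne h₁₃ h₁₄, Equiv.swap_apply_of_ne_of_ne h₁₂ h₁₃, interleave_siteL]
  set S := (Finset.univ.erase m).erase m' with hS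
  have hmS : m ∉ S := fun h => Finset.notMem_erase m _ (Finset.mem_of_mem_erase h)
  have hmS' : m' ∉ S := Finset.notMem_erase m' _
  have hmem : m' ∈ Finset.univ.erase m := Finset.mem_erase.2 ⟨hne.symm, Finset.mem_univ _⟩
  have wA : boundaryWeight k v Finset.univ x = fun α =>
      (fun a b c d => k (x m) a b * k (x m') c d) (α (siteL m)) (α (siteR m)) (α (siteL m'))
        (α (siteR m')) * boundaryWeight k v S x α := by
    funext α
    rw [boundaryWeight_eq_mul_erase (Finset.mem_univ m), boundaryWeight_eq_mul_erase hmem,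
      mul_assoc]
  have wB : boundaryWeight k v Finset.univ y = fun α =>
      (fun a b c d => k (x m') a b * k (x m) c d) (α (siteL m)) (α (siteR m)) (α (siteL m'))
        (α (siteR m')) * boundaryWeight k v S x α := by
    funext α
    rw [boundaryWeight_eq_mul_erase (Finset.mem_univ m), boundaryWeight_eq_mul_erase hmem, hym,
      hym', boundaryWeight_congr (x := y) (y := x) (fun q hq => ?_), mul_assoc]
    rw [hy]
    simp only
    rw [Equiv.swap_apply_of_ne_of_ne (ne_of_mem_of_not_mem hq hmS)
      (ne_of_mem_of_not_mem hq hmS')]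
  have fA := sum_mul_Psi_swap h1 hadj uA (interleave x) (fun l => by simp [huA])
    (boundaryWeight k v Finset.univ x)
  have fA' := sum_mul_Psi_swap h1 (i := siteL m') (j := siteR m') rfl u uA (fun l => by simp [hu])
    (applyRc τ (-x m' - x m) (siteR m) (siteL m') (boundaryWeight k v Finset.univ x))
  have fB := sum_mul_Psi_swap h1 hadj uB (interleave y) (fun l => by simp [huB])
    (boundaryWeight k v Finset.univ y)
  have fB' := sum_mul_Psi_swap h1 (i := siteL m) (j := siteR m) rfl u uB hB
    (applyRc τ (-x m' - x m) (siteR m) (siteL m') (boundaryWeight k v Finset.univ y))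
  rw [sA] at fA
  rw [sB] at fB
  rw [tA] at fA'
  rw [tB] at fB'
  rw [boundarySum, boundarySum, fA, fB, fA', fB', wA, wB]
  refine Finset.sum_congr rfl fun α _ => congrArg (· * Ψ n u α) ?_
  refine (applyRc_applyRc_left τ _ _ h₁₂ h₁₃ h₁₄ h₂₃ h₂₄ h₃₄
    (fun a b c d => k (x m') a b * k (x m) c d) _ (boundaryWeight_update_siteL hmS x)
    (boundaryWeight_update_siteR hmS x) (boundaryWeight_update_siteL hmS' x) α).trans ?_
  refine Eq.trans ?_ (applyRc_applyRc_right τ _ _ h₁₂ h₁₃ h₁₄ h₂₃ h₂₄ h₃₄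
    (fun a b c d => k (x m) a b * k (x m') c d) _ (boundaryWeight_update_siteR hmS x)
    (boundaryWeight_update_siteL hmS' x) (boundaryWeight_update_siteR hmS' x) α).symm
  rw [hk.exchange]

theorem boundarySum_swap (hτ : 0 < τ.im) (hk : IsBoundaryKernel τ k G) (hent : PsiEntire Ψ)
    (h1 : PsiP1 τ Ψ) (h3 : PsiP3 τ Ψ) (x : Fin n → ℂ) {m m' : Fin n} (hm : (m' : ℕ) = m + 1) :
    boundarySum k v Ψ n (fun i => x (Equiv.swap m m' i)) = boundarySum k v Ψ n x := by
  have hne : m' ≠ m := fun h => by rw [h] at hm; omega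
  obtain ⟨r₀, hr₀⟩ := exists_rv_ne_zero hτ
  have hr : Differentiable ℂ (rv τ) := differentiable_rv hτ
  have hφ := differentiable_boundarySum (v := v) hτ hk hent h3 x m
  have hφ' := differentiable_boundarySum (v := v) hτ hk hent h3
    (fun i => x (Equiv.swap m m' i)) m'
  have hupd : ∀ z, (fun i => Function.update x m z (Equiv.swap m m' i))
      = Function.update (fun i => x (Equiv.swap m m' i)) m' z := by
    intro z
    funext i
    simp only [Function.update_apply, Equiv.swap_apply_eq_iff, Equiv.swap_apply_left]
  have hr₁ : Differentiable ℂ fun z => rv τ (x m' - z) := hr.comp (by fun_prop)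
  have hr₂ : Differentiable ℂ fun z => rv τ (-x m' - z) := hr.comp (by fun_prop)
  have key := hr₂.mul_left_cancel_entire hφ' hφ (z₀ := -x m' - r₀) (by simpa using hr₀) fun z =>
    hr₁.mul_left_cancel_entire (hr₂.mul hφ') (hr₂.mul hφ) (z₀ := x m' - r₀) (by simpa using hr₀)
      (fun z => by
        have := rv_mul_rv_mul_boundarySum_swap (v := v) hk h1 (Function.update x m z) hm
        rw [Function.update_self, Function.update_of_ne hne, hupd] at this
        exact this) z
  have := key (x m)
  rwa [← hupd, Function.update_eq_self] at this

theorem boundarySum_perm (hτ : 0 < τ.im) (hk : IsBoundaryKernel τ k G) (hent : PsiEntire Ψ)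
    (h1 : PsiP1 τ Ψ) (h3 : PsiP3 τ Ψ) (x : Fin n → ℂ) (σ : Equiv.Perm (Fin n)) :
    boundarySum k v Ψ n (fun i => x (σ i)) = boundarySum k v Ψ n x := by
  cases n with
  | zero => exact congrArg _ (funext fun i => i.elim0)
  | succ N =>
    have hσ : σ ∈ Submonoid.closure
        (Set.range fun i : Fin N => Equiv.swap i.castSucc i.succ) := by
      rw [Equiv.Perm.mclosure_swap_castSucc_succ]; trivial
    induction hσ using Submonoid.closure_induction generalizing x with
    | mem σ h =>
      obtain ⟨i, rfl⟩ := h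
      exact boundarySum_swap hτ hk hent h1 h3 x (by simp)
    | one => rfl
    | mul σ ρ _ _ ihσ ihρ => exact (ihρ (fun i => x (σ i))).trans (ihσ x)

end boundarySum

/-- The space of even theta functions of degree `m`, nome `e^{iπτ}` and norm `0`. -/
def evenTheta (τ : ℂ) (m : ℕ) : Submodule ℂ (ℂ → ℂ) where
  carrier := {h | Differentiable ℂ h ∧ (∀ z, h (z + Real.pi) = h z) ∧
    (∀ z, h (z + Real.pi * τ)
      = ((-(pnome τ)) ^ m)⁻¹ * Complex.exp (-2 * Complex.I * ((m : ℂ) * z)) * h z) ∧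
    ∀ z, h (-z) = h z}
  add_mem' := by
    rintro f g ⟨hf, hf₁, hf₂, hf₃⟩ ⟨hg, hg₁, hg₂, hg₃⟩
    refine ⟨hf.add hg, fun z => ?_, fun z => ?_, fun z => ?_⟩
    · simp [hf₁, hg₁]
    · simp only [Pi.add_apply, hf₂, hg₂]; ring
    · simp [hf₃, hg₃]
  zero_mem' := ⟨differentiable_const 0, by simp, by simp, by simp⟩
  smul_mem' := by
    rintro c f ⟨hf, hf₁, hf₂, hf₃⟩
    refine ⟨hf.const_smul c, fun z => ?_, fun z => ?_, fun z => ?_⟩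
    · simp [hf₁]
    · simp only [Pi.smul_apply, hf₂, smul_eq_mul]; ring
    · simp [hf₃]

theorem quotient_multiplier {φ g ψ A B C : ℂ → ℂ} (hg : Differentiable ℂ g)
    (hψ : Differentiable ℂ ψ) (hC : Differentiable ℂ C) {z₀ : ℂ} (hz₀ : g z₀ ≠ 0)
    (hφ : ∀ z, φ z = g z * ψ z) {ω : ℂ} (hA : ∀ z, φ (z + ω) = A z * φ z)
    (hB : ∀ z, g (z + ω) = B z * g z) (hB0 : ∀ z, B z ≠ 0) (hABC : ∀ z, A z = B z * C z) (z : ℂ) :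
    ψ (z + ω) = C z * ψ z := by
  refine hg.mul_left_cancel_entire (hψ.comp (by fun_prop : Differentiable ℂ fun z => z + ω))
    (hC.mul hψ) hz₀ (fun z => mul_left_cancel₀ (hB0 z) ?_) z
  have h := hA z
  rw [hφ, hφ, hB, hABC] at h
  simp only [Function.comp, Pi.mul_apply]
  linear_combination h

/-- Division by a function with simple zeros, none of which is the opposite of another one. -/
theorem exists_even_quotient {φ G : ℂ → ℂ} (hφ : Differentiable ℂ φ) (hG : Differentiable ℂ G)
    (hG' : ∀ z, G z = 0 → deriv G z ≠ 0 ∧ G (-z) ≠ 0) {z₀ : ℂ} (hz₀ : G z₀ ≠ 0)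
    (hs : ∀ z, G z * φ (-z) = G (-z) * φ z) :
    ∃ ψ : ℂ → ℂ, Differentiable ℂ ψ ∧ (∀ z, φ z = G z * ψ z) ∧ ∀ z, ψ (-z) = ψ z := by
  obtain ⟨ψ, hψ, h⟩ := exists_entire_quotient hφ hG fun z hz => by
    refine ⟨?_, (hG' z hz).1⟩
    have := hs z
    rw [hz, zero_mul, eq_comm, mul_eq_zero] at this
    exact this.resolve_left (hG' z hz).2
  have hψ' : Differentiable ℂ fun z => ψ (-z) := hψ.comp differentiable_neg
  have hG'' : Differentiable ℂ fun z => G (-z) := hG.comp differentiable_neg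
  refine ⟨ψ, hψ, h, hG.mul_left_cancel_entire hψ' hψ hz₀ fun z =>
    hG''.mul_left_cancel_entire (hG.mul hψ') (hG.mul hψ) (z₀ := -z₀) (by simpa using hz₀)
      (fun z => ?_) z⟩
  have := hs z
  rw [h, h] at this
  simp only [Pi.mul_apply]
  linear_combination this

theorem inv_neg_pnome_pow (τ : ℂ) (m : ℕ) :
    ((-(pnome τ)) ^ (2 * m))⁻¹ = Complex.exp (-I * (2 * m * (Real.pi * τ))) := by
  rw [pow_mul, neg_sq, ← pow_mul, pnome, ← Complex.exp_nat_mul, ← Complex.exp_neg]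
  congr 1
  push_cast
  ring

theorem exp_six_I_ηc : Complex.exp (6 * I * ηc) = 1 := by
  rw [show 6 * I * ηc = 2 * Real.pi * I by rw [← three_mul_ηc]; ring, Complex.exp_two_pi_mul_I]

theorem exists_evenTheta_quotient {τ : ℂ} {n : ℕ} {φ G : ℂ → ℂ} (hφ : Differentiable ℂ φ)
    (hG : Differentiable ℂ G) (hG' : ∀ z, G z = 0 → deriv G z ≠ 0 ∧ G (-z) ≠ 0) {z₀ : ℂ}
    (hz₀ : G z₀ ≠ 0) (hs : ∀ z, G z * φ (-z) = G (-z) * φ z)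
    (hG₁ : ∀ z, G (z + Real.pi) = G z)
    (hG₂ : ∀ z, G (z + Real.pi * τ)
      = -Complex.exp (-I * (2 * Real.pi * τ + 4 * (ηc + z))) * G z)
    (hφ₁ : ∀ z, φ (z + Real.pi) = φ z)
    (hφ₂ : ∀ z, φ (z + Real.pi * τ) = -Complex.exp (-I * (Real.pi * τ + 2 * z - 2 * ηc)) *
        Complex.exp (-I * ((2 * n + 1 : ℕ) * (2 * z + Real.pi * τ))) * φ z) :
    ∃ ψ ∈ evenTheta τ (2 * n), ∀ z, φ z = G z * ψ z := by
  obtain ⟨ψ, hψ, h, heven⟩ := exists_even_quotient hφ hG hG' hz₀ hs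
  refine ⟨ψ, ⟨hψ, fun z => ?_, fun z => ?_, heven⟩, h⟩
  · simpa using quotient_multiplier (A := 1) (B := 1) (C := 1) hG hψ (differentiable_const 1) hz₀ h
      (ω := Real.pi) (by simpa using hφ₁) (by simpa using hG₁) (by simp) (by simp) z
  · refine quotient_multiplier
      (C := fun z => ((-(pnome τ)) ^ (2 * n))⁻¹ * Complex.exp (-2 * I * (((2 * n : ℕ) : ℂ) * z)))
      hG hψ (by fun_prop) hz₀ h hφ₂ hG₂
      (fun z => neg_ne_zero.2 (Complex.exp_ne_zero _)) (fun z => ?_) z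
    have e : Complex.exp (-I * (Real.pi * τ + 2 * z - 2 * ηc)) *
          Complex.exp (-I * ((2 * n + 1 : ℕ) * (2 * z + Real.pi * τ))) =
        Complex.exp (-I * (2 * Real.pi * τ + 4 * (ηc + z))) * Complex.exp (6 * I * ηc) *
          (Complex.exp (-I * (2 * n * (Real.pi * τ))) *
            Complex.exp (-2 * I * (((2 * n : ℕ) : ℂ) * z))) := by
      simp only [← Complex.exp_add]
      congr 1
      push_cast
      ring
    rw [exp_six_I_ηc, mul_one] at e
    rw [inv_neg_pnome_pow]
    linear_combination -e

theorem th1_sub_pi_mul (z τ : ℂ) :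
    th1 (z - Real.pi * τ) τ = -Complex.exp (I * (2 * z - Real.pi * τ)) * th1 z τ := by
  have h := th1_add_pi_mul (z - Real.pi * τ) τ
  rw [sub_add_cancel] at h
  rw [h, ← mul_assoc, neg_mul_neg, ← Complex.exp_add,
    show I * (2 * z - Real.pi * τ) + -I * (Real.pi * τ + 2 * (z - Real.pi * τ)) = 0 by ring,
    Complex.exp_zero, one_mul]

theorem exists_evenTheta_quotient_th1_mul_th1 {τ : ℂ} (hτ : 0 < τ.im) {n : ℕ} {ψ : ℂ → ℂ}
    (hψ : ψ ∈ evenTheta τ (2 * (n + 1))) (h0 : ψ (-ηc) = 0) :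
    ∃ h ∈ evenTheta τ (2 * n), ∀ z, ψ z = th1 (ηc + z) τ * th1 (ηc - z) τ * h z := by
  obtain ⟨hd, hp₁, hp₂, hev⟩ := hψ
  have da : Differentiable ℂ fun z => th1 (ηc + z) τ := Differentiable.th1_comp hτ (by fun_prop)
  have db : Differentiable ℂ fun z => th1 (ηc - z) τ := Differentiable.th1_comp hτ (by fun_prop)
  have hz₁ : ∀ z, ψ (z + Real.pi) = 0 ↔ ψ z = 0 := fun z => by rw [hp₁]
  have hz₂ : ∀ z, ψ (z + Real.pi * τ) = 0 ↔ ψ z = 0 := fun z => by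
    rw [hp₂, inv_neg_pnome_pow]; simp [Complex.exp_ne_zero]
  have hza : ∀ z, th1 (ηc + z) τ = 0 → ψ z = 0 := fun z hz => by
    obtain ⟨a, b, hab⟩ := exists_of_th1_eq_zero hτ hz
    have := eq_zero_add_int_lattice hz₁ hz₂ h0 a b
    rwa [show -ηc + a * Real.pi + b * (Real.pi * τ) = z by linear_combination -hab] at this
  have hzb : ∀ z, th1 (ηc - z) τ = 0 → ψ z = 0 := fun z hz => by
    rw [← hev]; exact hza _ (by rwa [← sub_eq_add_neg])
  have hab : ∀ z, th1 (ηc + z) τ = 0 → th1 (ηc - z) τ ≠ 0 := fun z ha hb =>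
    th1_two_ηc_ne_zero hτ (by
      have := th1_add_eq_zero hτ ha hb
      rwa [show ηc + z + (ηc - z) = 2 * ηc by ring] at this)
  have da' : ∀ z, deriv (fun z => th1 (ηc + z) τ) z = deriv (fun z => th1 z τ) (ηc + z) :=
    fun z => deriv_comp_const_add (f := fun z => th1 z τ) ηc z
  have db' : ∀ z, deriv (fun z => th1 (ηc - z) τ) z = -deriv (fun z => th1 z τ) (ηc - z) :=
    fun z => deriv_comp_const_sub (f := fun z => th1 z τ) ηc z
  obtain ⟨h, hh, heq⟩ := exists_entire_quotient hd (da.mul db) fun z hz => by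
    rw [deriv_mul da.differentiableAt db.differentiableAt, da', db']
    rcases mul_eq_zero.1 hz with ha | hb
    · refine ⟨hza z ha, ?_⟩
      rw [show th1 (ηc + z) τ = 0 from ha, zero_mul, add_zero]
      exact mul_ne_zero (deriv_th1_ne_zero hτ ha) (hab z ha)
    · refine ⟨hzb z hb, ?_⟩
      rw [show th1 (ηc - z) τ = 0 from hb, mul_zero, zero_add]
      exact mul_ne_zero (fun ha => hab z ha hb) (neg_ne_zero.2 (deriv_th1_ne_zero hτ hb))
  have hz₀ : th1 (ηc + 0) τ * th1 (ηc - 0) τ ≠ 0 := by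
    rw [add_zero, sub_zero]; exact mul_ne_zero (th1_ηc_ne_zero hτ) (th1_ηc_ne_zero hτ)
  refine ⟨h, ⟨hh, fun z => ?_, fun z => ?_, fun z => ?_⟩, heq⟩
  · simpa using quotient_multiplier (A := 1) (B := 1) (C := 1) (da.mul db) hh
      (differentiable_const 1) hz₀ heq (ω := Real.pi) (by simpa using hp₁) (fun z => by
        have e : th1 (ηc - (z + Real.pi)) τ = -th1 (ηc - z) τ := by
          rw [← neg_eq_iff_eq_neg, ← th1_add_pi]; congr 1; ring
        simp only [Pi.mul_apply, Pi.one_apply]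
        rw [e, ← add_assoc, th1_add_pi]; ring) (by simp) (by simp) z
  · refine quotient_multiplier
      (B := fun z => Complex.exp (-I * (2 * Real.pi * τ + 4 * z)))
      (C := fun z => ((-(pnome τ)) ^ (2 * n))⁻¹ * Complex.exp (-2 * I * (((2 * n : ℕ) : ℂ) * z)))
      (da.mul db) hh (by fun_prop) hz₀ heq hp₂ (fun z => ?_) (fun z => Complex.exp_ne_zero _)
      (fun z => ?_) z
    · simp only [Pi.mul_apply]
      rw [← add_assoc, th1_add_pi_mul, ← sub_sub, th1_sub_pi_mul,
        show -I * (2 * Real.pi * τ + 4 * z) = -I * (Real.pi * τ + 2 * (ηc + z))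
          + I * (2 * (ηc - z) - Real.pi * τ) by ring, Complex.exp_add]
      ring
    · rw [inv_neg_pnome_pow, inv_neg_pnome_pow, ← Complex.exp_add, ← Complex.exp_add,
        ← Complex.exp_add]
      congr 1
      push_cast
      ring
  · refine (da.mul db).mul_left_cancel_entire (hh.comp differentiable_neg) hh hz₀ (fun z => ?_) z
    have := hev z
    rw [heq, heq] at this
    simp only [Function.comp, Pi.mul_apply] at this ⊢
    rw [← this, ← sub_eq_add_neg, sub_neg_eq_add]
    ring

/-- Simultaneous division of a function of several variables by `∏ i, g (x i)`, when each slice is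
divisible by `g` and a finite set of points determines the slices. -/
theorem exists_multivariable_factor {ι : Type*} [Fintype ι] [DecidableEq ι]
    {V A : Submodule ℂ (ℂ → ℂ)} {S : Finset ℂ} (hS : ∀ h ∈ V, (∀ s ∈ S, h s = 0) → h = 0)
    {g : ℂ → ℂ} {Z : (ι → ℂ) → ℂ} (hV : ∀ x i, (fun z => Z (Function.update x i z)) ∈ V)
    (hA : ∀ x i, ∃ h ∈ A, ∀ z, Z (Function.update x i z) = g z * h z) :
    ∃ X : (ι → ℂ) → ℂ, (∀ x, Z x = (∏ i, g (x i)) * X x) ∧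
      ∀ x i, (fun z => X (Function.update x i z)) ∈ A := by
  set W : Submodule ℂ (ℂ → ℂ) := A.map (LinearMap.mulLeft ℂ g) ⊓ V with hW
  obtain ⟨E, hEW, hE⟩ := exists_interpolation (V := W) S fun h hh => hS h hh.2
  choose e heA heE using fun s => Submodule.mem_map.1 (hEW s).1
  have heE' : ∀ s z, E s z = g z * e s z := fun s z => (congrFun (heE s) z).symm
  have key : ∀ t : Finset ι, ∃ X : (ι → ℂ) → ℂ, (∀ x, Z x = (∏ i ∈ t, g (x i)) * X x) ∧
      ∀ x, (∀ i ∈ t, (fun z => X (Function.update x i z)) ∈ A) ∧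
        ∀ i ∉ t, (fun z => X (Function.update x i z)) ∈ W := by
    intro t
    induction t using Finset.induction_on with
    | empty =>
      refine ⟨Z, by simp, fun x => ⟨by simp, fun i _ => ⟨?_, hV x i⟩⟩⟩
      obtain ⟨h, hh, heq⟩ := hA x i
      exact Submodule.mem_map.2 ⟨h, hh, funext fun z => (heq z).symm⟩
    | insert i t hi ih =>
      obtain ⟨X, hX, hmem⟩ := ih
      refine ⟨fun x => ∑ s : S, X (Function.update x i s) * e s (x i), fun x => ?_, fun x => ?_⟩
      · have := hE _ ((hmem x).2 i hi) (x i)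
        simp only [Function.update_eq_self, heE'] at this
        rw [hX, this, Finset.prod_insert hi, Finset.mul_sum, Finset.mul_sum]
        exact Finset.sum_congr rfl fun s _ => by ring
      · have hself : (fun z => ∑ s : S, X (Function.update (Function.update x i z) i s) *
            e s (Function.update x i z i)) = ∑ s : S, X (Function.update x i s) • e s := by
          funext z
          simp
        have hne : ∀ j, j ≠ i → (fun z => ∑ s : S, X (Function.update (Function.update x j z) i s) *
            e s (Function.update x j z i)) =
            ∑ s : S, e s (x i) • fun z => X (Function.update (Function.update x i s) j z) := by
          intro j hj
          funext z
          simp only [Finset.sum_apply, Pi.smul_apply, smul_eq_mul, Function.update_of_ne hj.symm]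
          exact Finset.sum_congr rfl fun s _ => by rw [Function.update_comm hj, mul_comm]
        refine ⟨fun j hj => ?_, fun j hj => ?_⟩
        · by_cases hji : j = i
          · subst hji
            rw [hself]
            exact A.sum_mem fun s _ => A.smul_mem _ (heA s)
          · rw [hne j hji]
            exact A.sum_mem fun s _ => A.smul_mem _
              ((hmem _).1 j ((Finset.mem_insert.1 hj).resolve_left hji))
        · rw [Finset.mem_insert, not_or] at hj
          rw [hne j hj.1]
          exact W.sum_mem fun s _ => W.smul_mem _ ((hmem _).2 j hj.2)
  obtain ⟨X, hX, hmem⟩ := key Finset.univ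
  exact ⟨X, hX, fun x i => (hmem x).1 i (Finset.mem_univ i)⟩

theorem eq_zero_of_prod_mul_eq_zero {ι : Type*} [DecidableEq ι] {g : ℂ → ℂ}
    (hg : Differentiable ℂ g) {z₀ : ℂ} (hz₀ : g z₀ ≠ 0) {F : (ι → ℂ) → ℂ}
    (hF : ∀ x i, Differentiable ℂ fun z => F (Function.update x i z)) (s : Finset ι) :
    (∀ x, (∏ i ∈ s, g (x i)) * F x = 0) → ∀ x, F x = 0 := by
  induction s using Finset.induction_on with
  | empty => simp
  | insert i s hi ih =>
    refine fun h => ih fun x => ?_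
    have hp : ∀ z, ∏ j ∈ s, g (Function.update x i z j) = ∏ j ∈ s, g (x j) := fun z =>
      Finset.prod_congr rfl fun j hj => by
        rw [Function.update_of_ne fun hji => hi (by rwa [← hji])]
    have := hg.mul_left_cancel_entire ((hF x i).const_mul (∏ j ∈ s, g (x j)))
      (differentiable_const 0) hz₀ (fun z => by
        have := h (Function.update x i z)
        rw [Finset.prod_insert hi, hp, Function.update_self, mul_assoc] at this
        rw [this, mul_zero]) (x i)
    simpa using this

/-- The cofactor of `∏ i, g (x i)` in a symmetric function is symmetric. -/
theorem symmetric_of_prod_mul {ι : Type*} [Fintype ι] [DecidableEq ι] {g : ℂ → ℂ}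
    (hg : Differentiable ℂ g) {z₀ : ℂ} (hz₀ : g z₀ ≠ 0) {Z X : (ι → ℂ) → ℂ}
    (hX : ∀ x i, Differentiable ℂ fun z => X (Function.update x i z))
    (hZ : ∀ x, Z x = (∏ i, g (x i)) * X x) (σ : Equiv.Perm ι)
    (hσ : ∀ x, Z (fun i => x (σ i)) = Z x) (x : ι → ℂ) : X (fun i => x (σ i)) = X x := by
  rw [← sub_eq_zero]
  refine eq_zero_of_prod_mul_eq_zero hg hz₀ (F := fun x => X (fun i => x (σ i)) - X x)
    (fun x i => ?_) Finset.univ (fun x => ?_) x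
  · refine Differentiable.sub ?_ (hX x i)
    have e : ∀ z, (fun j => Function.update x i z (σ j)) =
        Function.update (fun j => x (σ j)) (σ.symm i) z := fun z => by
      funext j
      simp only [Function.update_apply, Equiv.eq_symm_apply]
    simp only [e]
    exact hX _ _
  · have h := hσ x
    rw [hZ, hZ, Equiv.prod_comp σ fun i => g (x i)] at h
    rw [mul_sub, h, sub_self]

section DoubledTheta

variable {τ : ℂ}

theorem th1_two_mul_add_pi (z : ℂ) :
    th1 (2 * (ηc + (z + Real.pi))) (2 * τ) = th1 (2 * (ηc + z)) (2 * τ) := by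
  rw [show 2 * (ηc + (z + Real.pi)) = 2 * (ηc + z) + Real.pi + Real.pi by ring, th1_add_pi,
    th1_add_pi, neg_neg]

theorem th4_two_mul_add_pi (z : ℂ) :
    th4 (2 * (ηc + (z + Real.pi))) (2 * τ) = th4 (2 * (ηc + z)) (2 * τ) := by
  rw [show 2 * (ηc + (z + Real.pi)) = 2 * (ηc + z) + Real.pi + Real.pi by ring, th4_add_pi,
    th4_add_pi]

theorem th1_two_mul_add_pi_mul (z : ℂ) :
    th1 (2 * (ηc + (z + Real.pi * τ))) (2 * τ)
      = -Complex.exp (-I * (2 * Real.pi * τ + 4 * (ηc + z))) * th1 (2 * (ηc + z)) (2 * τ) := by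
  rw [show 2 * (ηc + (z + Real.pi * τ)) = 2 * (ηc + z) + Real.pi * (2 * τ) by ring, th1_add_pi_mul]
  ring_nf

theorem th4_two_mul_add_pi_mul (z : ℂ) :
    th4 (2 * (ηc + (z + Real.pi * τ))) (2 * τ)
      = -Complex.exp (-I * (2 * Real.pi * τ + 4 * (ηc + z))) * th4 (2 * (ηc + z)) (2 * τ) := by
  rw [show 2 * (ηc + (z + Real.pi * τ)) = 2 * (ηc + z) + Real.pi * (2 * τ) by ring, th4_add_pi_mul]
  ring_nf

theorem deriv_comp_two_mul_add {f : ℂ → ℂ} (hf : Differentiable ℂ f) (c z : ℂ) :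
    deriv (fun z => f (2 * (c + z))) z = deriv f (2 * (c + z)) * 2 := by
  have h : HasDerivAt (fun z : ℂ => 2 * (c + z)) 2 z := by
    simpa using ((hasDerivAt_id z).const_add c).const_mul 2
  exact ((hf _).hasDerivAt.comp z h).deriv

theorem th1_two_mul_simple_zero (hτ : 0 < τ.im) (z : ℂ) (hz : th1 (2 * (ηc + z)) (2 * τ) = 0) :
    deriv (fun z => th1 (2 * (ηc + z)) (2 * τ)) z ≠ 0 ∧ th1 (2 * (ηc + -z)) (2 * τ) ≠ 0 := by
  have hτ2 := two_mul_im_pos hτ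
  refine ⟨?_, fun h => th1_four_ηc_ne_zero hτ2 ?_⟩
  · rw [deriv_comp_two_mul_add (f := fun z => th1 z (2 * τ)) (differentiable_th1 hτ2)]
    exact mul_ne_zero (deriv_th1_ne_zero hτ2 hz) two_ne_zero
  · convert th1_add_eq_zero hτ2 hz h using 2
    ring

theorem th4_two_mul_simple_zero (hτ : 0 < τ.im) (z : ℂ) (hz : th4 (2 * (ηc + z)) (2 * τ) = 0) :
    deriv (fun z => th4 (2 * (ηc + z)) (2 * τ)) z ≠ 0 ∧ th4 (2 * (ηc + -z)) (2 * τ) ≠ 0 := by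
  have hτ2 := two_mul_im_pos hτ
  refine ⟨?_, fun h => th1_four_ηc_ne_zero hτ2 ?_⟩
  · rw [deriv_comp_two_mul_add (f := fun z => th4 z (2 * τ)) (differentiable_th4 hτ2)]
    exact mul_ne_zero (deriv_th4_ne_zero hτ hz) two_ne_zero
  · rw [th4_eq_zero_iff] at hz h
    convert th1_add_int_lattice _ _ 0 1 (th1_add_eq_zero hτ2 hz h) using 2
    push_cast
    ring

end DoubledTheta

section Slices

variable {τ : ℂ} {k : ℂ → Fin 2 → Fin 2 → ℂ} {v : Fin 2 → ℂ} {G : ℂ → ℂ} {Ψ : PsiFam} {n : ℕ}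

theorem boundarySum_slice_mem_quasiPeriodic (hτ : 0 < τ.im) (hk : IsBoundaryKernel τ k G)
    (hent : PsiEntire Ψ) (h2 : PsiP2 τ Ψ) (h3 : PsiP3 τ Ψ) (x : Fin n → ℂ) (i : Fin n) :
    (fun z => boundarySum k v Ψ n (Function.update x i z)) ∈ quasiPeriodic τ Real.pi
      (-Complex.exp (-I * (Real.pi * τ - 2 * ηc + (2 * n + 1) * (Real.pi * τ)))) (4 * n + 4) := by
  refine ⟨differentiable_boundarySum hτ hk hent h3 x i, boundarySum_add_pi hk h3 x i, fun z => ?_⟩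
  simp only [boundarySum_add_pi_mul hk h2 x i z]
  simp only [neg_mul, ← Complex.exp_add]
  congr 3
  push_cast
  ring

/-- Factorisation of a boundary scalar product, given the factorisation of its slices. -/
theorem exists_thetaLike_factor (hτ : 0 < τ.im) (hk : IsBoundaryKernel τ k G)
    (hent : PsiEntire Ψ) (h1 : PsiP1 τ Ψ) (h2 : PsiP2 τ Ψ) (h3 : PsiP3 τ Ψ) {g : ℂ → ℂ}
    (hg : Differentiable ℂ g) (hg₀ : ∃ z, g z ≠ 0) {m : ℕ}
    (hslice : ∀ (x : Fin n → ℂ) i, ∃ h ∈ evenTheta τ m,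
      ∀ z, boundarySum k v Ψ n (Function.update x i z) = g z * h z) :
    ∃ X : (Fin n → ℂ) → ℂ, (∀ x, boundarySum k v Ψ n x = (∏ i, g (x i)) * X x) ∧
      ThetaLike τ m X ∧ ∀ (x : Fin n → ℂ) (σ : Equiv.Perm (Fin n)), X (fun i => x (σ i)) = X x := by
  obtain ⟨S, hS⟩ := quasiPeriodic_exists_finset hτ Real.pi_pos
    (neg_ne_zero.2 (Complex.exp_ne_zero
      (-I * (Real.pi * τ - 2 * ηc + (2 * n + 1) * (Real.pi * τ))))) (4 * n + 4)
  obtain ⟨X, hX, hmem⟩ := exists_multivariable_factor hS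
    (boundarySum_slice_mem_quasiPeriodic (v := v) hτ hk hent h2 h3) hslice
  obtain ⟨z₀, hz₀⟩ := hg₀
  exact ⟨X, hX, hmem, fun x σ => symmetric_of_prod_mul hg hz₀ (fun x i => (hmem x i).1) hX σ
    (fun x => boundarySum_perm hτ hk hent h1 h3 x σ) x⟩

theorem boundarySum_chibarC_slice (hτ : 0 < τ.im) (lam : ℂ) (hent : PsiEntire Ψ) (h1 : PsiP1 τ Ψ)
    (h2 : PsiP2 τ Ψ) (h3 : PsiP3 τ Ψ) (x : Fin n → ℂ) (i : Fin n) :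
    ∃ h ∈ evenTheta τ (2 * n), ∀ z, boundarySum (chibarC τ lam) v Ψ n (Function.update x i z)
      = th1 (2 * (ηc + z)) (2 * τ) * h z := by
  have hk := isBoundaryKernel_chibarC hτ lam
  have hG : Differentiable ℂ fun z => th1 (2 * (ηc + z)) (2 * τ) :=
    Differentiable.th1_comp (two_mul_im_pos hτ) (by fun_prop)
  obtain ⟨z₀, hz₀⟩ := exists_th1_two_mul_ne_zero hτ
  exact exists_evenTheta_quotient (differentiable_boundarySum hτ hk hent h3 x i) hG
    (th1_two_mul_simple_zero hτ) hz₀ (boundarySum_update_neg hτ hk hG hent h1 h3 x i)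
    th1_two_mul_add_pi th1_two_mul_add_pi_mul (boundarySum_add_pi hk h3 x i)
    (boundarySum_add_pi_mul hk h2 x i)

theorem boundarySum_chiC_slice (hτ : 0 < τ.im) (lam : ℂ) (hent : PsiEntire Ψ) (h1 : PsiP1 τ Ψ)
    (h2 : PsiP2 τ Ψ) (h3 : PsiP3 τ Ψ) (h4 : PsiP4 Ψ) (x : Fin n → ℂ) (i : Fin n) :
    ∃ h ∈ evenTheta τ (2 * (n - 1)),
      ∀ z, boundarySum (chiC τ lam) v Ψ n (Function.update x i z)
        = th4 (2 * (ηc + z)) (2 * τ) * th1 (ηc + z) τ * th1 (ηc - z) τ * h z := by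
  have hk := isBoundaryKernel_chiC hτ lam
  have hG : Differentiable ℂ fun z => th4 (2 * (ηc + z)) (2 * τ) :=
    Differentiable.th4_comp (two_mul_im_pos hτ) (by fun_prop)
  obtain ⟨z₀, hz₀⟩ := exists_th4_two_mul_ne_zero hτ
  obtain ⟨ψ, hψ, heq⟩ := exists_evenTheta_quotient
    (differentiable_boundarySum (v := v) hτ hk hent h3 x i) hG
    (th4_two_mul_simple_zero hτ) hz₀ (boundarySum_update_neg hτ hk hG hent h1 h3 x i)
    th4_two_mul_add_pi th4_two_mul_add_pi_mul (boundarySum_add_pi hk h3 x i)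
    (boundarySum_add_pi_mul hk h2 x i)
  have h0 : ψ (-ηc) = 0 := by
    have := heq (-ηc)
    rw [boundarySum_neg_ηc h3 h4 x i, add_neg_cancel, mul_zero, eq_comm, mul_eq_zero] at this
    exact this.resolve_left (th4_zero_ne_zero (two_mul_im_pos hτ))
  obtain ⟨n, rfl⟩ : ∃ m, n = m + 1 := ⟨n - 1, by have := i.2; omega⟩
  obtain ⟨h, hh, heq'⟩ := exists_evenTheta_quotient_th1_mul_th1 hτ hψ h0
  exact ⟨h, hh, fun z => by rw [heq, heq']; ring⟩

end Slices

theorem exists_Zbarfun_factor {τ : ℂ} (hτ : 0 < τ.im) (lam ε : ℂ) {Ψ : PsiFam}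
    (hent : PsiEntire Ψ) (h1 : PsiP1 τ Ψ) (h2 : PsiP2 τ Ψ) (h3 : PsiP3 τ Ψ) (n : ℕ) :
    ∃ X : (Fin n → ℂ) → ℂ,
      (∀ x, Zbarfun τ lam ε Ψ n x = (∏ i, th1 (2*(ηc + x i)) (2*τ)) * X x) ∧
      ThetaLike τ (2*n) X ∧
      ∀ (x : Fin n → ℂ) (σ : Equiv.Perm (Fin n)), X (fun i => x (σ i)) = X x :=
  exists_thetaLike_factor (v := fun s => if s = 0 then 1 else ε) hτ
    (isBoundaryKernel_chibarC hτ lam) hent h1 h2 h3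
    (Differentiable.th1_comp (two_mul_im_pos hτ) (by fun_prop)) (exists_th1_two_mul_ne_zero hτ)
    (boundarySum_chibarC_slice hτ lam hent h1 h2 h3)

theorem exists_Zfun_factor {τ : ℂ} (hτ : 0 < τ.im) (lam : ℂ) {Ψ : PsiFam}
    (hent : PsiEntire Ψ) (h1 : PsiP1 τ Ψ) (h2 : PsiP2 τ Ψ) (h3 : PsiP3 τ Ψ) (h4 : PsiP4 Ψ) (n : ℕ) :
    ∃ X : (Fin n → ℂ) → ℂ,
      (∀ x, Zfun τ lam Ψ n x
          = (∏ i, th4 (2*(ηc + x i)) (2*τ) * th1 (ηc + x i) τ * th1 (ηc - x i) τ) * X x) ∧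
      ThetaLike τ (2*(n-1)) X ∧
      ∀ (x : Fin n → ℂ) (σ : Equiv.Perm (Fin n)), X (fun i => x (σ i)) = X x := by
  have d4 : Differentiable ℂ fun z => th4 (2 * (ηc + z)) (2 * τ) :=
    Differentiable.th4_comp (two_mul_im_pos hτ) (by fun_prop)
  have da : Differentiable ℂ fun z => th1 (ηc + z) τ := Differentiable.th1_comp hτ (by fun_prop)
  have db : Differentiable ℂ fun z => th1 (ηc - z) τ := Differentiable.th1_comp hτ (by fun_prop)
  refine exists_thetaLike_factor (v := fun s => if s = 0 then 1 else 0) hτ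
    (isBoundaryKernel_chiC hτ lam) hent h1 h2 h3 ((d4.mul da).mul db) ?_
    (boundarySum_chiC_slice hτ lam hent h1 h2 h3 h4)
  by_contra! h
  obtain ⟨z₀, hz₀⟩ := exists_th4_two_mul_ne_zero hτ
  have := d4.mul_left_cancel_entire (da.mul db) (differentiable_const 0) hz₀ (fun z => by
    simpa [mul_assoc] using h z) 0
  simp [th1_ηc_ne_zero hτ] at this

theorem stmt13 (τ lam : ℂ) (hτ : 0 < τ.im) (Ψ : PsiFam)
    (hent : PsiEntire Ψ) (h1 : PsiP1 τ Ψ) (h2 : PsiP2 τ Ψ) (h3 : PsiP3 τ Ψ) (h4 : PsiP4 Ψ)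
    (n : ℕ) (hn : 1 ≤ n) :
    (∃ X : (Fin n → ℂ) → ℂ,
      (∀ x, Zfun τ lam Ψ n x
          = (∏ i, th4 (2*(ηc + x i)) (2*τ) * th1 (ηc + x i) τ * th1 (ηc - x i) τ) * X x) ∧
      ThetaLike τ (2*(n-1)) X ∧
      (2 ≤ n → ∀ (x : Fin n → ℂ) (σ : Equiv.Perm (Fin n)), X (fun i => x (σ i)) = X x)) ∧
    (∃ Xp : (Fin n → ℂ) → ℂ,
      (∀ x, Zbarfun τ lam 1 Ψ n x = (∏ i, th1 (2*(ηc + x i)) (2*τ)) * Xp x) ∧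
      ThetaLike τ (2*n) Xp ∧
      (2 ≤ n → ∀ (x : Fin n → ℂ) (σ : Equiv.Perm (Fin n)), Xp (fun i => x (σ i)) = Xp x)) ∧
    (∃ Xm : (Fin n → ℂ) → ℂ,
      (∀ x, Zbarfun τ lam (-1) Ψ n x = (∏ i, th1 (2*(ηc + x i)) (2*τ)) * Xm x) ∧
      ThetaLike τ (2*n) Xm ∧
      (2 ≤ n → ∀ (x : Fin n → ℂ) (σ : Equiv.Perm (Fin n)), Xm (fun i => x (σ i)) = Xm x)) := by
  obtain ⟨X, hX, hθ, hsymm⟩ := exists_Zfun_factor hτ lam hent h1 h2 h3 h4 n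
  obtain ⟨Xp, hXp, hθp, hsymmp⟩ := exists_Zbarfun_factor hτ lam 1 hent h1 h2 h3 n
  obtain ⟨Xm, hXm, hθm, hsymmm⟩ := exists_Zbarfun_factor hτ lam (-1) hent h1 h2 h3 n
  exact ⟨⟨X, hX, hθ, fun _ => hsymm⟩, ⟨Xp, hXp, hθp, fun _ => hsymmp⟩,
    ⟨Xm, hXm, hθm, fun _ => hsymmm⟩⟩


end
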